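/- Let M = {F = 0} be a germ of an irreducible singular real-analytic Levi-flat hypersurface at 0 ∈ ℂⁿ, n ≥ 2. Assume that the algebraic dimension of Sing(M) is at most 2n − 4 (i.e., Sing(M_ℂ) has complex dimension at most 2n − 4), that Sing(L_ℂ) has complex codimension at least 2 in M*_ℂ, and that L_ℂ has a non-constant holomorphic first integral. Then there exists a non-constant germ of holomorphic function f at 0 ∈ ℂⁿ such that M = {Re(f) = 0} as germs of sets at 0. -/

import Mathlib

/-!
Let `G = F_ℂ`. The two dimension hypotheses say that the points of `{G = 0}` at which the
`z`-differential or the `w`-differential of `G` vanishes form a set of complex codimension greater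
than two in `ℂ²ⁿ`. Divisibility by `G` may be tested off such a set, so a first integral `h` is a
germ for which the `2 × 2` minors of `(dh, dG)` in the `z`-directions, and those in the
`w`-directions, are divisible by `G`.

*Descent of `h` to the two factors.* Where `d_w G ≠ 0`, divisible minors mean `d_w h = c · d_w G`
modulo `G` for a local holomorphic factor `c`. Such factors are unique modulo `G`, and division with
remainder by `G` along discs picks a canonical representative, so they glue and extend across the
bad set by a Hartogs argument. Repeatedly subtracting terms `c G ^ (N + 1) / (N + 1)` modifies `h`
within its class modulo `G` until `d_w h` is divisible by `G ^ N`. Hence the class of `h` contains,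
up to order `N`, a function of `z` alone; the remainder of the division by `G` respects orders of
vanishing up to a constant factor, so letting `N → ∞` gives `h ≡ f(z)` modulo `G`. Symmetrically
`h ≡ g(w)`. This needs `G` not to vanish identically on `{z = 0}`, respectively `{w = 0}`; by
Hermitian symmetry of `G` these fail together, and then `h` would be constant on `{G = 0}`.

*A symmetric primitive integral.* Combining `f(z) ≡ g(w)` with its conjugate gives a nonzero germ
`A` such that `G` divides `A(z) - conj (A (conj w))`. Taking a maximal root of `A`, and correcting
it by a constant of modulus one, `A` is replaced by a germ `a` which is not a proper power.

*Conclusion.* Write `a(z) - conj (a (conj w)) = G Q`. Restricting `w` to a curve on which the second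
term is `t ^ K` leads to the germ `a(z) - t ^ K`, which is irreducible because `a` is not a proper
power; so `Q` is a unit. On the diagonal `w = conj z` this reads `2 i Im a = F Q`, that is
`M = {Im a = 0} = {Re (i a) = 0}`.
-/

open Filter Topology ENNReal

/-- Wirtinger derivative ∂/∂z_j of a (complex-valued) function at `p`:
`(1/2)(∂F/∂x_j − i ∂F/∂y_j)`. -/
noncomputable def wirtZ {n : ℕ} (F : (Fin n → ℂ) → ℂ) (j : Fin n) (p : Fin n → ℂ) : ℂ :=
  (fderiv ℝ F p (Pi.single j 1) - Complex.I * fderiv ℝ F p (Pi.single j Complex.I)) / 2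

/-- Wirtinger derivative ∂/∂z̄_j of a (complex-valued) function at `p`:
`(1/2)(∂F/∂x_j + i ∂F/∂y_j)`. -/
noncomputable def wirtZbar {n : ℕ} (F : (Fin n → ℂ) → ℂ) (j : Fin n) (p : Fin n → ℂ) : ℂ :=
  (fderiv ℝ F p (Pi.single j 1) + Complex.I * fderiv ℝ F p (Pi.single j Complex.I)) / 2

/-- The germ `M = {F = 0}` at `0` is Levi-flat: for every point `p` of `M* = M \ Sing(M)`
near `0` and every `v` with `Σ_j F_{z_j}(p) v_j = 0` one has
`Σ_{i,j} F_{z_i z̄_j}(p) v_i conj(v_j) = 0`. -/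
def LeviFlatGerm {n : ℕ} (F : (Fin n → ℂ) → ℝ) : Prop :=
  ∀ᶠ p in 𝓝 (0 : Fin n → ℂ), F p = 0 → fderiv ℝ F p ≠ 0 →
    ∀ v : Fin n → ℂ,
      (∑ j, wirtZ (fun z => ((F z : ℝ) : ℂ)) j p * v j) = 0 →
      (∑ i, ∑ j, wirtZbar (wirtZ (fun z => ((F z : ℝ) : ℂ)) i) j p * v i * (starRingEnd ℂ) (v j)) = 0

/-- `F` is irreducible in the ring of germs at `0` of real-valued real-analytic functions:
in any factorization `F = g·h` one of the factors is a unit (i.e. does not vanish at `0`). -/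
def IrreducibleRGerm {n : ℕ} (F : (Fin n → ℂ) → ℝ) : Prop :=
  ∀ g h : (Fin n → ℂ) → ℝ, AnalyticAt ℝ g 0 → AnalyticAt ℝ h 0 →
    (∀ᶠ z in 𝓝 (0 : Fin n → ℂ), F z = g z * h z) → g 0 ≠ 0 ∨ h 0 ≠ 0

/-- `φ` is a germ of biholomorphism `(ℂⁿ,0) → (ℂⁿ,0)` with local inverse `ι`. -/
def IsGermBiholo {n : ℕ} (φ ι : (Fin n → ℂ) → (Fin n → ℂ)) : Prop :=
  AnalyticAt ℂ φ 0 ∧ AnalyticAt ℂ ι 0 ∧ φ 0 = 0 ∧ ι 0 = 0 ∧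
  (∀ᶠ z in 𝓝 (0 : Fin n → ℂ), ι (φ z) = z) ∧ (∀ᶠ z in 𝓝 (0 : Fin n → ℂ), φ (ι z) = z)

/-- `φ` is volume-preserving (isochore): the determinant of its complex Jacobian is
identically `1` near `0`. -/
def IsVolumePreserving {n : ℕ} (φ : (Fin n → ℂ) → (Fin n → ℂ)) : Prop :=
  ∀ᶠ z in 𝓝 (0 : Fin n → ℂ), LinearMap.det ((fderiv ℂ φ z).toLinearMap) = 1

/-- `ψ` is a germ of automorphism of `(ℂ,0)`. -/
def IsGermAuto (ψ : ℂ → ℂ) : Prop :=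
  AnalyticAt ℂ ψ 0 ∧ ψ 0 = 0 ∧ deriv ψ 0 ≠ 0

/-- `FC` is the complexification of `F`: the (unique) germ of holomorphic function at
`0 ∈ ℂⁿ × ℂⁿ` such that `FC (z, z̄) = F z` near `0`. -/
def IsComplexification {n : ℕ} (F : (Fin n → ℂ) → ℝ)
    (FC : ((Fin n → ℂ) × (Fin n → ℂ)) → ℂ) : Prop :=
  AnalyticAt ℂ FC 0 ∧ ∀ᶠ z in 𝓝 (0 : Fin n → ℂ), FC (z, star z) = ((F z : ℝ) : ℂ)

/-- The singular set `Sing(M_ℂ) = {F_ℂ = 0} ∩ {dF_ℂ = 0}` of the complexification. -/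
def singMC {n : ℕ} (FC : ((Fin n → ℂ) × (Fin n → ℂ)) → ℂ) :
    Set ((Fin n → ℂ) × (Fin n → ℂ)) :=
  {p | FC p = 0 ∧ fderiv ℂ FC p = 0}

/-- The singular set of the complexified Levi foliation `L_ℂ`: points of
`M*_ℂ` at which `α = Σ_j (∂F_ℂ/∂z_j) dz_j` vanishes on `T_p M_ℂ = ker dF_ℂ(p)`.
Note that `α(p)(v) = dF_ℂ(p)(v₁, 0)`. -/
def singLC {n : ℕ} (FC : ((Fin n → ℂ) × (Fin n → ℂ)) → ℂ) :
    Set ((Fin n → ℂ) × (Fin n → ℂ)) :=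
  {p | FC p = 0 ∧ fderiv ℂ FC p ≠ 0 ∧
    ∀ v : (Fin n → ℂ) × (Fin n → ℂ), fderiv ℂ FC p v = 0 → fderiv ℂ FC p (v.1, 0) = 0}

/-! ### Integrals depending analytically on a parameter -/

section ParametricIntegral

open MeasureTheory

variable {E F : Type*} [NormedAddCommGroup E] [NormedSpace ℂ E] [NormedAddCommGroup F]
  [NormedSpace ℂ F]

/-- A bound, uniform over all centres `x` with `‖x‖ ≤ r`, for the `k`-th coefficient of the
recentred power series `P.changeOrigin x`. -/
noncomputable def changeOriginBound (P : FormalMultilinearSeries ℂ E F) (r : NNReal) (k : ℕ) :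
    NNReal :=
  ∑' s : Σ l : ℕ, {s : Finset (Fin (k + l)) // s.card = l}, ‖P (k + s.1)‖₊ * r ^ s.1

theorem summable_changeOriginBound {P : FormalMultilinearSeries ℂ E F} {r : NNReal}
    (hr : (r + r : ℝ≥0∞) < P.radius) : Summable fun k => changeOriginBound P r k * r ^ k :=
  (NNReal.summable_sigma.1 (P.changeOriginSeries_summable_aux₁ hr)).2.congr fun _ => by
    rw [changeOriginBound, ← NNReal.tsum_mul_right]

theorem nnnorm_changeOrigin_le_changeOriginBound {P : FormalMultilinearSeries ℂ E F} {r : NNReal}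
    {x : E} (hr : (r : ℝ≥0∞) < P.radius) (hx : ‖x‖₊ ≤ r) (k : ℕ) :
    ‖P.changeOrigin x k‖₊ ≤ changeOriginBound P r k := by
  have hxP : (‖x‖₊ : ℝ≥0∞) < P.radius := lt_of_le_of_lt (by exact_mod_cast hx) hr
  refine (P.nnnorm_changeOrigin_le k hxP).trans ?_
  refine Summable.tsum_le_tsum (fun s => ?_) (P.changeOriginSeries_summable_aux₂ hxP k)
    (P.changeOriginSeries_summable_aux₂ hr k)
  gcongr

variable {X : Type*} [MeasurableSpace X]

theorem hasFPowerSeriesOnBall_integral {μ : Measure X} [IsFiniteMeasure μ] {f : X → E → F}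
    {p : X → FormalMultilinearSeries ℂ E F} {x₀ : E} {r : NNReal} (hr : 0 < r) {A : ℕ → NNReal}
    (hA : Summable fun k => A k * r ^ k)
    (hmeas : ∀ k, AEStronglyMeasurable (fun t => p t k) μ)
    (hbound : ∀ᵐ t ∂μ, ∀ k, ‖p t k‖₊ ≤ A k)
    (hsum : ∀ᵐ t ∂μ, ∀ y, ‖y‖₊ < r → HasSum (fun k => p t k fun _ => y) (f t (x₀ + y))) :
    HasFPowerSeriesOnBall (fun x => ∫ t, f t x ∂μ) (fun k => ∫ t, p t k ∂μ) x₀ r := by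
  have hAℝ : Summable fun k => (A k : ℝ) * (r : ℝ) ^ k := by exact_mod_cast hA
  have hbound' (k : ℕ) : ∀ᵐ t ∂μ, ‖p t k‖ ≤ A k := by
    filter_upwards [hbound] with t ht using mod_cast ht k
  have hint (k : ℕ) : Integrable (fun t => p t k) μ := Integrable.of_bound (hmeas k) _ (hbound' k)
  refine ⟨?_, by exact_mod_cast hr, fun {y} hy => ?_⟩
  · refine FormalMultilinearSeries.le_radius_of_bound _
      ((∑' k, (A k : ℝ) * (r : ℝ) ^ k) * μ.real Set.univ) fun k => ?_
    calc ‖∫ t, p t k ∂μ‖ * (r : ℝ) ^ k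
        ≤ A k * μ.real Set.univ * (r : ℝ) ^ k := by
          gcongr
          exact norm_integral_le_of_norm_le_const (hbound' k)
      _ = A k * (r : ℝ) ^ k * μ.real Set.univ := by ring
      _ ≤ _ := by
          gcongr
          exact hAℝ.le_tsum k fun j _ => by positivity
  · have hyr : ‖y‖₊ < r := by
      simpa only [Metric.mem_eball, edist_zero_right, enorm_eq_nnnorm, ENNReal.coe_lt_coe] using hy
    simp_rw [fun k => ContinuousMultilinearMap.integral_apply (hint k) fun _ => y]
    refine hasSum_integral_of_dominated_convergence (fun k _ => (A k : ℝ) * (r : ℝ) ^ k)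
      (fun k => ?_) (fun k => ?_) (Eventually.of_forall fun _ => hAℝ) (integrable_const _) ?_
    · exact (ContinuousMultilinearMap.apply ℂ (fun _ : Fin k => E) F
        fun _ => y).continuous.comp_aestronglyMeasurable (hmeas k)
    · filter_upwards [hbound' k] with t ht
      refine (ContinuousMultilinearMap.le_opNorm _ _).trans ?_
      simp only [Finset.prod_const, Finset.card_univ, Fintype.card_fin]
      gcongr
      exact_mod_cast hyr.le
    · filter_upwards [hsum] with t ht using ht y hyr

variable [TopologicalSpace X] [OpensMeasurableSpace X] {μ : Measure X}

theorem eventually_integrableOn_comp_add {φ : E → F} {c : X → E} [T2Space X]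
    [IsFiniteMeasureOnCompacts μ] (hc : Continuous c) {p₀ : E} {K : Set X} (hK : IsCompact K)
    (hφ : ∀ t ∈ K, AnalyticAt ℂ φ (p₀ + c t)) :
    ∀ᶠ p in 𝓝 p₀, IntegrableOn (fun t => φ (p + c t)) K μ := by
  have hcont : ∀ᶠ p in 𝓝 p₀, ∀ t ∈ K, ContinuousAt φ (p + c t) := by
    refine hK.eventually_forall_of_forall_eventually fun t ht => ?_
    have hadd : Tendsto (fun z : E × X => z.1 + c z.2) (𝓝 (p₀, t)) (𝓝 (p₀ + c t)) :=
      Continuous.tendsto (by fun_prop) (p₀, t)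
    exact hadd.eventually (hφ t ht).eventually_continuousAt
  filter_upwards [hcont] with p hp
  refine ContinuousOn.integrableOn_compact' hK hK.measurableSet fun t ht => ?_
  exact (ContinuousAt.comp' (f := fun t => p + c t) (hp t ht) (by fun_prop)).continuousWithinAt

variable [SecondCountableTopology X] [CompleteSpace F]

theorem analyticAt_setIntegral_of_norm_le {φ : E → F} {P : FormalMultilinearSeries ℂ E F} {x₀ : E}
    {r : NNReal} (hr : 0 < r) {R : ℝ≥0∞} (hP : HasFPowerSeriesOnBall φ P x₀ R)
    (hrR : (r + r : ℝ≥0∞) < R) {d : X → E} (hd : Continuous d) {T : Set X} (hT : MeasurableSet T)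
    (hμT : μ T ≠ ∞) (hdT : ∀ t ∈ T, ‖d t‖₊ ≤ r) :
    AnalyticAt ℂ (fun x => ∫ t in T, φ (x + d t) ∂μ) x₀ := by
  have hrP : (r + r : ℝ≥0∞) < P.radius := hrR.trans_le hP.r_le
  have hrP' : (r : ℝ≥0∞) < P.radius := le_self_add.trans_lt hrP
  have hdT' : ∀ t ∈ T, (‖d t‖₊ : ℝ≥0∞) ≤ r := fun t ht => by exact_mod_cast hdT t ht
  have hcont (k : ℕ) : ContinuousOn (fun t => P.changeOrigin (d t) k) T := by
    refine (P.hasFPowerSeriesOnBall_changeOrigin k (pos_of_gt hrP')).continuousOn.comp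
      hd.continuousOn fun t ht => ?_
    simpa only [Metric.mem_eball, edist_zero_right, enorm_eq_nnnorm] using (hdT' t ht).trans_lt hrP'
  have : IsFiniteMeasure (μ.restrict T) := ⟨by simpa [lt_top_iff_ne_top] using hμT⟩
  refine (hasFPowerSeriesOnBall_integral (f := fun t x => φ (x + d t))
    (p := fun t => P.changeOrigin (d t)) hr (summable_changeOriginBound hrP)
    (fun k => (hcont k).aestronglyMeasurable hT) ?_ ?_).analyticAt
  · filter_upwards [ae_restrict_mem hT] with t ht using
      nnnorm_changeOrigin_le_changeOriginBound hrP' (hdT t ht)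
  · filter_upwards [ae_restrict_mem hT] with t ht y hy
    have hseries := hP.changeOrigin ((hdT' t ht).trans_lt (le_self_add.trans_lt hrR))
    rw [add_right_comm]
    refine hseries.hasSum ?_
    simp only [Metric.mem_eball, edist_zero_right, enorm_eq_nnnorm]
    rw [lt_tsub_iff_right]
    refine lt_of_le_of_lt ?_ hrR
    gcongr
    exact hdT t ht

theorem exists_nhds_analyticAt_setIntegral {φ : E → F} {c : X → E} (hc : Continuous c) {p₀ : E}
    {t₀ : X} (hφ : AnalyticAt ℂ φ (p₀ + c t₀)) :
    ∃ S, IsOpen S ∧ t₀ ∈ S ∧ ∀ T ⊆ S, MeasurableSet T → μ T ≠ ∞ →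
      AnalyticAt ℂ (fun p => ∫ t in T, φ (p + c t) ∂μ) p₀ := by
  obtain ⟨P, R, hP⟩ := hφ
  obtain ⟨s, hs0, hsR⟩ := ENNReal.lt_iff_exists_nnreal_btwn.1 hP.r_pos
  have hs : 0 < s / 2 := by
    have : 0 < s := by exact_mod_cast hs0
    positivity
  have hsR' : ((s / 2 : NNReal) + (s / 2 : NNReal) : ℝ≥0∞) < R := by
    rwa [← ENNReal.coe_add, add_halves]
  refine ⟨{t | ‖c t - c t₀‖₊ < s / 2}, isOpen_lt (by fun_prop) continuous_const, by simpa using hs,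
    fun T hTS hT hμT => ?_⟩
  have hlocal := analyticAt_setIntegral_of_norm_le (μ := μ) hs hP hsR' (d := fun t => c t - c t₀)
    (by fun_prop) hT hμT fun t ht => (hTS ht).le
  refine (hlocal.fun_comp (f := fun p => p + c t₀) (by fun_prop)).congr
    (Eventually.of_forall fun p => ?_)
  simp only [add_assoc, add_sub_cancel]

theorem analyticAt_setIntegral_comp_add {φ : E → F} {c : X → E} [T2Space X]
    [IsFiniteMeasureOnCompacts μ] (hc : Continuous c) {p₀ : E} {K : Set X} (hK : IsCompact K)
    (hφ : ∀ t ∈ K, AnalyticAt ℂ φ (p₀ + c t)) :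
    AnalyticAt ℂ (fun p => ∫ t in K, φ (p + c t) ∂μ) p₀ := by
  suffices hpieces : ∃ S, MeasurableSet S ∧ K ⊆ S ∧ ∀ T ⊆ S, MeasurableSet T → T ⊆ K →
      AnalyticAt ℂ (fun p => ∫ t in T, φ (p + c t) ∂μ) p₀ by
    obtain ⟨S, -, hKS, hS⟩ := hpieces
    exact hS K hKS hK.measurableSet le_rfl
  refine hK.induction_on (p := fun K' => ∃ S, MeasurableSet S ∧ K' ⊆ S ∧ ∀ T ⊆ S,
    MeasurableSet T → T ⊆ K → AnalyticAt ℂ (fun p => ∫ t in T, φ (p + c t) ∂μ) p₀) ?_ ?_ ?_ ?_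
  · refine ⟨∅, MeasurableSet.empty, le_rfl, fun T hT _ _ => ?_⟩
    simpa [Set.subset_empty_iff.1 hT] using analyticAt_const
  · rintro s t hst ⟨S, hS, htS, hana⟩
    exact ⟨S, hS, hst.trans htS, hana⟩
  · rintro s t ⟨S, hS, hsS, hana⟩ ⟨S', hS', htS', hana'⟩
    refine ⟨S ∪ S', hS.union hS', Set.union_subset_union hsS htS', fun T hTS hT hTK => ?_⟩
    have hinter := hana (T ∩ S) Set.inter_subset_right (hT.inter hS)
      (Set.inter_subset_left.trans hTK)
    have hdiff := hana' (T \ S) (Set.sdiff_subset_iff.2 hTS) (hT.diff hS)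
      (Set.sdiff_subset.trans hTK)
    refine (hinter.add hdiff).congr ?_
    filter_upwards [eventually_integrableOn_comp_add (μ := μ) hc hK hφ] with p hp
    exact integral_inter_add_sdiff hS (hp.mono_set hTK)
  · intro t₀ ht₀
    obtain ⟨S, hSo, htS, hana⟩ := exists_nhds_analyticAt_setIntegral (μ := μ) hc (hφ t₀ ht₀)
    exact ⟨S, mem_nhdsWithin_of_mem_nhds (hSo.mem_nhds htS), S, hSo.measurableSet, le_rfl,
      fun T hTS hT hTK => hana T hTS hT ((measure_mono hTK).trans_lt hK.measure_lt_top).ne⟩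

open Real in
theorem analyticAt_circleAverage_comp_add_smul {φ : E → F} {b : E} {δ : ℝ} {p₀ : E}
    (hφ : ∀ ξ : ℂ, ‖ξ‖ = |δ| → AnalyticAt ℂ φ (p₀ + ξ • b)) :
    AnalyticAt ℂ (fun p => circleAverage (fun ξ => φ (p + ξ • b)) 0 δ) p₀ := by
  have hint := analyticAt_setIntegral_comp_add (μ := volume) (φ := φ)
    (c := fun θ => circleMap 0 δ θ • b) (by fun_prop) (p₀ := p₀) (K := Set.Icc 0 (2 * π))
    isCompact_Icc fun θ _ => hφ _ (by simp)
  refine (hint.const_smul (c := ((2 * π)⁻¹ : ℂ))).congr (Eventually.of_forall fun p => ?_)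
  simp only [circleAverage_def, Pi.smul_apply]
  rw [intervalIntegral.integral_of_le (by positivity), integral_Icc_eq_integral_Ioc,
    ← Complex.coe_smul]
  push_cast
  rfl

end ParametricIntegral

/-! ### Nonzero germs -/

section NonzeroGerm

theorem eventually_eq_of_dense {X Y : Type*} [TopologicalSpace X] [TopologicalSpace Y] [T2Space Y]
    {u v : X → Y} {q : X} {A : Set X} (hA : Dense A) (hu : ∀ᶠ p in 𝓝 q, ContinuousAt u p)
    (hv : ∀ᶠ p in 𝓝 q, ContinuousAt v p) (h : ∀ᶠ p in 𝓝 q, p ∈ A → u p = v p) :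
    ∀ᶠ p in 𝓝 q, u p = v p := by
  filter_upwards [hu, hv, eventually_eventually_nhds.2 h] with p hup hvp hp
  by_contra hne
  have hfreq : ∃ᶠ x in 𝓝 p, x ∈ A := mem_closure_iff_frequently.1 (hA p)
  obtain ⟨x, hxA, hx, hxne⟩ :=
    (hfreq.and_eventually (hp.and ((hup.ne_iff_eventually_ne hvp).1 hne))).exists
  exact hxne (hx hxA)

theorem not_eventually_pow_eq_zero {X : Type*} [TopologicalSpace X] {N : X → ℂ} {q : X}
    (h : ¬ ∀ᶠ p in 𝓝 q, N p = 0) (k : ℕ) : ¬ ∀ᶠ p in 𝓝 q, N p ^ k = 0 :=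
  fun hpow => h (hpow.mono fun _ hp => eq_zero_of_pow_eq_zero hp)

variable {E : Type*} [NormedAddCommGroup E] [NormedSpace ℂ E]

theorem exists_dense_ne_zero {f : E → ℂ} {q : E} (hf : AnalyticAt ℂ f q)
    (h : ¬ ∀ᶠ p in 𝓝 q, f p = 0) : ∃ A : Set E, Dense A ∧ ∀ᶠ p in 𝓝 q, p ∈ A → f p ≠ 0 := by
  obtain ⟨ε, hε, hball⟩ := hf.exists_ball_analyticOnNhd
  refine ⟨{p | f p ≠ 0} ∪ (Metric.ball q ε)ᶜ, fun x => ?_, ?_⟩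
  · rw [mem_closure_iff_frequently]
    intro hzero
    have hx : ∀ᶠ p in 𝓝 x, f p = 0 ∧ p ∈ Metric.ball q ε :=
      hzero.mono fun p hp => by simpa using hp
    have heq := hball.eqOn_zero_of_preconnected_of_eventuallyEq_zero
      (convex_ball q ε).isPreconnected hx.self_of_nhds.2 (hx.mono fun p hp => hp.1)
    exact h (eventually_of_mem (Metric.ball_mem_nhds q hε) fun p hp => heq hp)
  · filter_upwards [Metric.ball_mem_nhds q hε] with p hp hpA
    exact hpA.resolve_right (not_not_intro hp)

theorem eventually_not_eventually_eq_zero {f : E → ℂ} {q : E} (hf : AnalyticAt ℂ f q)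
    (h : ¬ ∀ᶠ p in 𝓝 q, f p = 0) : ∀ᶠ p in 𝓝 q, ¬ ∀ᶠ x in 𝓝 p, f x = 0 := by
  obtain ⟨A, hA, hne⟩ := exists_dense_ne_zero hf h
  filter_upwards [eventually_eventually_nhds.2 hne] with p hp hzero
  have hfreq : ∃ᶠ x in 𝓝 p, x ∈ A := mem_closure_iff_frequently.1 (hA p)
  obtain ⟨x, hxA, hx, hx0⟩ := (hfreq.and_eventually (hp.and hzero)).exists
  exact hx hxA hx0

theorem eventually_eq_of_mul_eq_mul {N u v : E → ℂ} {q : E} (hN : AnalyticAt ℂ N q)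
    (h : ¬ ∀ᶠ p in 𝓝 q, N p = 0) (hu : AnalyticAt ℂ u q) (hv : AnalyticAt ℂ v q)
    (huv : ∀ᶠ p in 𝓝 q, N p * u p = N p * v p) : ∀ᶠ p in 𝓝 q, u p = v p := by
  obtain ⟨A, hA, hne⟩ := exists_dense_ne_zero hN h
  refine eventually_eq_of_dense hA hu.eventually_continuousAt hv.eventually_continuousAt ?_
  filter_upwards [hne, huv] with p hp hpuv hpA using mul_left_cancel₀ (hp hpA) hpuv

theorem not_eventually_mul_eq_zero {N u : E → ℂ} {q : E} (hN : AnalyticAt ℂ N q)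
    (h : ¬ ∀ᶠ p in 𝓝 q, N p = 0) (hu : AnalyticAt ℂ u q) (h' : ¬ ∀ᶠ p in 𝓝 q, u p = 0) :
    ¬ ∀ᶠ p in 𝓝 q, N p * u p = 0 := fun hzero =>
  h' (eventually_eq_of_mul_eq_mul hN h hu (v := fun _ => 0) analyticAt_const
    (by simpa only [mul_zero] using hzero))

theorem analyticAt_line {f : E → ℂ} {p b : E} {ξ : ℂ} (hf : AnalyticAt ℂ f (p + ξ • b)) :
    AnalyticAt ℂ (fun ζ : ℂ => f (p + ζ • b)) ξ :=
  AnalyticAt.fun_comp (f := fun ζ : ℂ => p + ζ • b) hf (by fun_prop)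

theorem exists_line_not_eventually_eq_zero {f : E → ℂ} {q : E} (hf : AnalyticAt ℂ f q)
    (h : ¬ ∀ᶠ p in 𝓝 q, f p = 0) : ∃ e : E, ¬ ∀ᶠ τ in 𝓝 (0 : ℂ), f (q + τ • e) = 0 := by
  by_contra! hlines
  obtain ⟨ε, hε, hball⟩ := hf.exists_ball_analyticOnNhd
  refine h ?_
  filter_upwards [Metric.ball_mem_nhds q hε] with p hp
  let S : Set ℂ := {τ | τ • (p - q) ∈ Metric.ball 0 ε}
  have hS : Convex ℝ S := (convex_ball (0 : E) ε).linear_preimage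
    ((LinearMap.toSpanSingleton ℂ E (p - q)).restrictScalars ℝ)
  have hana : AnalyticOnNhd ℂ (fun τ : ℂ => f (q + τ • (p - q))) S := fun τ hτ =>
    analyticAt_line (hball _ (by simpa [S] using hτ))
  have hone := hana.eqOn_zero_of_preconnected_of_eventuallyEq_zero hS.isPreconnected (z₀ := 0)
    (by simpa [S] using hε) (hlines (p - q)) (x := 1) (by simpa [S, ← dist_eq_norm] using hp)
  simpa using hone

end NonzeroGerm

section Product

theorem tendsto_mk_zero_nhds_zero {V W : Type*} [TopologicalSpace V] [Zero V] [TopologicalSpace W]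
    [Zero W] : Tendsto (fun z : V => (z, (0 : W))) (𝓝 0) (𝓝 0) :=
  Continuous.tendsto' (by fun_prop) 0 0 rfl

theorem tendsto_zero_mk_nhds_zero {V W : Type*} [TopologicalSpace V] [Zero V] [TopologicalSpace W]
    [Zero W] : Tendsto (fun w : W => ((0 : V), w)) (𝓝 0) (𝓝 0) :=
  Continuous.tendsto' (by fun_prop) 0 0 rfl

variable {V W : Type*} [NormedAddCommGroup V] [NormedSpace ℂ V] [NormedAddCommGroup W]
  [NormedSpace ℂ W]

theorem analyticAt_slice_fst {G : V × W → ℂ} (hG : AnalyticAt ℂ G 0) :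
    AnalyticAt ℂ (fun z : V => G (z, 0)) 0 :=
  AnalyticAt.fun_comp (g := G) (f := fun z : V => (z, 0)) hG (analyticAt_id.prod analyticAt_const)

theorem analyticAt_slice_snd {G : V × W → ℂ} (hG : AnalyticAt ℂ G 0) :
    AnalyticAt ℂ (fun w : W => G (0, w)) 0 :=
  AnalyticAt.fun_comp (g := G) (f := fun w : W => (0, w)) hG (analyticAt_const.prod analyticAt_id)

theorem analyticAt_comp_fst {a : V → ℂ} (ha : AnalyticAt ℂ a 0) :
    AnalyticAt ℂ (fun p : V × W => a p.1) 0 :=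
  AnalyticAt.fun_comp (f := fun p : V × W => p.1) ha analyticAt_fst

theorem analyticAt_comp_snd {b : W → ℂ} (hb : AnalyticAt ℂ b 0) :
    AnalyticAt ℂ (fun p : V × W => b p.2) 0 :=
  AnalyticAt.fun_comp (f := fun p : V × W => p.2) hb analyticAt_snd

end Product

/-! ### Divisibility of germs of holomorphic functions -/

section GermDvd

variable {E : Type*} [NormedAddCommGroup E] [NormedSpace ℂ E] {N T : E → ℂ} {q : E}

/-- Divisibility in the ring of germs of holomorphic functions at `q`: the germ of `T` is a
multiple of the germ of `N`. -/
def GermDvd (N T : E → ℂ) (q : E) : Prop :=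
  ∃ v : E → ℂ, AnalyticAt ℂ v q ∧ ∀ᶠ p in 𝓝 q, T p = N p * v p

namespace GermDvd

theorem congr {T' : E → ℂ} (h : GermDvd N T q) (hT : ∀ᶠ p in 𝓝 q, T' p = T p) :
    GermDvd N T' q := by
  obtain ⟨v, hv, h⟩ := h
  exact ⟨v, hv, EventuallyEq.trans hT h⟩

theorem add {T' : E → ℂ} (h : GermDvd N T q) (h' : GermDvd N T' q) :
    GermDvd N (fun p => T p + T' p) q := by
  obtain ⟨v, hv, h⟩ := h
  obtain ⟨v', hv', h'⟩ := h'
  refine ⟨fun p => v p + v' p, hv.fun_add hv', ?_⟩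
  filter_upwards [h, h'] with p hp hp'
  rw [hp, hp', mul_add]

theorem mul_left {S : E → ℂ} (h : GermDvd N T q) (hS : AnalyticAt ℂ S q) :
    GermDvd N (fun p => S p * T p) q := by
  obtain ⟨v, hv, h⟩ := h
  refine ⟨fun p => S p * v p, hS.fun_mul hv, ?_⟩
  filter_upwards [h] with p hp
  rw [hp, mul_left_comm]

theorem sub {T' : E → ℂ} (h : GermDvd N T q) (h' : GermDvd N T' q) :
    GermDvd N (fun p => T p - T' p) q :=
  (h.add (h'.mul_left (S := fun _ => -1) analyticAt_const)).congr
    (Eventually.of_forall fun p => by ring)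

theorem trans {S : E → ℂ} (h : GermDvd N T q) (h' : GermDvd T S q) : GermDvd N S q := by
  obtain ⟨v, hv, h⟩ := h
  obtain ⟨v', hv', h'⟩ := h'
  refine ⟨fun p => v p * v' p, hv.fun_mul hv', ?_⟩
  filter_upwards [h, h'] with p hp hp'
  rw [hp', hp, mul_assoc]

theorem of_ne_zero (hN : AnalyticAt ℂ N q) (hT : AnalyticAt ℂ T q) (h : N q ≠ 0) :
    GermDvd N T q :=
  ⟨fun p => T p / N p, hT.fun_div hN h, by
    filter_upwards [hN.continuousAt.eventually_ne h] with p hp using (mul_div_cancel₀ _ hp).symm⟩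

theorem self_mul {S : E → ℂ} (hS : AnalyticAt ℂ S q) : GermDvd N (fun p => N p * S p) q :=
  ⟨S, hS, Eventually.of_forall fun _ => rfl⟩

theorem comp {E' : Type*} [NormedAddCommGroup E'] [NormedSpace ℂ E'] {g : E' → E} {q : E'}
    (hg : AnalyticAt ℂ g q) (h : GermDvd N T (g q)) :
    GermDvd (fun p => N (g p)) (fun p => T (g p)) q := by
  obtain ⟨v, hv, h⟩ := h
  exact ⟨fun p => v (g p), hv.fun_comp hg, hg.continuousAt.eventually h⟩

theorem line {p b : E} {ξ : ℂ} (h : GermDvd N T (p + ξ • b)) :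
    GermDvd (fun ζ : ℂ => N (p + ζ • b)) (fun ζ : ℂ => T (p + ζ • b)) ξ :=
  comp (g := fun ζ : ℂ => p + ζ • b) (by fun_prop) h

theorem eventually (h : GermDvd N T q) : ∀ᶠ p in 𝓝 q, GermDvd N T p := by
  obtain ⟨v, hv, h⟩ := h
  filter_upwards [hv.eventually_analyticAt, eventually_eventually_nhds.2 h] with p hvp hp
  exact ⟨v, hvp, hp⟩

theorem of_simple_zero {N T : ℂ → ℂ} {ξ : ℂ} (hN : AnalyticAt ℂ N ξ) (hT : AnalyticAt ℂ T ξ)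
    (hN' : deriv N ξ ≠ 0) (hN0 : N ξ = 0) (hT0 : T ξ = 0) : GermDvd N T ξ := by
  have hNorder : analyticOrderAt N ξ = 1 :=
    hN.analyticOrderAt_eq_one_of_zero_deriv_ne_zero hN0 hN'
  obtain ⟨g, hg, hg0, hNg⟩ := (hN.analyticOrderAt_eq_natCast (n := 1)).1 (by simpa using hNorder)
  have hTorder : ((1 : ℕ) : ℕ∞) ≤ analyticOrderAt T ξ := by
    rw [Nat.cast_one, Order.one_le_iff_ne_zero]
    exact hT.analyticOrderAt_ne_zero.2 hT0
  obtain ⟨t, ht, hTt⟩ := (natCast_le_analyticOrderAt hT).1 hTorder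
  refine ⟨fun z => t z / g z, ht.fun_div hg hg0, ?_⟩
  filter_upwards [hNg, hTt, hg.continuousAt.eventually_ne hg0] with z hNz hTz hgz
  rw [hNz, hTz, smul_eq_mul, smul_eq_mul]
  field_simp

/-- The local quotients agree on overlaps, since `N` is nowhere the zero germ. -/
theorem exists_analyticOnNhd_quotient {S : Set E} (hN : AnalyticOnNhd ℂ N S)
    (hN0 : ∀ x ∈ S, ¬ ∀ᶠ y in 𝓝 x, N y = 0) (h : ∀ x ∈ S, GermDvd N T x) :
    ∃ Q : E → ℂ, AnalyticOnNhd ℂ Q S ∧ ∀ x ∈ S, T x = N x * Q x := by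
  let S' : Set E := {x | GermDvd N T x ∧ AnalyticAt ℂ N x ∧ ¬ ∀ᶠ y in 𝓝 x, N y = 0}
  have hdvd : ∀ x ∈ S', GermDvd N T x := fun x hx => hx.1
  choose! v hv hTv using hdvd
  have hS : ∀ x ∈ S, x ∈ S' := fun x hx => ⟨h x hx, hN x hx, hN0 x hx⟩
  refine ⟨fun x => v x x, fun x hx => (hv x (hS x hx)).congr ?_,
    fun x hx => (hTv x (hS x hx)).self_of_nhds⟩
  filter_upwards [(h x hx).eventually, (hN x hx).eventually_analyticAt,
    eventually_not_eventually_eq_zero (hN x hx) (hN0 x hx), (hv x (hS x hx)).eventually_analyticAt,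
    eventually_eventually_nhds.2 (hTv x (hS x hx))] with y hdvd_y hNy hN0y hvy hTy
  refine (eventually_eq_of_mul_eq_mul hNy hN0y hvy (hv y ⟨hdvd_y, hNy, hN0y⟩) ?_).self_of_nhds
  filter_upwards [hTy, hTv y ⟨hdvd_y, hNy, hN0y⟩] with z hz hz'
  rw [← hz, ← hz']

end GermDvd

end GermDvd

/-! ### Division with remainder along discs -/

section DiscDivision

variable {E : Type*} [NormedAddCommGroup E] [NormedSpace ℂ E]

theorem eventually_forall_add_smul_of_isCompact {S : Set ℂ} (hS : IsCompact S) {q b : E}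
    {P : E → Prop} (h : ∀ ξ ∈ S, ∀ᶠ x in 𝓝 (q + ξ • b), P x) :
    ∀ᶠ x in 𝓝 q, ∀ ξ ∈ S, P (x + ξ • b) := by
  refine hS.eventually_forall_of_forall_eventually fun ξ hξ => ?_
  have htendsto : Tendsto (fun z : E × ℂ => z.1 + z.2 • b) (𝓝 (q, ξ)) (𝓝 (q + ξ • b)) :=
    Continuous.tendsto (by fun_prop) (q, ξ)
  exact htendsto.eventually (h ξ hξ)

theorem eventually_forall_norm_le_add_smul {r : ℝ} {q b : E} {P : E → Prop}
    (h : ∀ ξ : ℂ, ‖ξ‖ ≤ r → ∀ᶠ x in 𝓝 (q + ξ • b), P x) :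
    ∀ᶠ x in 𝓝 q, ∀ ξ : ℂ, ‖ξ‖ ≤ r → P (x + ξ • b) := by
  simpa only [mem_closedBall_zero_iff] using eventually_forall_add_smul_of_isCompact
    (isCompact_closedBall (0 : ℂ) r) fun ξ hξ => h ξ (mem_closedBall_zero_iff.1 hξ)

theorem eventually_forall_norm_eq_add_smul {r : ℝ} {q b : E} {P : E → Prop}
    (h : ∀ ξ : ℂ, ‖ξ‖ = r → ∀ᶠ x in 𝓝 (q + ξ • b), P x) :
    ∀ᶠ x in 𝓝 q, ∀ ξ : ℂ, ‖ξ‖ = r → P (x + ξ • b) := by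
  simpa only [mem_sphere_zero_iff_norm] using eventually_forall_add_smul_of_isCompact
    (isCompact_sphere (0 : ℂ) r) fun ξ hξ => h ξ (mem_sphere_zero_iff_norm.1 hξ)

open Real in
theorem eq_mul_circleAverage_div {T N : ℂ → ℂ} {δ : ℝ} (hδ : 0 < δ)
    (hN : ∀ ξ : ℂ, ‖ξ‖ ≤ δ → AnalyticAt ℂ N ξ) (hNs : ∀ ξ : ℂ, ‖ξ‖ = δ → N ξ ≠ 0)
    (hd : ∀ ξ : ℂ, ‖ξ‖ ≤ δ → GermDvd N T ξ) :
    T 0 = N 0 * circleAverage (fun ξ => T ξ / N ξ) 0 δ := by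
  simp only [← mem_closedBall_zero_iff] at hN hd
  have hN0 : ∀ ξ ∈ Metric.closedBall (0 : ℂ) δ, ¬ ∀ᶠ z in 𝓝 ξ, N z = 0 := fun ξ hξ hzero =>
    hNs δ (by simp [hδ.le]) <| AnalyticOnNhd.eqOn_zero_of_preconnected_of_eventuallyEq_zero hN
      (convex_closedBall (0 : ℂ) δ).isPreconnected hξ hzero
      (by simp [abs_of_pos hδ])
  obtain ⟨Q, hQ, hTQ⟩ := GermDvd.exists_analyticOnNhd_quotient hN hN0 hd
  have hQcl : DiffContOnCl ℂ Q (Metric.ball 0 |δ|) := by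
    rw [abs_of_pos hδ]
    exact hQ.differentiableOn.diffContOnCl_ball le_rfl
  rw [hTQ 0 (Metric.mem_closedBall_self hδ.le), ← hQcl.circleAverage]
  congr 1
  refine circleAverage_congr_sphere fun ξ hξ => ?_
  rw [abs_of_pos hδ] at hξ
  have hne := hNs ξ (mem_sphere_zero_iff_norm.1 hξ)
  simp only [hTQ ξ (Metric.sphere_subset_closedBall hξ), mul_div_cancel_left₀ _ hne]

/-- The function `T` is holomorphic near the closed disc `{q + τ e : ‖τ‖ ≤ r}`. -/
def AnalyticOnDisc (e : E) (r : ℝ) (q : E) (T : E → ℂ) : Prop :=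
  ∀ τ : ℂ, ‖τ‖ ≤ r → AnalyticAt ℂ T (q + τ • e)

/-- The closed disc `{q + τ e : ‖τ‖ ≤ r}` is suitable for division by `G`: it lies in the domain of
holomorphy of `G`, and `G` has no zeros on its boundary circle. -/
structure DivisionDisc (G : E → ℂ) (e : E) (r : ℝ) (q : E) : Prop where
  pos : 0 < r
  analytic : AnalyticOnDisc e r q G
  ne_zero : ∀ τ : ℂ, ‖τ‖ = r → G (q + τ • e) ≠ 0

/-- The quotient of `T` by `G` along discs of radius `r` in direction `e`. If `G` divides `T` near
the disc, this is the true quotient at the centre, by the mean value property. -/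
noncomputable def discQuotient (G : E → ℂ) (e : E) (r : ℝ) (T : E → ℂ) (p : E) : ℂ :=
  Real.circleAverage (fun τ => T (p + τ • e) / G (p + τ • e)) 0 r

/-- The remainder of `T` in the division by `G` along discs of radius `r` in direction `e`. It is a
canonical representative of `T` modulo `G`. -/
noncomputable def discRemainder (G : E → ℂ) (e : E) (r : ℝ) (T : E → ℂ) (p : E) : ℂ :=
  T p - G p * discQuotient G e r T p

variable {G T T' : E → ℂ} {e : E} {r : ℝ} {q : E}

theorem AnalyticOnDisc.eventually (h : AnalyticOnDisc e r q T) :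
    ∀ᶠ p in 𝓝 q, AnalyticOnDisc e r p T :=
  eventually_forall_norm_le_add_smul fun ξ hξ => (h ξ hξ).eventually_analyticAt

theorem AnalyticOnDisc.analyticAt_center (h : AnalyticOnDisc e r q T) (hr : 0 < r) :
    AnalyticAt ℂ T q := by
  simpa using h 0 (by simpa using hr.le)

namespace DivisionDisc

theorem eventually (h : DivisionDisc G e r q) : ∀ᶠ p in 𝓝 q, DivisionDisc G e r p := by
  have hne := eventually_forall_norm_eq_add_smul (P := fun x => G x ≠ 0) fun ξ hξ =>
    (h.analytic ξ hξ.le).continuousAt.eventually_ne (h.ne_zero ξ hξ)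
  filter_upwards [h.analytic.eventually, hne] with p hana hp using ⟨h.pos, hana, hp⟩

theorem analyticAt_discQuotient (h : DivisionDisc G e r q) (hT : AnalyticOnDisc e r q T) :
    AnalyticAt ℂ (discQuotient G e r T) q := by
  refine analyticAt_circleAverage_comp_add_smul (φ := fun p => T p / G p) fun ξ hξ => ?_
  rw [abs_of_pos h.pos] at hξ
  exact (hT ξ hξ.le).fun_div (h.analytic ξ hξ.le) (h.ne_zero ξ hξ)

theorem analyticAt_discRemainder (h : DivisionDisc G e r q) (hT : AnalyticOnDisc e r q T) :
    AnalyticAt ℂ (discRemainder G e r T) q :=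
  (hT.analyticAt_center h.pos).fun_sub
    ((h.analytic.analyticAt_center h.pos).fun_mul (h.analyticAt_discQuotient hT))

theorem circleIntegrable_div (h : DivisionDisc G e r q) (hT : AnalyticOnDisc e r q T) :
    CircleIntegrable (fun τ => T (q + τ • e) / G (q + τ • e)) 0 r := by
  refine ContinuousOn.circleIntegrable h.pos.le fun ξ hξ => ?_
  have hξr : ‖ξ‖ = r := by simpa using hξ
  exact ((analyticAt_line (hT ξ hξr.le)).fun_div (analyticAt_line (h.analytic ξ hξr.le))
    (h.ne_zero ξ hξr)).continuousAt.continuousWithinAt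

theorem discRemainder_sub (h : DivisionDisc G e r q) (hT : AnalyticOnDisc e r q T)
    (hT' : AnalyticOnDisc e r q T') :
    discRemainder G e r (fun p => T p - T' p) q =
      discRemainder G e r T q - discRemainder G e r T' q := by
  simp only [discRemainder, discQuotient, sub_div]
  rw [Real.circleAverage_fun_sub (h.circleIntegrable_div hT) (h.circleIntegrable_div hT')]
  ring

theorem discRemainder_eq_zero (h : DivisionDisc G e r q)
    (hd : ∀ τ : ℂ, ‖τ‖ ≤ r →
      GermDvd (fun τ : ℂ => G (q + τ • e)) (fun τ : ℂ => T (q + τ • e)) τ) :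
    discRemainder G e r T q = 0 := by
  have hmean := eq_mul_circleAverage_div h.pos (fun ξ hξ => analyticAt_line (h.analytic ξ hξ))
    h.ne_zero hd
  simp only [zero_smul, add_zero] at hmean
  rw [discRemainder, discQuotient, ← hmean, sub_self]

theorem germDvd_of_discRemainder_eq_zero (h : DivisionDisc G e r q) (hT : AnalyticOnDisc e r q T)
    (hz : ∀ᶠ p in 𝓝 q, discRemainder G e r T p = 0) : GermDvd G T q :=
  ⟨_, h.analyticAt_discQuotient hT, hz.mono fun _ hp => sub_eq_zero.1 hp⟩

end DivisionDisc

theorem discRemainder_mul_of_invariant {N : E → ℂ} (hinv : ∀ τ : ℂ, N (q + τ • e) = N q) :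
    discRemainder G e r (fun p => N p * T p) q = N q * discRemainder G e r T q := by
  have haverage := Real.circleAverage_fun_smul (a := N q)
    (f := fun τ => T (q + τ • e) / G (q + τ • e)) (c := 0) (R := r)
  simp only [smul_eq_mul] at haverage
  simp only [discRemainder, discQuotient, hinv, mul_div_assoc, haverage]
  ring

theorem exists_divisionDisc (hG : AnalyticAt ℂ G q)
    (he : ¬ ∀ᶠ τ in 𝓝 (0 : ℂ), G (q + τ • e) = 0) {P : E → Prop} (hP : ∀ᶠ x in 𝓝 q, P x) :
    ∃ r : ℝ, DivisionDisc G e r q ∧ (∀ τ : ℂ, τ ≠ 0 → ‖τ‖ ≤ r → G (q + τ • e) ≠ 0) ∧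
      ∀ τ : ℂ, ‖τ‖ ≤ r → P (q + τ • e) := by
  have hline : AnalyticAt ℂ (fun τ : ℂ => G (q + τ • e)) 0 := analyticAt_line (by simpa using hG)
  have hisolated : ∀ᶠ τ in 𝓝 (0 : ℂ), τ ≠ 0 → G (q + τ • e) ≠ 0 :=
    eventually_nhdsWithin_iff.1 (hline.eventually_eq_zero_or_eventually_ne_zero.resolve_left he)
  have htendsto : Tendsto (fun τ : ℂ => q + τ • e) (𝓝 0) (𝓝 q) :=
    Continuous.tendsto' (by fun_prop) _ _ (by simp)
  obtain ⟨r, hr, hball⟩ := Metric.nhds_basis_closedBall.eventually_iff.1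
    (hisolated.and (htendsto.eventually (hG.eventually_analyticAt.and hP)))
  simp only [mem_closedBall_zero_iff] at hball
  refine ⟨r, ⟨hr, fun τ hτ => (hball hτ).2.1, fun τ hτ => (hball hτ.le).1 ?_⟩,
    fun τ hτ0 hτ => (hball hτ).1 hτ0, fun τ hτ => (hball hτ).2.2⟩
  exact norm_pos_iff.1 (hτ ▸ hr)

end DiscDivision

namespace GermDvd

variable {E : Type*} [NormedAddCommGroup E] [NormedSpace ℂ E] {G N T u : E → ℂ} {q b e : E}

theorem of_dense_lines (hT : AnalyticAt ℂ T q) (hN : AnalyticAt ℂ N q)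
    (hb : ¬ ∀ᶠ ξ in 𝓝 (0 : ℂ), N (q + ξ • b) = 0) {A : Set E} (hA : Dense A) {U : Set E}
    (hU : U ∈ 𝓝 q)
    (hd : ∀ p ∈ A, p ∈ U → ∀ ξ : ℂ, p + ξ • b ∈ U →
      GermDvd (fun ζ : ℂ => N (p + ζ • b)) (fun ζ : ℂ => T (p + ζ • b)) ξ) : GermDvd N T q := by
  obtain ⟨r, hdisc, -, hr⟩ := exists_divisionDisc hN hb
    (hT.eventually_analyticAt.and (eventually_mem_nhds_iff.2 hU))
  have hTdisc : AnalyticOnDisc b r q T := fun τ hτ => (hr τ hτ).1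
  have hUdisc := eventually_forall_norm_le_add_smul fun τ hτ =>
    eventually_mem_nhds_iff.2 (hr τ hτ).2
  refine hdisc.germDvd_of_discRemainder_eq_zero hTdisc ?_
  refine eventually_eq_of_dense hA (hdisc.analyticAt_discRemainder hTdisc).eventually_continuousAt
    (Eventually.of_forall fun _ => continuousAt_const) ?_
  filter_upwards [hdisc.eventually, hUdisc, hU] with p hp hpU hpU' hpA
  exact hp.discRemainder_eq_zero fun τ hτ => hd p hpA hpU' τ (mem_of_mem_nhds (hpU τ hτ))

theorem of_eq_zero_imp_eq_zero (hG : AnalyticAt ℂ G q) (hu : AnalyticAt ℂ u q)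
    (hdG : fderiv ℂ G q ≠ 0) (h : ∀ᶠ p in 𝓝 q, G p = 0 → u p = 0) : GermDvd G u q := by
  obtain ⟨v, hv⟩ : ∃ v, fderiv ℂ G q v ≠ 0 := by
    by_contra! hzero
    exact hdG (ContinuousLinearMap.ext hzero)
  have hderiv {p : E} {ξ : ℂ} (hp : AnalyticAt ℂ G (p + ξ • v)) :
      deriv (fun ζ : ℂ => G (p + ζ • v)) ξ = fderiv ℂ G (p + ξ • v) v := by
    have hline : HasDerivAt (fun ζ : ℂ => p + ζ • v) v ξ := by
      simpa using ((hasDerivAt_id ξ).smul_const v).const_add p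
    exact (hp.differentiableAt.hasFDerivAt.comp_hasDerivAt ξ hline).deriv
  have hvline : ¬ ∀ᶠ ξ in 𝓝 (0 : ℂ), G (q + ξ • v) = 0 := by
    intro hzero
    have hderiv0 : deriv (fun ζ : ℂ => G (q + ζ • v)) 0 = 0 := by
      rw [EventuallyEq.deriv_eq (f := fun _ => (0 : ℂ)) hzero, deriv_const]
    rw [hderiv (by simpa using hG)] at hderiv0
    exact hv (by simpa using hderiv0)
  have hcont : ContinuousAt (fun p => fderiv ℂ G p v) q :=
    hG.fderiv.continuousAt.clm_apply continuousAt_const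
  refine of_dense_lines hu hG hvline dense_univ ((hcont.eventually_ne hv).and
    (hG.eventually_analyticAt.and (hu.eventually_analyticAt.and h))) ?_
  rintro p - - ξ ⟨hvξ, hGξ, huξ, hξ⟩
  by_cases hzero : G (p + ξ • v) = 0
  · exact of_simple_zero (analyticAt_line hGξ) (analyticAt_line huξ) (by rwa [hderiv hGξ]) hzero
      (hξ hzero)
  · exact of_ne_zero (analyticAt_line hGξ) (analyticAt_line huξ) hzero

theorem of_mul_left_of_invariant (hN : AnalyticAt ℂ N q) (h : ¬ ∀ᶠ p in 𝓝 q, N p = 0)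
    (hinv : ∀ p (τ : ℂ), N (p + τ • e) = N p) (hu : AnalyticAt ℂ u q) (hG : AnalyticAt ℂ G q)
    (he : ¬ ∀ᶠ τ in 𝓝 (0 : ℂ), G (q + τ • e) = 0)
    (hd : GermDvd G (fun p => N p * u p) q) : GermDvd G u q := by
  obtain ⟨A, hA, hne⟩ := exists_dense_ne_zero hN h
  refine of_dense_lines hu hG he hA (hd.eventually.and hne) ?_
  rintro p hpA ⟨-, hNp⟩ ξ ⟨hdξ, -⟩
  refine (hdξ.line.mul_left (S := fun _ => (N p)⁻¹) analyticAt_const).congr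
    (Eventually.of_forall fun ζ => ?_)
  rw [hinv, inv_mul_cancel_left₀ (hNp hpA)]

/-- `N = N · 1`, and the remainder of `1` does not vanish because `G` is not a unit. -/
theorem eventually_eq_zero_of_invariant (hG : AnalyticAt ℂ G q) (hG0 : G q = 0)
    (he : ¬ ∀ᶠ τ in 𝓝 (0 : ℂ), G (q + τ • e) = 0) (hinv : ∀ p (τ : ℂ), N (p + τ • e) = N p)
    (hd : GermDvd G N q) : ∀ᶠ p in 𝓝 q, N p = 0 := by
  obtain ⟨r, hdisc, -, hr⟩ := exists_divisionDisc hG he hd.eventually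
  have hone : ∀ᶠ p in 𝓝 q, discRemainder G e r (fun _ => 1) p ≠ 0 := by
    refine (hdisc.analyticAt_discRemainder fun τ _ =>
      analyticAt_const).continuousAt.eventually_ne ?_
    simp [discRemainder, hG0]
  have hdvd := eventually_forall_norm_le_add_smul fun τ hτ => (hr τ hτ).eventually
  filter_upwards [hone, hdvd, hdisc.eventually] with p hp hdvdp hdiscp
  have hrem := discRemainder_mul_of_invariant (G := G) (T := fun _ => 1) (r := r) fun τ => hinv p τ
  simp only [mul_one] at hrem
  rw [hdiscp.discRemainder_eq_zero fun τ hτ => (hdvdp τ hτ).line] at hrem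
  exact (mul_eq_zero.1 hrem.symm).resolve_right hp

end GermDvd

/-! ### Planes avoiding sets of small dimension -/

section PlaneAvoidance

variable {E : Type*} [NormedAddCommGroup E] [NormedSpace ℂ E] [FiniteDimensional ℂ E] {S : Set E}

theorem exists_surjective_clm_apply_eq_zero (e b : E) :
    ∃ (k : ℕ) (π : E →L[ℂ] (Fin k → ℂ)), Module.finrank ℂ E ≤ k + 2 ∧ Function.Surjective π ∧
      π e = 0 ∧ π b = 0 := by
  let W : Submodule ℂ E := Submodule.span ℂ {e, b}
  have hW : Module.finrank ℂ W ≤ 2 := by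
    classical
    have hcard := finrank_span_finset_le_card (R := ℂ) ({e, b} : Finset E)
    rw [Set.finrank, Finset.coe_pair] at hcard
    exact hcard.trans Finset.card_le_two
  have hquot := W.finrank_quotient_add_finrank
  have hker {x : E} (hx : x ∈ W) : W.mkQ x = 0 := by
    rwa [Submodule.mkQ_apply, Submodule.Quotient.mk_eq_zero]
  refine ⟨Module.finrank ℂ (E ⧸ W), LinearMap.toContinuousLinearMap
    ((Module.finBasis ℂ (E ⧸ W)).equivFun.toLinearMap ∘ₗ W.mkQ), by omega, ?_, ?_, ?_⟩
  · exact (Module.finBasis ℂ (E ⧸ W)).equivFun.surjective.comp W.mkQ_surjective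
  · rw [LinearMap.coe_toContinuousLinearMap', LinearMap.comp_apply,
      hker (Submodule.subset_span (by simp)), map_zero]
  · rw [LinearMap.coe_toContinuousLinearMap', LinearMap.comp_apply,
      hker (Submodule.subset_span (by simp)), map_zero]

theorem exists_clm_apply_eq_one_apply_eq_zero (hE : 1 < Module.finrank ℂ E) (e : E) :
    ∃ (e' : E) (ℓ : E →L[ℂ] ℂ), ℓ e' = 1 ∧ ℓ e = 0 := by
  obtain ⟨e', he'⟩ : ∃ e', e' ∉ Submodule.span ℂ {e} := by
    by_contra! hspan
    have hle := finrank_span_le_card (R := ℂ) ({e} : Set E)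
    rw [Submodule.eq_top_iff'.2 hspan, finrank_top] at hle
    simp only [Set.toFinset_singleton, Finset.card_singleton] at hle
    omega
  obtain ⟨ℓ, hℓe', hℓe⟩ := Submodule.exists_le_ker_of_notMem he'
  have hℓe0 : ℓ e = 0 := hℓe (Submodule.subset_span rfl)
  exact ⟨e', LinearMap.toContinuousLinearMap ((ℓ e')⁻¹ • ℓ), by simp [hℓe'], by simp [hℓe0]⟩

theorem dense_compl_of_dimH_lt {k : ℕ} {A : Set (Fin k → ℂ)} (hA : dimH A < (2 * k : ℕ)) :
    Dense Aᶜ := by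
  refine dense_compl_of_dimH_lt_finrank (hA.trans_eq ?_)
  rw [finrank_real_of_complex, Module.finrank_fin_fun]

theorem dense_forall_add_smul_add_smul_notMem {d : ℕ} (hS : dimH S < d)
    (hd : d + 4 ≤ 2 * Module.finrank ℂ E) (e b : E) :
    Dense {p : E | ∀ ξ τ : ℂ, p + ξ • b + τ • e ∉ S} := by
  obtain ⟨k, π, hk, hsurj, he, hb⟩ := exists_surjective_clm_apply_eq_zero e b
  have : CompleteSpace E := FiniteDimensional.complete ℂ E
  have hdim : dimH (π '' S) < (2 * k : ℕ) :=
    (π.lipschitz.dimH_image_le S).trans_lt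
      (hS.trans_le (Nat.cast_le.2 (by omega : d ≤ 2 * k)))
  refine ((dense_compl_of_dimH_lt hdim).preimage (π.isOpenMap hsurj)).mono fun p hp ξ τ hmem => ?_
  exact hp ⟨_, hmem, by simp [he, hb]⟩

theorem dimH_image_inv_smul_le {F : Type*} [NormedAddCommGroup F] [NormedSpace ℂ F]
    (ℓ : E →L[ℂ] ℂ) (π : E →L[ℂ] F) :
    dimH ((fun q => (ℓ q)⁻¹ • π q) '' (S ∩ {q | ℓ q ≠ 0})) ≤ dimH S := by
  have : FiniteDimensional ℝ E := FiniteDimensional.complexToReal E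
  refine (dimH_image_le_of_locally_lipschitzOn ?_).trans (dimH_mono Set.inter_subset_left)
  rintro x ⟨-, hx⟩
  have hsmooth : ContDiffAt ℂ 1 (fun q => (ℓ q)⁻¹ • π q) x :=
    (ℓ.contDiff.contDiffAt.inv hx).smul π.contDiff.contDiffAt
  obtain ⟨K, t, ht, hlip⟩ := hsmooth.exists_lipschitzOnWith
  exact ⟨K, t, mem_nhdsWithin_of_mem_nhds ht, hlip⟩

/-- The planes containing `ℂ e` are parametrised by the values of the projective projection
`q ↦ π q / ℓ q`, and the image of `S` does not exhaust them. -/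
theorem exists_forall_smul_add_smul_notMem {d : ℕ} (hS : dimH S < d)
    (hd : d + 4 ≤ 2 * Module.finrank ℂ E) (e : E) :
    ∃ b : E, ∀ ξ τ : ℂ, ξ ≠ 0 → ξ • b + τ • e ∉ S := by
  obtain ⟨e', ℓ, hℓe', hℓe⟩ := exists_clm_apply_eq_one_apply_eq_zero (by omega) e
  obtain ⟨k, π, hk, hsurj, he, he'⟩ := exists_surjective_clm_apply_eq_zero e e'
  have hdim := (dimH_image_inv_smul_le (S := S) ℓ π).trans_lt
    (hS.trans_le (Nat.cast_le.2 (by omega : d ≤ 2 * k)))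
  obtain ⟨β, hβ⟩ := (dense_compl_of_dimH_lt hdim).nonempty
  obtain ⟨b, hb⟩ := hsurj β
  refine ⟨b + (1 - ℓ b) • e', fun ξ τ hξ hmem => hβ ⟨_, ⟨hmem, ?_⟩, ?_⟩⟩
  all_goals
    have hℓ : ℓ (ξ • (b + (1 - ℓ b) • e') + τ • e) = ξ := by
      simp only [map_add, map_smul, hℓe', hℓe, smul_eq_mul]
      ring
  · rwa [Set.mem_ofPred_eq, hℓ]
  · simp only [hℓ]
    simp [he, he', hb, hξ]

end PlaneAvoidance

/-! ### Bezout identities on compact sets -/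

section Bezout

variable {ι : Type*} [Fintype ι] {N : ℂ → ℂ} {g : ι → ℂ → ℂ} {K : Set ℂ}

theorem analyticAt_dslope {f : ℂ → ℂ} {t x : ℂ} (ht : AnalyticAt ℂ f t) (hx : AnalyticAt ℂ f x) :
    AnalyticAt ℂ (dslope f t) x := by
  rcases eq_or_ne x t with rfl | hne
  · obtain ⟨p, hp⟩ := hx
    exact hp.has_fpower_series_dslope_fslope.analyticAt
  · have hslope : AnalyticAt ℂ (fun z => (z - t)⁻¹ * (f z - f t)) x :=
      (AnalyticAt.inv (f := fun z => z - t) (by fun_prop) (sub_ne_zero.2 hne)).fun_mul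
        (hx.fun_sub analyticAt_const)
    refine hslope.congr ?_
    filter_upwards [isOpen_ne.mem_nhds hne] with z hz
    rw [dslope_of_ne _ hz, slope_def_module, smul_eq_mul]

theorem analyticAt_multiset_prod_sub (s : Multiset ℂ) (τ : ℂ) :
    AnalyticAt ℂ (fun τ => (s.map (fun t => τ - t)).prod) τ := by
  induction s using Multiset.induction_on with
  | empty => simpa using analyticAt_const
  | cons t s ih =>
    simp only [Multiset.map_cons, Multiset.prod_cons]
    exact AnalyticAt.fun_mul (by fun_prop) ih

theorem exists_bezout_multiset_prod_sub (hg : ∀ i, AnalyticOnNhd ℂ (g i) K) (s : Multiset ℂ)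
    (hs : ∀ t ∈ s, t ∈ K ∧ ∃ i, g i t ≠ 0) :
    ∃ (α : ι → ℂ → ℂ) (β : ℂ → ℂ), (∀ i, AnalyticOnNhd ℂ (α i) K) ∧ AnalyticOnNhd ℂ β K ∧
      ∀ τ ∈ K, ∑ i, α i τ * g i τ + β τ * (s.map (fun t => τ - t)).prod = 1 := by
  classical
  induction s using Multiset.induction_on with
  | empty =>
    exact ⟨fun _ _ => 0, fun _ => 1, fun _ => analyticOnNhd_const, analyticOnNhd_const, by simp⟩
  | cons t s ih =>
    obtain ⟨α, β, hα, hβ, hbezout⟩ := ih fun t' ht' => hs t' (Multiset.mem_cons_of_mem ht')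
    obtain ⟨htK, i₀, hi₀⟩ := hs t (Multiset.mem_cons_self t s)
    let P : ℂ → ℂ := fun τ => (s.map (fun t => τ - t)).prod
    let x : ℂ := β t / g i₀ t
    let φ : ℂ → ℂ := fun τ => β τ - x * g i₀ τ
    have hφ : AnalyticOnNhd ℂ φ K := fun τ hτ =>
      (hβ τ hτ).fun_sub (analyticAt_const.fun_mul (hg i₀ τ hτ))
    have hφt : φ t = 0 := by simp only [φ, x, div_mul_cancel₀ _ hi₀, sub_self]
    refine ⟨fun i τ => α i τ + if i = i₀ then x * P τ else 0, dslope φ t, fun i τ hτ => ?_,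
      fun τ hτ => analyticAt_dslope (hφ t htK) (hφ τ hτ), fun τ hτ => ?_⟩
    · refine (hα i τ hτ).fun_add ?_
      split_ifs
      · exact analyticAt_const.fun_mul (analyticAt_multiset_prod_sub s τ)
      · exact analyticAt_const
    · have hdslope : (τ - t) * dslope φ t τ = β τ - x * g i₀ τ := by
        rw [← smul_eq_mul, sub_smul_dslope, hφt, sub_zero]
      simp only [add_mul, Finset.sum_add_distrib, ite_mul, zero_mul, Finset.sum_ite_eq',
        Finset.mem_univ, if_true, Multiset.map_cons, Multiset.prod_cons]
      rw [← hbezout τ hτ]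
      linear_combination P τ * hdslope

theorem exists_multiset_germDvd_prod_sub (hK : IsCompact K) (hN : AnalyticOnNhd ℂ N K)
    (hN0 : ∀ τ ∈ K, ¬ ∀ᶠ z in 𝓝 τ, N z = 0) :
    ∃ s : Multiset ℂ, (∀ t ∈ s, t ∈ K ∧ N t = 0) ∧
      ∀ ξ ∈ K, GermDvd N (fun τ => (s.map (fun t => τ - t)).prod) ξ := by
  refine hK.induction_on (p := fun S => ∃ s : Multiset ℂ, (∀ t ∈ s, t ∈ K ∧ N t = 0) ∧
    ∀ ξ ∈ S, GermDvd N (fun τ => (s.map (fun t => τ - t)).prod) ξ) ⟨0, by simp, by simp⟩ ?_ ?_ ?_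
  · rintro S T hST ⟨s, hs, hdvd⟩
    exact ⟨s, hs, fun ξ hξ => hdvd ξ (hST hξ)⟩
  · rintro S T ⟨s, hs, hdvd_s⟩ ⟨t, ht, hdvd_t⟩
    refine ⟨s + t, fun x hx => (Multiset.mem_add.1 hx).elim (hs x) (ht x), ?_⟩
    simp only [Multiset.map_add, Multiset.prod_add]
    rintro ξ (hξ | hξ)
    · simpa only [mul_comm] using (hdvd_s ξ hξ).mul_left (analyticAt_multiset_prod_sub t ξ)
    · exact (hdvd_t ξ hξ).mul_left (analyticAt_multiset_prod_sub s ξ)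
  · intro ξ hξ
    obtain ⟨k, g, hg, hg0, hNg⟩ :=
      (hN ξ hξ).exists_eventuallyEq_pow_smul_nonzero_iff.2 (hN0 ξ hξ)
    have hdvd : GermDvd N (fun τ => ((Multiset.replicate k ξ).map (fun t => τ - t)).prod) ξ := by
      refine ⟨fun z => (g z)⁻¹, hg.inv hg0, ?_⟩
      filter_upwards [hNg, hg.continuousAt.eventually_ne hg0] with z hNz hgz
      rw [hNz, Multiset.map_replicate, Multiset.prod_replicate, smul_eq_mul,
        mul_inv_cancel_right₀ hgz]
    refine ⟨_, mem_nhdsWithin_of_mem_nhds hdvd.eventually, Multiset.replicate k ξ, fun t ht => ?_,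
      fun z hz => hz⟩
    obtain ⟨hk, rfl⟩ := Multiset.mem_replicate.1 ht
    exact ⟨hξ, by rw [hNg.self_of_nhds]; simp [hk]⟩

theorem exists_bezout (hK : IsCompact K) (hN : AnalyticOnNhd ℂ N K)
    (hN0 : ∀ τ ∈ K, ¬ ∀ᶠ z in 𝓝 τ, N z = 0) (hg : ∀ i, AnalyticOnNhd ℂ (g i) K)
    (hno : ∀ τ ∈ K, N τ = 0 → ∃ i, g i τ ≠ 0) :
    ∃ (α : ι → ℂ → ℂ) (β : ℂ → ℂ), (∀ i, AnalyticOnNhd ℂ (α i) K) ∧ AnalyticOnNhd ℂ β K ∧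
      ∀ τ ∈ K, ∑ i, α i τ * g i τ + β τ * N τ = 1 := by
  obtain ⟨s, hs, hdvd⟩ := exists_multiset_germDvd_prod_sub hK hN hN0
  obtain ⟨α, β, hα, hβ, hbezout⟩ := exists_bezout_multiset_prod_sub hg s fun t ht =>
    ⟨(hs t ht).1, hno t (hs t ht).1 (hs t ht).2⟩
  obtain ⟨Q, hQ, hNQ⟩ := GermDvd.exists_analyticOnNhd_quotient hN hN0 hdvd
  refine ⟨α, fun z => β z * Q z, hα, fun τ hτ => (hβ τ hτ).fun_mul (hQ τ hτ), fun τ hτ => ?_⟩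
  rw [← hbezout τ hτ, hNQ τ hτ, mul_comm (N τ), mul_assoc]

end Bezout

theorem GermDvd.sum {E : Type*} [NormedAddCommGroup E] [NormedSpace ℂ E] {ι : Type*} {N : E → ℂ}
    {T : ι → E → ℂ} {q : E} (s : Finset ι) (h : ∀ i ∈ s, GermDvd N (T i) q) :
    GermDvd N (fun p => ∑ i ∈ s, T i p) q := by
  classical
  induction s using Finset.induction_on with
  | empty => exact ⟨fun _ => 0, analyticAt_const, by simp⟩
  | insert i s hi ih =>
    simp only [Finset.sum_insert hi]
    exact (h i (Finset.mem_insert_self i s)).add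
      (ih fun j hj => h j (Finset.mem_insert_of_mem hj))

/-! ### Proportionality modulo a germ -/

section Proportionality

variable {E : Type*} [NormedAddCommGroup E] [NormedSpace ℂ E] {ι : Type*}
  {G c c' : E → ℂ} {g κ : ι → E → ℂ} {e : E} {r : ℝ} {q x : E}

/-- The germ at `x` of the vector `κ` is `c` times the vector `g` modulo `G`. -/
def IsFactorMod (G : E → ℂ) (g κ : ι → E → ℂ) (c : E → ℂ) (x : E) : Prop :=
  ∀ i, GermDvd G (fun p => κ i p - c p * g i p) x

/-- The data `G, g, κ` are holomorphic at `x`, the `2 × 2` minors of `(κ, g)` are divisible by `G`,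
and `x` is not a common zero of `G` and `g`. -/
structure MinorsDvdAt (G : E → ℂ) (g κ : ι → E → ℂ) (x : E) : Prop where
  analytic : AnalyticAt ℂ G x
  analytic_left : ∀ i, AnalyticAt ℂ (g i) x
  analytic_right : ∀ i, AnalyticAt ℂ (κ i) x
  dvd : ∀ i j, GermDvd G (fun p => κ i p * g j p - κ j p * g i p) x
  exists_ne_zero : G x = 0 → ∃ i, g i x ≠ 0

/-- A disc in direction `e` suitable for division by `G` along which `MinorsDvdAt` holds. -/
structure MinorsDvdDisc (G : E → ℂ) (g κ : ι → E → ℂ) (e : E) (r : ℝ) (q : E) : Prop where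
  division : DivisionDisc G e r q
  minors : ∀ τ : ℂ, ‖τ‖ ≤ r → MinorsDvdAt G g κ (q + τ • e)

theorem IsFactorMod.congr (h : IsFactorMod G g κ c x) (hc : ∀ᶠ p in 𝓝 x, c' p = c p) :
    IsFactorMod G g κ c' x := fun i =>
  (h i).congr <| by filter_upwards [hc] with p hp; rw [hp]

theorem MinorsDvdAt.eventually [Finite ι] (h : MinorsDvdAt G g κ x) :
    ∀ᶠ y in 𝓝 x, MinorsDvdAt G g κ y := by
  have hne : ∀ᶠ y in 𝓝 x, G y = 0 → ∃ i, g i y ≠ 0 := by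
    by_cases hG : G x = 0
    · obtain ⟨i, hi⟩ := h.exists_ne_zero hG
      filter_upwards [(h.analytic_left i).continuousAt.eventually_ne hi] with y hy _ using ⟨i, hy⟩
    · filter_upwards [h.analytic.continuousAt.eventually_ne hG] with y hy hy0 using absurd hy0 hy
  filter_upwards [h.analytic.eventually_analyticAt,
    eventually_all.2 fun i => (h.analytic_left i).eventually_analyticAt,
    eventually_all.2 fun i => (h.analytic_right i).eventually_analyticAt,
    eventually_all.2 fun i => eventually_all.2 fun j => (h.dvd i j).eventually, hne]
    with y hG hg hκ hdvd hy using ⟨hG, hg, hκ, hdvd, hy⟩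

theorem MinorsDvdDisc.eventually [Finite ι] (h : MinorsDvdDisc G g κ e r q) :
    ∀ᶠ p in 𝓝 q, MinorsDvdDisc G g κ e r p := by
  have hminors := eventually_forall_norm_le_add_smul fun τ hτ => (h.minors τ hτ).eventually
  filter_upwards [h.division.eventually, hminors] with p hdiv hp using ⟨hdiv, hp⟩

/-- Modulo `G` the vector `α` is a left inverse of `g` up to the unit `∑ αᵢ gᵢ + β G`. -/
theorem MinorsDvdAt.isFactorMod_of_bezout [Fintype ι] (h : MinorsDvdAt G g κ x) {α : ι → E → ℂ}
    {β : E → ℂ} (hα : ∀ i, AnalyticAt ℂ (α i) x) (hβ : AnalyticAt ℂ β x)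
    (hx : ∑ i, α i x * g i x + β x * G x ≠ 0) :
    AnalyticAt ℂ (fun p => (∑ i, α i p * κ i p) / (∑ i, α i p * g i p + β p * G p)) x ∧
    IsFactorMod G g κ (fun p => (∑ i, α i p * κ i p) / (∑ i, α i p * g i p + β p * G p)) x := by
  let D : E → ℂ := fun p => ∑ i, α i p * g i p + β p * G p
  have hD : AnalyticAt ℂ D x := AnalyticAt.fun_add
    (Finset.analyticAt_fun_sum _ fun i _ => (hα i).fun_mul (h.analytic_left i))
    (hβ.fun_mul h.analytic)
  refine ⟨(Finset.analyticAt_fun_sum _ fun i _ =>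
    (hα i).fun_mul (h.analytic_right i)).fun_div hD hx, fun j => ?_⟩
  have hdvd : GermDvd G (fun p => ∑ i, α i p * (κ j p * g i p - κ i p * g j p) +
      G p * (β p * κ j p)) x :=
    (GermDvd.sum _ fun i _ => (h.dvd j i).mul_left (hα i)).add
      (GermDvd.self_mul (hβ.fun_mul (h.analytic_right j)))
  refine (hdvd.mul_left (hD.inv hx)).congr ?_
  filter_upwards [hD.continuousAt.eventually_ne hx] with p hp
  have hexpand : ∑ i, α i p * (κ j p * g i p - κ i p * g j p) + G p * (β p * κ j p) =
      κ j p * D p - (∑ i, α i p * κ i p) * g j p := by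
    simp only [D, mul_add, Finset.mul_sum, Finset.sum_mul, mul_sub, Finset.sum_sub_distrib,
      mul_left_comm (κ j p), mul_assoc]
    ring
  rw [hexpand, Pi.inv_apply, mul_sub, mul_comm (κ j p), inv_mul_cancel_left₀ hp]
  ring

theorem DivisionDisc.not_eventually_eq_zero (h : DivisionDisc G e r q) {τ : ℂ} (hτ : ‖τ‖ ≤ r) :
    ¬ ∀ᶠ z in 𝓝 τ, G (q + z • e) = 0 := by
  intro hzero
  have hline : AnalyticOnNhd ℂ (fun z : ℂ => G (q + z • e)) (Metric.closedBall 0 r) :=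
    fun ξ hξ => analyticAt_line (h.analytic ξ (by simpa using hξ))
  have heq := hline.eqOn_zero_of_preconnected_of_eventuallyEq_zero
    (convex_closedBall (0 : ℂ) r).isPreconnected (by simpa using hτ) hzero
  exact h.ne_zero r (by simp [h.pos.le]) (heq (by simp [abs_of_pos h.pos]))

theorem MinorsDvdDisc.exists_isFactorMod [Finite ι] (h : MinorsDvdDisc G g κ e r q) (he : e ≠ 0) :
    ∃ c : E → ℂ, AnalyticOnDisc e r q c ∧
      ∀ τ : ℂ, ‖τ‖ ≤ r → IsFactorMod G g κ c (q + τ • e) := by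
  cases nonempty_fintype ι
  obtain ⟨l, hl⟩ := SeparatingDual.exists_eq_one (R := ℂ) he
  obtain ⟨α, β, hα, hβ, hbezout⟩ := exists_bezout (N := fun τ : ℂ => G (q + τ • e))
    (g := fun i τ => g i (q + τ • e)) (isCompact_closedBall (0 : ℂ) r)
    (fun τ hτ => analyticAt_line (h.division.analytic τ (mem_closedBall_zero_iff.1 hτ)))
    (fun τ hτ => h.division.not_eventually_eq_zero (mem_closedBall_zero_iff.1 hτ))
    (fun i τ hτ => analyticAt_line ((h.minors τ (mem_closedBall_zero_iff.1 hτ)).analytic_left i))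
    (fun τ hτ => (h.minors τ (mem_closedBall_zero_iff.1 hτ)).exists_ne_zero)
  simp only [AnalyticOnNhd, mem_closedBall_zero_iff] at hα hβ hbezout
  have hcoord (τ : ℂ) : l (q + τ • e - q) = τ := by simp [hl]
  have hextend {φ : ℂ → ℂ} {τ : ℂ} (hφ : AnalyticAt ℂ φ τ) :
      AnalyticAt ℂ (fun x => φ (l (x - q))) (q + τ • e) :=
    AnalyticAt.fun_comp (by rwa [hcoord]) ((l.analyticAt _).fun_comp (by fun_prop))
  have hfactor (τ : ℂ) (hτ : ‖τ‖ ≤ r) := (h.minors τ hτ).isFactorMod_of_bezout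
    (fun i => hextend (hα i τ hτ)) (hextend (hβ τ hτ))
    (by simp only [hcoord, hbezout τ hτ, ne_eq, one_ne_zero, not_false_eq_true])
  exact ⟨_, fun τ hτ => (hfactor τ hτ).1, fun τ hτ => (hfactor τ hτ).2⟩

theorem MinorsDvdDisc.discRemainder_eq_of_isFactorMod (h : MinorsDvdDisc G g κ e r q)
    (hc : AnalyticOnDisc e r q c) (hc' : AnalyticOnDisc e r q c')
    (hfactor : ∀ τ : ℂ, ‖τ‖ ≤ r → IsFactorMod G g κ c (q + τ • e))
    (hfactor' : ∀ τ : ℂ, ‖τ‖ ≤ r → IsFactorMod G g κ c' (q + τ • e)) :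
    discRemainder G e r c q = discRemainder G e r c' q := by
  rw [← sub_eq_zero, ← h.division.discRemainder_sub hc hc']
  refine h.division.discRemainder_eq_zero fun τ hτ => GermDvd.line (T := fun p => c p - c' p) ?_
  by_cases hG : G (q + τ • e) = 0
  · obtain ⟨j, hj⟩ := (h.minors τ hτ).exists_ne_zero hG
    have hg := (h.minors τ hτ).analytic_left j
    refine (((hfactor' τ hτ j).sub (hfactor τ hτ j)).mul_left (hg.inv hj)).congr ?_
    filter_upwards [hg.continuousAt.eventually_ne hj] with x hx
    rw [Pi.inv_apply]
    field_simp
    ring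
  · exact .of_ne_zero (h.minors τ hτ).analytic ((hc τ hτ).fun_sub (hc' τ hτ)) hG

/-- Factors on a disc are unique modulo `G`, so their remainders glue. -/
theorem exists_forall_minorsDvdDisc_isFactorMod [Finite ι] (G : E → ℂ) (g κ : ι → E → ℂ)
    (he : e ≠ 0) (r : ℝ) :
    ∃ ρ : E → ℂ, ∀ q, MinorsDvdDisc G g κ e r q → AnalyticAt ℂ ρ q ∧ IsFactorMod G g κ ρ q := by
  choose! c hc hfactor using fun q (h : MinorsDvdDisc G g κ e r q) => h.exists_isFactorMod he
  refine ⟨fun q => discRemainder G e r (c q) q, fun q hq => ?_⟩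
  have hlocal : ∀ᶠ p in 𝓝 q, discRemainder G e r (c p) p = discRemainder G e r (c q) p := by
    have hfactor_q := eventually_forall_norm_le_add_smul
      (P := fun x => IsFactorMod G g κ (c q) x) fun τ hτ =>
        eventually_all.2 fun j => (hfactor q hq τ hτ j).eventually
    filter_upwards [hq.eventually, (hc q hq).eventually, hfactor_q] with p hp hcp hfactor_p
    exact hp.discRemainder_eq_of_isFactorMod (hc p hp) hcp (hfactor p hp) hfactor_p
  refine ⟨(hq.division.analyticAt_discRemainder (hc q hq)).congr
    (hlocal.mono fun p hp => hp.symm), IsFactorMod.congr (fun j => ?_) hlocal⟩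
  have hcentre : ‖(0 : ℂ)‖ ≤ r := by simpa using hq.division.pos.le
  have hcj := hfactor q hq 0 hcentre j
  have hgj := (hq.minors 0 hcentre).analytic_left j
  rw [zero_smul, add_zero] at hcj hgj
  refine (hcj.add (GermDvd.self_mul ((hq.division.analyticAt_discQuotient (hc q hq)).fun_mul
    hgj))).congr (Eventually.of_forall fun p => ?_)
  rw [discRemainder]
  ring

/-- Hartogs extension: average over circles in a direction `b` for which the plane spanned by `b`
and `e` avoids `S` away from the line `ℂ e`. -/
theorem exists_analyticAt_eq_of_dimH_lt [FiniteDimensional ℂ E] {S : Set E} {d : ℕ}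
    (hS : dimH S < d) (hd : d + 4 ≤ 2 * Module.finrank ℂ E) {ρ : E → ℂ}
    (hρ : ∀ᶠ p in 𝓝 0, (∀ τ : ℂ, p + τ • e ∉ S) → AnalyticAt ℂ ρ p) :
    ∃ C : E → ℂ, AnalyticAt ℂ C 0 ∧ ∃ A : Set E, Dense A ∧
      (∀ p ∈ A, ∀ τ : ℂ, p + τ • e ∈ A) ∧ (∀ p ∈ A, p ∉ S) ∧
      ∀ᶠ p in 𝓝 0, p ∈ A → ∀ᶠ q in 𝓝 p, C q = ρ q := by
  obtain ⟨b, hb⟩ := exists_forall_smul_add_smul_notMem hS hd e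
  obtain ⟨δ, hδ, hδρ⟩ : ∃ δ > 0, ∀ ξ : ℂ, ‖ξ‖ ≤ δ →
      ∀ᶠ p in 𝓝 (0 + ξ • b), (∀ τ : ℂ, p + τ • e ∉ S) → AnalyticAt ℂ ρ p := by
    have htendsto : Tendsto (fun ξ : ℂ => (0 : E) + ξ • b) (𝓝 0) (𝓝 0) :=
      Continuous.tendsto' (by fun_prop) _ _ (by simp)
    simpa only [mem_closedBall_zero_iff] using Metric.nhds_basis_closedBall.eventually_iff.1
      (htendsto.eventually (eventually_eventually_nhds.2 hρ))
  let C : E → ℂ := fun p => Real.circleAverage (fun ξ => ρ (p + ξ • b)) 0 δ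
  have hC : AnalyticAt ℂ C 0 := by
    refine analyticAt_circleAverage_comp_add_smul fun ξ hξ => ?_
    rw [abs_of_pos hδ] at hξ
    have hξ0 : ξ ≠ 0 := norm_pos_iff.1 (hξ ▸ hδ)
    exact (hδρ ξ hξ.le).self_of_nhds fun τ => by simpa using hb ξ τ hξ0
  refine ⟨C, hC, _, dense_forall_add_smul_add_smul_notMem hS hd e b, fun p hp τ ξ τ' => ?_,
    fun p hp => by simpa using hp 0 0, ?_⟩
  · simpa only [show p + τ • e + ξ • b + τ' • e = p + ξ • b + (τ + τ') • e by module]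
      using hp ξ (τ + τ')
  · filter_upwards [eventually_forall_norm_le_add_smul hδρ] with p hp hpA
    filter_upwards [eventually_forall_norm_le_add_smul fun ξ hξ =>
      (hp ξ hξ fun τ => hpA ξ τ).eventually_analyticAt] with q hq
    have hmean : DiffContOnCl ℂ (fun ξ : ℂ => ρ (q + ξ • b)) (Metric.ball 0 |δ|) := by
      refine DifferentiableOn.diffContOnCl fun ξ hξ => ?_
      rw [abs_of_pos hδ, closure_ball _ hδ.ne', mem_closedBall_zero_iff] at hξ
      exact (analyticAt_line (hq ξ hξ)).differentiableAt.differentiableWithinAt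
    simpa using hmean.circleAverage

theorem exists_isFactorMod_of_dimH_lt [Finite ι] [FiniteDimensional ℂ E]
    (hG : AnalyticAt ℂ G 0) (hG0 : G 0 = 0) (hGne : ¬ ∀ᶠ p in 𝓝 0, G p = 0)
    (hg : ∀ i, AnalyticAt ℂ (g i) 0) (hκ : ∀ i, AnalyticAt ℂ (κ i) 0)
    (hdvd : ∀ i j, GermDvd G (fun p => κ i p * g j p - κ j p * g i p) 0)
    {U : Set E} (hU : U ∈ 𝓝 0) {d : ℕ} (hdim : dimH ({p | G p = 0 ∧ ∀ i, g i p = 0} ∩ U) < d)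
    (hd : d + 4 ≤ 2 * Module.finrank ℂ E) :
    ∃ c : E → ℂ, AnalyticAt ℂ c 0 ∧ IsFactorMod G g κ c 0 := by
  obtain ⟨e, he⟩ := exists_line_not_eventually_eq_zero hG hGne
  have he0 : e ≠ 0 := by
    rintro rfl
    exact he (by simp [hG0])
  let S : Set E := {p | G p = 0 ∧ ∀ i, g i p = 0} ∩ U
  have hminors : ∀ᶠ y in 𝓝 (0 : E), y ∉ S → MinorsDvdAt G g κ y := by
    filter_upwards [hG.eventually_analyticAt,
      eventually_all.2 fun i => (hg i).eventually_analyticAt,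
      eventually_all.2 fun i => (hκ i).eventually_analyticAt,
      eventually_all.2 fun i => eventually_all.2 fun j => (hdvd i j).eventually, hU]
      with y hGy hgy hκy hdvd_y hyU hyS
    refine ⟨hGy, hgy, hκy, hdvd_y, fun hy0 => ?_⟩
    by_contra! hzero
    exact hyS ⟨⟨hy0, hzero⟩, hyU⟩
  obtain ⟨r, hdivision, -, hr⟩ := exists_divisionDisc hG he (eventually_eventually_nhds.2 hminors)
  have hdisc : ∀ᶠ p in 𝓝 (0 : E), (∀ τ : ℂ, p + τ • e ∉ S) → MinorsDvdDisc G g κ e r p := by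
    filter_upwards [hdivision.eventually, eventually_forall_norm_le_add_smul hr] with p hp hpr hpS
    exact ⟨hp, fun τ hτ => hpr τ hτ (hpS τ)⟩
  obtain ⟨ρ, hρ⟩ := exists_forall_minorsDvdDisc_isFactorMod G g κ he0 r
  obtain ⟨C, hC, A, hA, hAe, hAS, hCρ⟩ := exists_analyticAt_eq_of_dimH_lt hdim hd
    (hdisc.mono fun p hp hpS => (hρ p (hp hpS)).1)
  refine ⟨C, hC, fun i => GermDvd.of_dense_lines ((hκ i).fun_sub (hC.fun_mul (hg i))) hG he hA
    (hCρ.and hdisc) fun p hp _ τ hτ => GermDvd.line (T := fun p => κ i p - C p * g i p) ?_⟩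
  have hτS (τ' : ℂ) : p + τ • e + τ' • e ∉ S := hAS _ (hAe _ (hAe p hp τ) τ')
  exact (hρ _ (hτ.2 hτS)).2.congr (hτ.1 (hAe p hp τ)) i

end Proportionality

/-! ### Improving a first integral to high order -/

section HighOrder

variable {E : Type*} [NormedAddCommGroup E] [NormedSpace ℂ E] {ι : Type*} {G h u : E → ℂ} {q : E}
  {v : ι → E}

theorem analyticAt_fderiv_apply (hu : AnalyticAt ℂ u q) (w : E) :
    AnalyticAt ℂ (fun p => fderiv ℂ u p w) q :=
  ((ContinuousLinearMap.apply ℂ ℂ w).analyticAt _).fun_comp hu.fderiv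

theorem fderiv_fderiv_apply_comm (hu : AnalyticAt ℂ u q) (w w' : E) :
    fderiv ℂ (fun p => fderiv ℂ u p w) q w' = fderiv ℂ (fun p => fderiv ℂ u p w') q w := by
  have hsnd (w : E) : HasFDerivAt (fun p => fderiv ℂ u p w)
      ((ContinuousLinearMap.apply ℂ ℂ w).comp (fderiv ℂ (fderiv ℂ u) q)) q :=
    (ContinuousLinearMap.apply ℂ ℂ w).hasFDerivAt.comp q hu.fderiv.differentiableAt.hasFDerivAt
  rw [(hsnd w).fderiv, (hsnd w').fderiv]
  exact ContDiffAt.isSymmSndFDerivAt_of_omega hu.contDiffAt w' w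

/-- Compare the mixed second derivatives of `h`. -/
theorem germDvd_minors_of_fderiv_eq_pow_mul {κ : ι → E → ℂ} {k : ℕ} (hG : AnalyticAt ℂ G q)
    (hGne : ¬ ∀ᶠ p in 𝓝 q, G p = 0) (hh : AnalyticAt ℂ h q) (hκ : ∀ j, AnalyticAt ℂ (κ j) q)
    (hder : ∀ j, ∀ᶠ p in 𝓝 q, fderiv ℂ h p (v j) = G p ^ (k + 1) * κ j p) (i j : ι) :
    GermDvd G (fun p => κ i p * fderiv ℂ G p (v j) - κ j p * fderiv ℂ G p (v i)) q := by
  have hk : (k : ℂ) + 1 ≠ 0 := by exact_mod_cast Nat.succ_ne_zero k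
  have hsnd (i j : ι) : ∀ᶠ p in 𝓝 q, fderiv ℂ (fun p => fderiv ℂ h p (v j)) p (v i) =
      (k + 1) * G p ^ k * fderiv ℂ G p (v i) * κ j p + G p ^ (k + 1) * fderiv ℂ (κ j) p (v i) := by
    filter_upwards [eventually_eventually_nhds.2 (hder j), hG.eventually_analyticAt,
      (hκ j).eventually_analyticAt] with p hder_p hGp hκp
    rw [EventuallyEq.fderiv_eq (f := fun p => G p ^ (k + 1) * κ j p) hder_p,
      ((HasFDerivAt.pow hGp.differentiableAt.hasFDerivAt (k + 1)).fun_mul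
        hκp.differentiableAt.hasFDerivAt).fderiv]
    simp only [add_apply, smul_apply, smul_eq_mul, nsmul_eq_mul, add_tsub_cancel_right,
      Nat.cast_add, Nat.cast_one]
    ring
  let w : E → ℂ := fun p => (fderiv ℂ (κ j) p (v i) - fderiv ℂ (κ i) p (v j)) / (k + 1)
  have hw : AnalyticAt ℂ w q := ((analyticAt_fderiv_apply (hκ j) _).fun_sub
    (analyticAt_fderiv_apply (hκ i) _)).fun_div analyticAt_const hk
  refine ⟨w, hw, eventually_eq_of_mul_eq_mul (N := fun p => G p ^ k) (hG.fun_pow k)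
    (not_eventually_pow_eq_zero hGne k)
    (((hκ i).fun_mul (analyticAt_fderiv_apply hG _)).fun_sub
      ((hκ j).fun_mul (analyticAt_fderiv_apply hG _))) (hG.fun_mul hw) ?_⟩
  filter_upwards [hsnd i j, hsnd j i, hh.eventually_analyticAt] with p hij hji hhp
  have hcomm := fderiv_fderiv_apply_comm hhp (v j) (v i)
  rw [hij, hji] at hcomm
  simp only [w]
  field_simp
  linear_combination (-1) * hcomm

theorem fderiv_sub_mul_pow_div_apply {c : E → ℂ} {p : E} (hh : DifferentiableAt ℂ h p)
    (hc : DifferentiableAt ℂ c p) (hG : DifferentiableAt ℂ G p) (k : ℕ) (w : E) :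
    fderiv ℂ (fun p => h p - c p * G p ^ (k + 1) / (k + 1)) p w =
      fderiv ℂ h p w - c p * G p ^ k * fderiv ℂ G p w -
        G p ^ (k + 1) * fderiv ℂ c p w / (k + 1) := by
  have hk : (k : ℂ) + 1 ≠ 0 := by exact_mod_cast Nat.succ_ne_zero k
  have hderiv := hh.hasFDerivAt.fun_sub
    ((hc.hasFDerivAt.fun_mul (HasFDerivAt.pow hG.hasFDerivAt (k + 1))).mul_const ((k : ℂ) + 1)⁻¹)
  simp only [← div_eq_mul_inv] at hderiv
  rw [hderiv.fderiv]
  simp only [sub_apply, add_apply, smul_apply, smul_eq_mul, nsmul_eq_mul, add_tsub_cancel_right,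
    Nat.cast_add, Nat.cast_one]
  field_simp
  ring

/-- Inductively subtract `c G ^ (k + 1) / (k + 1)`, whose differential is `c G ^ k dG` modulo
`G ^ (k + 1)`. -/
theorem exists_fderiv_apply_eq_pow_mul [Finite ι] [FiniteDimensional ℂ E]
    (hG : AnalyticAt ℂ G 0) (hG0 : G 0 = 0) (hGne : ¬ ∀ᶠ p in 𝓝 0, G p = 0)
    (hh : AnalyticAt ℂ h 0)
    (hdvd : ∀ i j, GermDvd G (fun p => fderiv ℂ h p (v i) * fderiv ℂ G p (v j) -
      fderiv ℂ h p (v j) * fderiv ℂ G p (v i)) 0)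
    {U : Set E} (hU : U ∈ 𝓝 0) {d : ℕ}
    (hdim : dimH ({p | G p = 0 ∧ ∀ i, fderiv ℂ G p (v i) = 0} ∩ U) < d)
    (hd : d + 4 ≤ 2 * Module.finrank ℂ E) (k : ℕ) :
    ∃ (h' : E → ℂ) (κ : ι → E → ℂ), AnalyticAt ℂ h' 0 ∧ GermDvd G (fun p => h p - h' p) 0 ∧
      (∀ j, AnalyticAt ℂ (κ j) 0) ∧
      (∀ j, ∀ᶠ p in 𝓝 0, fderiv ℂ h' p (v j) = G p ^ k * κ j p) ∧
      ∀ i j, GermDvd G (fun p => κ i p * fderiv ℂ G p (v j) - κ j p * fderiv ℂ G p (v i)) 0 := by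
  induction k with
  | zero =>
    exact ⟨h, fun j p => fderiv ℂ h p (v j), hh, ⟨fun _ => 0, analyticAt_const, by simp⟩,
      fun j => analyticAt_fderiv_apply hh _, by simp, hdvd⟩
  | succ k ih =>
    obtain ⟨h', κ, hh', hhh', hκ, hder, hminors⟩ := ih
    obtain ⟨c, hc, hfactor⟩ := exists_isFactorMod_of_dimH_lt hG hG0 hGne
      (fun i => analyticAt_fderiv_apply hG (v i)) hκ hminors hU hdim hd
    choose κ' hκ' hκκ' using hfactor
    have hk : (k : ℂ) + 1 ≠ 0 := by exact_mod_cast Nat.succ_ne_zero k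
    let h'' : E → ℂ := fun p => h' p - c p * G p ^ (k + 1) / (k + 1)
    let κ'' : ι → E → ℂ := fun j p => κ' j p - fderiv ℂ c p (v j) / (k + 1)
    have hh'' : AnalyticAt ℂ h'' 0 :=
      hh'.fun_sub ((hc.fun_mul (hG.fun_pow _)).fun_div analyticAt_const hk)
    have hκ'' (j : ι) : AnalyticAt ℂ (κ'' j) 0 :=
      (hκ' j).fun_sub ((analyticAt_fderiv_apply hc _).fun_div analyticAt_const hk)
    have hder'' (j : ι) : ∀ᶠ p in 𝓝 0, fderiv ℂ h'' p (v j) = G p ^ (k + 1) * κ'' j p := by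
      filter_upwards [hder j, hκκ' j, hh'.eventually_analyticAt, hc.eventually_analyticAt,
        hG.eventually_analyticAt] with p hder_p hκp hhp hcp hGp
      rw [fderiv_sub_mul_pow_div_apply hhp.differentiableAt hcp.differentiableAt
        hGp.differentiableAt, hder_p]
      simp only [κ'']
      linear_combination G p ^ k * hκp
    refine ⟨h'', κ'', hh'', ?_, hκ'', hder'',
      germDvd_minors_of_fderiv_eq_pow_mul hG hGne hh'' hκ'' hder''⟩
    refine (hhh'.add (GermDvd.self_mul (S := fun p => c p * G p ^ k / (k + 1))
      ((hc.fun_mul (hG.fun_pow _)).fun_div analyticAt_const hk))).congr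
      (Eventually.of_forall fun p => ?_)
    simp only [h'', pow_succ]
    ring

end HighOrder

/-! ### Remainders of germs of high order -/

section Flat

open Asymptotics

variable {E : Type*} [NormedAddCommGroup E] [NormedSpace ℂ E] {G u u' φ : E → ℂ} {e : E}

theorem tendsto_smul_nhds_zero (e : E) : Tendsto (fun τ : ℂ => τ • e) (𝓝 0) (𝓝 0) := by
  simpa using (show Continuous fun τ : ℂ => τ • e by fun_prop).tendsto 0

theorem eventually_eq_zero_of_forall_isBigO (hφ : AnalyticAt ℂ φ 0)
    (h : ∀ M : ℕ, φ =O[𝓝 0] fun p => ‖p‖ ^ M) : ∀ᶠ p in 𝓝 0, φ p = 0 := by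
  by_contra hne
  obtain ⟨e, he⟩ := exists_line_not_eventually_eq_zero hφ hne
  obtain ⟨k, g, hg, hg0, hge⟩ := (analyticAt_line
    (by simpa using hφ)).exists_eventuallyEq_pow_smul_nonzero_iff.2 he
  obtain ⟨C, hC⟩ := ((h (k + 1)).comp_tendsto (tendsto_smul_nhds_zero e)).bound
  have hle : ∀ᶠ τ in 𝓝[≠] (0 : ℂ), ‖g τ‖ ≤ C * ‖e‖ ^ (k + 1) * ‖τ‖ := by
    filter_upwards [hC.filter_mono nhdsWithin_le_nhds, hge.filter_mono nhdsWithin_le_nhds,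
      self_mem_nhdsWithin] with τ hCτ hgτ hτ
    rw [zero_add] at hgτ
    simp only [Function.comp_apply, hgτ, sub_zero, smul_eq_mul, norm_mul, norm_pow, norm_smul,
      norm_norm] at hCτ
    refine le_of_mul_le_mul_left (hCτ.trans_eq ?_) (pow_pos (norm_pos_iff.2 hτ) k)
    ring
  have hlim : Tendsto (fun τ : ℂ => C * ‖e‖ ^ (k + 1) * ‖τ‖) (𝓝[≠] 0) (𝓝 0) := by
    have hcont : Continuous fun τ : ℂ => C * ‖e‖ ^ (k + 1) * ‖τ‖ := by fun_prop
    simpa using (hcont.tendsto 0).mono_left nhdsWithin_le_nhds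
  have hg_lim : Tendsto (fun τ => ‖g τ‖) (𝓝[≠] 0) (𝓝 ‖g 0‖) :=
    hg.continuousAt.norm.tendsto.mono_left nhdsWithin_le_nhds
  exact hg0 (norm_le_zero_iff.1 (le_of_tendsto_of_tendsto hg_lim hlim hle))

theorem circleAverage_eq_of_analyticAt_annulus {f : ℂ → ℂ} {ρ r : ℝ} (hρ : 0 < ρ) (hr : ρ ≤ r)
    (hf : ∀ τ : ℂ, ρ ≤ ‖τ‖ → ‖τ‖ ≤ r → AnalyticAt ℂ f τ) :
    Real.circleAverage f 0 r = Real.circleAverage f 0 ρ := by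
  rw [Real.circleAverage_eq_circleIntegral hρ.ne',
    Real.circleAverage_eq_circleIntegral (hρ.trans_le hr).ne']
  congr 1
  refine Complex.circleIntegral_sub_center_inv_smul_eq_of_differentiable_on_annulus_off_countable
    hρ hr Set.countable_empty ?_ ?_
  · rintro z ⟨hzr, hρz⟩
    exact (hf z (by simpa using hρz) (by simpa using hzr)).continuousAt.continuousWithinAt
  · rintro z ⟨⟨hzr, hρz⟩, -⟩
    have hρz' : ρ < ‖z‖ := by simpa using hρz
    have hzr' : ‖z‖ < r := by simpa using hzr
    exact (hf z hρz'.le hzr'.le).differentiableAt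

theorem norm_circleAverage_le {f : ℂ → ℂ} {r X : ℝ} (hr : 0 < r)
    (h : ∀ τ : ℂ, ‖τ‖ = r → ‖f τ‖ ≤ X) : ‖Real.circleAverage f 0 r‖ ≤ X := by
  have hint := intervalIntegral.norm_integral_le_of_norm_le_const (a := 0) (b := 2 * Real.pi)
    (f := fun θ => f (circleMap 0 r θ)) fun θ _ => h _ (by simp [abs_of_pos hr])
  rw [sub_zero, abs_of_pos (by positivity), mul_comm X] at hint
  rwa [Real.circleAverage, norm_smul, norm_inv, Real.norm_of_nonneg (by positivity),
    inv_mul_le_iff₀ (by positivity)]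

theorem norm_discRemainder_le {r X : ℝ} {q : E} (hr : 0 < r)
    (hu : ∀ τ : ℂ, ‖τ‖ ≤ r → ‖u (q + τ • e)‖ ≤ X)
    (hG : ∀ τ : ℂ, ‖τ‖ = r → G (q + τ • e) ≠ 0 ∧ ‖G q‖ ≤ ‖G (q + τ • e)‖) :
    ‖discRemainder G e r u q‖ ≤ 2 * X := by
  have hcentre : ‖u q‖ ≤ X := by simpa using hu 0 (by simpa using hr.le)
  have haverage : G q * discQuotient G e r u q =
      Real.circleAverage (fun τ => G q * (u (q + τ • e) / G (q + τ • e))) 0 r := by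
    rw [discQuotient, ← smul_eq_mul, ← Real.circleAverage_fun_smul]
    rfl
  have hquotient : ‖G q * discQuotient G e r u q‖ ≤ X := by
    rw [haverage]
    refine norm_circleAverage_le hr fun τ hτ => ?_
    obtain ⟨hne, hle⟩ := hG τ hτ
    calc ‖G q * (u (q + τ • e) / G (q + τ • e))‖
        = ‖u (q + τ • e)‖ * (‖G q‖ / ‖G (q + τ • e)‖) := by rw [norm_mul, norm_div]; ring
      _ ≤ X * 1 := by
        gcongr
        · exact (norm_nonneg _).trans hcentre
        · exact hu τ hτ.le
        · exact (div_le_one (norm_pos_iff.2 hne)).2 hle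
      _ = X := mul_one X
  rw [discRemainder]
  linarith [norm_sub_le (u q) (G q * discQuotient G e r u q)]

theorem discRemainder_eq_of_forall_annulus_ne_zero {r ρ : ℝ} {q : E} (hρ : 0 < ρ) (hρr : ρ ≤ r)
    (hG : AnalyticOnDisc e r q G) (hu : AnalyticOnDisc e r q u)
    (hne : ∀ τ : ℂ, ρ ≤ ‖τ‖ → ‖τ‖ ≤ r → G (q + τ • e) ≠ 0) :
    discRemainder G e r u q = discRemainder G e ρ u q := by
  rw [discRemainder, discRemainder, discQuotient, discQuotient,
    circleAverage_eq_of_analyticAt_annulus hρ hρr fun τ hρτ hτr =>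
      (analyticAt_line (hu τ hτr)).fun_div (analyticAt_line (hG τ hτr)) (hne τ hρτ hτr)]

theorem DivisionDisc.discRemainder_eq_of_germDvd_sub {r : ℝ} {q : E} (h : DivisionDisc G e r q)
    (hu : AnalyticOnDisc e r q u) (hu' : AnalyticOnDisc e r q u')
    (hd : ∀ τ : ℂ, ‖τ‖ ≤ r → GermDvd G (fun p => u p - u' p) (q + τ • e)) :
    discRemainder G e r u q = discRemainder G e r u' q := by
  rw [← sub_eq_zero, ← h.discRemainder_sub hu hu']
  exact h.discRemainder_eq_zero fun τ hτ => GermDvd.line (T := fun p => u p - u' p) (hd τ hτ)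

theorem exists_lipschitz_ball (hG : AnalyticAt ℂ G 0) : ∃ L > 0, ∃ s > 0, ∀ x y : E,
    ‖x‖ < s → ‖y‖ < s → ‖G x - G y‖ ≤ L * ‖x - y‖ := by
  obtain ⟨p, hp⟩ := hG
  obtain ⟨K, t, ht, hK⟩ := hp.hasStrictFDerivAt.exists_lipschitzOnWith
  obtain ⟨s, hs, hst⟩ := Metric.mem_nhds_iff.1 ht
  refine ⟨K + 1, by positivity, s, hs, fun x y hx hy => ?_⟩
  have hxy := hK.dist_le_mul x (hst (by simpa using hx)) y (hst (by simpa using hy))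
  rw [dist_eq_norm, dist_eq_norm] at hxy
  linarith [norm_nonneg (x - y)]

theorem exists_mul_norm_pow_le_norm (hG : AnalyticAt ℂ G 0) (hG0 : G 0 = 0)
    (he : ¬ ∀ᶠ τ in 𝓝 (0 : ℂ), G (0 + τ • e) = 0) :
    ∃ k ≠ 0, ∃ c > 0, ∀ᶠ τ in 𝓝 (0 : ℂ), c * ‖τ‖ ^ k ≤ ‖G (τ • e)‖ := by
  obtain ⟨k, g, hg, hg0, hge⟩ := (analyticAt_line
    (by simpa using hG)).exists_eventuallyEq_pow_smul_nonzero_iff.2 he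
  have hk : k ≠ 0 := by
    rintro rfl
    exact hg0 (by simpa [hG0] using hge.self_of_nhds.symm)
  have hpos : 0 < ‖g 0‖ := norm_pos_iff.2 hg0
  have hlow : ∀ᶠ τ in 𝓝 (0 : ℂ), ‖g 0‖ / 2 < ‖g τ‖ :=
    hg.continuousAt.norm.eventually (lt_mem_nhds (half_lt_self hpos))
  refine ⟨k, hk, ‖g 0‖ / 2, half_pos hpos, ?_⟩
  filter_upwards [hlow, hge] with τ hτ hgτ
  rw [zero_add] at hgτ
  rw [hgτ, sub_zero, norm_smul, norm_pow, mul_comm]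
  gcongr

/-- `G` vanishes at `0` to some order `k` along `e`, so moving by `τ • e` beats a perturbation `p`
of size `O(‖τ‖ ^ k)`. -/
theorem exists_eventually_norm_le_norm_add_smul (hG : AnalyticAt ℂ G 0) (hG0 : G 0 = 0)
    (he : ¬ ∀ᶠ τ in 𝓝 (0 : ℂ), G (0 + τ • e) = 0) :
    ∃ k ≠ 0, ∃ B > 0, ∀ᶠ τ in 𝓝[≠] (0 : ℂ), ∀ p, ‖p‖ ≤ B * ‖τ‖ ^ k →
      G (p + τ • e) ≠ 0 ∧ ‖G p‖ ≤ ‖G (p + τ • e)‖ := by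
  obtain ⟨k, hk, c, hc, hlow⟩ := exists_mul_norm_pow_le_norm hG hG0 he
  obtain ⟨L, hL, s, hs, hlip⟩ := exists_lipschitz_ball hG
  refine ⟨k, hk, c / (2 * L), by positivity, ?_⟩
  have hsmall : ∀ᶠ τ in 𝓝 (0 : ℂ), c / (2 * L) * ‖τ‖ ^ k + ‖τ • e‖ < s := by
    have hcont : Continuous fun τ : ℂ => c / (2 * L) * ‖τ‖ ^ k + ‖τ • e‖ := by fun_prop
    exact hcont.continuousAt.eventually (gt_mem_nhds (by simpa [hk] using hs))
  filter_upwards [hlow.filter_mono nhdsWithin_le_nhds, hsmall.filter_mono nhdsWithin_le_nhds,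
    self_mem_nhdsWithin] with τ hlowτ hsmallτ hτ p hp
  have hLp : L * ‖p‖ ≤ c * ‖τ‖ ^ k / 2 := by
    calc L * ‖p‖ ≤ L * (c / (2 * L) * ‖τ‖ ^ k) := by gcongr
      _ = c * ‖τ‖ ^ k / 2 := by field_simp
  have hτk : 0 < c * ‖τ‖ ^ k := mul_pos hc (pow_pos (norm_pos_iff.2 hτ) k)
  have hGp : ‖G p‖ ≤ L * ‖p‖ := by
    simpa [hG0] using hlip p 0 (by linarith [norm_nonneg (τ • e)]) (by simpa using hs)
  have hmove := hlip (p + τ • e) (τ • e) (by linarith [norm_add_le p (τ • e)])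
    (by linarith [norm_nonneg p])
  rw [add_sub_cancel_right] at hmove
  have hlowp : c * ‖τ‖ ^ k / 2 ≤ ‖G (p + τ • e)‖ := by
    linarith [norm_sub_norm_le (G (τ • e)) (G (p + τ • e)),
      norm_sub_rev (G (τ • e)) (G (p + τ • e))]
  exact ⟨norm_pos_iff.1 (by linarith), by linarith⟩

theorem eventually_forall_norm_le_add_smul_of_tendsto {ρ : E → ℝ} (hρ : Tendsto ρ (𝓝 0) (𝓝 0))
    {P : E → Prop} (hP : ∀ᶠ x in 𝓝 0, P x) (e : E) :
    ∀ᶠ p in 𝓝 0, ∀ τ : ℂ, ‖τ‖ ≤ ρ p → P (p + τ • e) := by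
  obtain ⟨s, hs, hball⟩ := Metric.eventually_nhds_iff.1 hP
  have hlim : Tendsto (fun p : E => ‖p‖ + ρ p * ‖e‖) (𝓝 0) (𝓝 0) := by
    simpa using (continuous_norm.tendsto (0 : E)).add (hρ.mul_const ‖e‖)
  filter_upwards [hlim.eventually (gt_mem_nhds hs)] with p hp τ hτ
  refine hball ?_
  calc dist (p + τ • e) 0 = ‖p + τ • e‖ := dist_zero_right _
    _ ≤ ‖p‖ + ‖τ • e‖ := norm_add_le _ _
    _ ≤ ‖p‖ + ρ p * ‖e‖ := by rw [norm_smul]; gcongr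
    _ < s := hp

theorem tendsto_norm_div_rpow_inv {F : Type*} [NormedAddCommGroup F] {k : ℕ} (hk : k ≠ 0) (B : ℝ) :
    Tendsto (fun p : F => (‖p‖ / B) ^ ((k : ℝ)⁻¹)) (𝓝 0) (𝓝 0) := by
  have hcont : ContinuousAt (fun p : F => (‖p‖ / B) ^ ((k : ℝ)⁻¹)) 0 :=
    ContinuousAt.rpow_const (by fun_prop) (.inr (by positivity))
  simpa [ContinuousAt, Real.zero_rpow, hk] using hcont

theorem norm_discRemainder_le_of_germDvd_sub {r ρ X : ℝ} {q : E} (hρ : 0 < ρ) (hρr : ρ ≤ r)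
    (hG : AnalyticOnDisc e r q G) (hu : AnalyticOnDisc e r q u)
    (hannulus : ∀ τ : ℂ, ρ ≤ ‖τ‖ → ‖τ‖ ≤ r →
      G (q + τ • e) ≠ 0 ∧ ‖G q‖ ≤ ‖G (q + τ • e)‖)
    (hd : ∀ τ : ℂ, ‖τ‖ ≤ ρ →
      GermDvd G (fun p => u p - u' p) (q + τ • e) ∧ AnalyticAt ℂ u' (q + τ • e))
    (hX : ∀ τ : ℂ, ‖τ‖ ≤ ρ → ‖u' (q + τ • e)‖ ≤ X) :
    ‖discRemainder G e r u q‖ ≤ 2 * X := by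
  have hdisc : DivisionDisc G e ρ q := ⟨hρ, fun τ hτ => hG τ (hτ.trans hρr),
    fun τ hτ => (hannulus τ hτ.ge (hτ.le.trans hρr)).1⟩
  rw [discRemainder_eq_of_forall_annulus_ne_zero hρ hρr hG hu fun τ hρτ hτr =>
      (hannulus τ hρτ hτr).1,
    hdisc.discRemainder_eq_of_germDvd_sub (fun τ hτ => hu τ (hτ.trans hρr))
      (fun τ hτ => (hd τ hτ).2) fun τ hτ => (hd τ hτ).1]
  exact norm_discRemainder_le hρ hX fun τ hτ => hannulus τ hτ.ge (hτ.le.trans hρr)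

/-- The remainder at `p` may be computed on the circle of radius comparable to `‖p‖ ^ (1 / k)`, on
which `u'` is small. -/
theorem DivisionDisc.isBigO_discRemainder {r B : ℝ} {k M : ℕ} (hdisc : DivisionDisc G e r 0)
    (hG0 : G 0 = 0) (hk : k ≠ 0) (hB : 0 < B)
    (hgrowth : ∀ τ : ℂ, τ ≠ 0 → ‖τ‖ ≤ r → ∀ p, ‖p‖ ≤ B * ‖τ‖ ^ k →
      G (p + τ • e) ≠ 0 ∧ ‖G p‖ ≤ ‖G (p + τ • e)‖)
    (hu : AnalyticOnDisc e r 0 u) (hu' : AnalyticAt ℂ u' 0)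
    (hd : GermDvd G (fun p => u p - u' p) 0) (hO : u' =O[𝓝 0] fun p => ‖p‖ ^ (k * M)) :
    discRemainder G e r u =O[𝓝 0] fun p => ‖p‖ ^ M := by
  let ρ : E → ℝ := fun p => (‖p‖ / B) ^ ((k : ℝ)⁻¹)
  have hρ_lim : Tendsto ρ (𝓝 0) (𝓝 0) := tendsto_norm_div_rpow_inv hk B
  obtain ⟨K, hK0, hK⟩ := hO.exists_pos
  have hsmall := hρ_lim.eventually (gt_mem_nhds (lt_min one_pos hdisc.pos))
  refine IsBigO.of_bound (2 * (K * ((B + ‖e‖) ^ k / B) ^ M)) ?_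
  filter_upwards [hdisc.eventually, hu.eventually, hsmall,
    eventually_forall_norm_le_add_smul_of_tendsto hρ_lim
      (hd.eventually.and (hu'.eventually_analyticAt.and hK.bound)) e] with p hGp hup hρp hnear
  rcases eq_or_ne p 0 with rfl | hp
  · obtain ⟨w, -, hw⟩ := hd
    have hu0 : u 0 = u' 0 := by simpa [hG0, sub_eq_zero] using hw.self_of_nhds
    have hle : ‖u' 0‖ ≤ K * ‖(0 : E)‖ ^ (k * M) := by simpa using hK.bound.self_of_nhds
    rcases eq_or_ne M 0 with rfl | hM
    · simpa [discRemainder, hG0, hu0] using hle.trans (by simp; linarith)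
    · simpa [discRemainder, hG0, hu0, hM, hk] using hle
  have hρ0 : 0 < ρ p := Real.rpow_pos_of_pos (div_pos (norm_pos_iff.2 hp) hB) _
  have hρk : ρ p ^ k = ‖p‖ / B := Real.rpow_inv_natCast_pow (by positivity) hk
  obtain ⟨hρ1, hρr⟩ := lt_min_iff.1 hρp
  have hannulus (τ : ℂ) (hρτ : ρ p ≤ ‖τ‖) (hτr : ‖τ‖ ≤ r) :
      G (p + τ • e) ≠ 0 ∧ ‖G p‖ ≤ ‖G (p + τ • e)‖ := by
    refine hgrowth τ (norm_pos_iff.1 (hρ0.trans_le hρτ)) hτr p ?_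
    calc ‖p‖ = B * ρ p ^ k := by rw [hρk]; field_simp
      _ ≤ B * ‖τ‖ ^ k := by gcongr
  have hpρ : ‖p‖ ≤ B * ρ p := by
    calc ‖p‖ = B * ρ p ^ k := by rw [hρk]; field_simp
      _ ≤ B * ρ p := by gcongr; exact pow_le_of_le_one hρ0.le hρ1.le hk
  have hbound (τ : ℂ) (hτ : ‖τ‖ ≤ ρ p) :
      ‖u' (p + τ • e)‖ ≤ K * ((B + ‖e‖) ^ k / B) ^ M * ‖p‖ ^ M := by
    have hnorm : ‖p + τ • e‖ ≤ (B + ‖e‖) * ρ p := by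
      calc ‖p + τ • e‖ ≤ ‖p‖ + ‖τ • e‖ := norm_add_le _ _
        _ ≤ B * ρ p + ρ p * ‖e‖ := by rw [norm_smul]; gcongr
        _ = (B + ‖e‖) * ρ p := by ring
    calc ‖u' (p + τ • e)‖ ≤ K * ‖p + τ • e‖ ^ (k * M) := by simpa using (hnear τ hτ).2.2
      _ ≤ K * ((B + ‖e‖) * ρ p) ^ (k * M) := by gcongr
      _ = K * ((B + ‖e‖) ^ k / B) ^ M * ‖p‖ ^ M := by
        rw [pow_mul, mul_pow (B + ‖e‖), hρk, mul_div_assoc', mul_div_right_comm, mul_pow,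
          mul_assoc]
  rw [norm_pow, norm_norm, mul_assoc]
  exact norm_discRemainder_le_of_germDvd_sub hρ0 hρr.le hGp.analytic hup hannulus
    (fun τ hτ => ⟨(hnear τ hτ).1, (hnear τ hτ).2.1⟩) hbound

theorem exists_divisionDisc_forall_isBigO_discRemainder (hG : AnalyticAt ℂ G 0) (hG0 : G 0 = 0)
    (he : ¬ ∀ᶠ τ in 𝓝 (0 : ℂ), G (0 + τ • e) = 0) {P : E → Prop} (hP : ∀ᶠ x in 𝓝 0, P x) :
    ∃ (r : ℝ) (k : ℕ), DivisionDisc G e r 0 ∧ (∀ τ : ℂ, ‖τ‖ ≤ r → P (0 + τ • e)) ∧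
      ∀ (u u' : E → ℂ) (M : ℕ), AnalyticOnDisc e r 0 u → AnalyticAt ℂ u' 0 →
        GermDvd G (fun p => u p - u' p) 0 → (u' =O[𝓝 0] fun p => ‖p‖ ^ (k * M)) →
        discRemainder G e r u =O[𝓝 0] fun p => ‖p‖ ^ M := by
  obtain ⟨k, hk, B, hB, hgrowth⟩ := exists_eventually_norm_le_norm_add_smul hG hG0 he
  obtain ⟨δ, hδ, hball⟩ := Metric.eventually_nhds_iff.1 (eventually_nhdsWithin_iff.1 hgrowth)
  obtain ⟨s, hdisc, hne, hs⟩ := exists_divisionDisc hG he hP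
  let r : ℝ := min s (δ / 2)
  have hr : 0 < r := lt_min hdisc.pos (half_pos hδ)
  have hrs : r ≤ s := min_le_left _ _
  have hrδ : r < δ := (min_le_right _ _).trans_lt (half_lt_self hδ)
  have hdisc' : DivisionDisc G e r 0 := ⟨hr, fun τ hτ => hdisc.analytic τ (hτ.trans hrs),
    fun τ hτ => hne τ (norm_pos_iff.1 (hr.trans_eq hτ.symm)) (hτ.le.trans hrs)⟩
  exact ⟨r, k, hdisc', fun τ hτ => hs τ (hτ.trans hrs), fun u u' M =>
    hdisc'.isBigO_discRemainder hG0 hk hB fun τ hτ hτr =>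
      hball (by simpa using hτr.trans_lt hrδ) hτ⟩

end Flat

/-! ### First integrals depending on fewer variables -/

section Split

open Asymptotics

variable {E : Type*} [NormedAddCommGroup E] [NormedSpace ℂ E] {ι : Type*} {G h : E → ℂ}
  {P : E →L[ℂ] E} {v : ι → E} {l : ι → E →L[ℂ] ℂ}

theorem isBigO_norm_pow_of_eq_pow_mul {κ u : E → ℂ} {N : ℕ} (hG : AnalyticAt ℂ G 0)
    (hG0 : G 0 = 0) (hκ : AnalyticAt ℂ κ 0) (hu : ∀ᶠ p in 𝓝 0, u p = G p ^ N * κ p) :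
    u =O[𝓝 0] fun p => ‖p‖ ^ N := by
  have hGO : G =O[𝓝 0] fun p => ‖p‖ := by
    simpa [hG0] using hG.differentiableAt.isBigO_sub.norm_right
  have hmul := (hGO.pow N).mul (hκ.continuousAt.isBigO_one ℝ)
  simp only [mul_one] at hmul
  exact hmul.congr' (hu.mono fun p hp => hp.symm) (Eventually.of_forall fun _ => rfl)

theorem norm_sub_le_of_norm_fderiv_segment_le {x y : E} {C : ℝ}
    (hh : ∀ z ∈ segment ℝ x y, DifferentiableAt ℂ h z)
    (hC : ∀ z ∈ segment ℝ x y, ‖fderiv ℂ h z (y - x)‖ ≤ C) : ‖h y - h x‖ ≤ C := by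
  have hmem {t : ℝ} (ht : t ∈ Set.Icc (0 : ℝ) 1) : AffineMap.lineMap x y t ∈ segment ℝ x y :=
    segment_eq_image_lineMap ℝ x y ▸ Set.mem_image_of_mem _ ht
  have hderiv (t : ℝ) (ht : t ∈ Set.Icc (0 : ℝ) 1) :
      HasDerivWithinAt (fun t : ℝ => h (AffineMap.lineMap x y t))
        (fderiv ℂ h (AffineMap.lineMap x y t) (y - x)) (Set.Icc 0 1) t :=
    (((hh _ (hmem ht)).hasFDerivAt.restrictScalars ℝ).comp_hasDerivAt t
      AffineMap.hasDerivAt_lineMap).hasDerivWithinAt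
  simpa using norm_image_sub_le_of_norm_deriv_le_segment_01' hderiv fun t ht =>
    hC _ (hmem ⟨ht.1, ht.2.le⟩)

variable [Fintype ι]

theorem norm_map_sum_smul_le (D : E →L[ℂ] ℂ) (p : E) :
    ‖D (∑ j, l j p • v j)‖ ≤ (∑ j, ‖l j‖ * ‖D (v j)‖) * ‖p‖ := by
  rw [map_sum, Finset.sum_mul]
  refine (norm_sum_le _ _).trans (Finset.sum_le_sum fun j _ => ?_)
  rw [map_smul, norm_smul, mul_right_comm]
  gcongr
  exact (l j).le_opNorm p

theorem isBigO_sub_comp_of_fderiv_isBigO (hP : ∀ p, p = P p + ∑ j, l j p • v j) {N : ℕ}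
    (hh : AnalyticAt ℂ h 0)
    (hder : ∀ j, (fun p => fderiv ℂ h p (v j)) =O[𝓝 0] fun p => ‖p‖ ^ N) :
    (fun p => h p - h (P p)) =O[𝓝 0] fun p => ‖p‖ ^ N := by
  have hsum : (fun p => ∑ j, ‖l j‖ * ‖fderiv ℂ h p (v j)‖) =O[𝓝 0] fun p => ‖p‖ ^ N :=
    IsBigO.fun_sum fun j _ => (hder j).norm_left.const_mul_left _
  obtain ⟨C, hC0, hC⟩ := hsum.exists_pos
  obtain ⟨s, hs, hball⟩ := Metric.eventually_nhds_iff.1 (hC.bound.and hh.eventually_analyticAt)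
  let A : ℝ := max 1 ‖P‖
  have hsmall : ∀ᶠ p : E in 𝓝 0, ‖p‖ < 1 ∧ A * ‖p‖ < s :=
    ((continuous_norm.tendsto (0 : E)).eventually (gt_mem_nhds (by simp))).and
      ((show Continuous fun p : E => A * ‖p‖ by fun_prop).continuousAt.eventually
        (gt_mem_nhds (by simpa using hs)))
  refine IsBigO.of_bound (C * A ^ N) ?_
  filter_upwards [hsmall] with p ⟨hp1, hps⟩
  have hdiff : p - P p = ∑ j, l j p • v j := sub_eq_of_eq_add' (hP p)
  have hsegment : segment ℝ (P p) p ⊆ Metric.closedBall 0 (A * ‖p‖) :=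
    (convex_closedBall 0 _).segment_subset
      (mem_closedBall_zero_iff.2 (P.le_of_opNorm_le (le_max_right _ _) p))
      (mem_closedBall_zero_iff.2 (le_mul_of_one_le_left (norm_nonneg p) (le_max_left _ _)))
  have hz {z : E} (hz : z ∈ segment ℝ (P p) p) : ‖z‖ ≤ A * ‖p‖ :=
    mem_closedBall_zero_iff.1 (hsegment hz)
  have hzs {z : E} (hz' : z ∈ segment ℝ (P p) p) : dist z 0 < s :=
    (dist_zero_right z).trans_lt ((hz hz').trans_lt hps)
  refine norm_sub_le_of_norm_fderiv_segment_le
    (fun z hz' => (hball (hzs hz')).2.differentiableAt) fun z hz' => ?_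
  calc ‖fderiv ℂ h z (p - P p)‖
      ≤ (∑ j, ‖l j‖ * ‖fderiv ℂ h z (v j)‖) * ‖p‖ := hdiff ▸ norm_map_sum_smul_le _ p
    _ ≤ (C * ‖‖z‖ ^ N‖) * 1 := by
      gcongr
      exact (le_abs_self _).trans (hball (hzs hz')).1
    _ ≤ C * (A * ‖p‖) ^ N := by
      rw [mul_one, norm_pow, norm_norm]
      have := hz hz'
      gcongr
    _ = C * A ^ N * ‖‖p‖ ^ N‖ := by rw [mul_pow, norm_pow, norm_norm, mul_assoc]

theorem eventually_eq_comp_of_forall_isBigO {f : E → ℂ} (hf : AnalyticAt ℂ f 0)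
    (hPP : ∀ p, P (P p) = P p)
    (h : ∀ M : ℕ, ∃ φ : E → ℂ, (fun p => f p - φ (P p)) =O[𝓝 0] fun p => ‖p‖ ^ M) :
    ∀ᶠ p in 𝓝 0, f p = f (P p) := by
  have hfP : AnalyticAt ℂ (fun p => f (P p)) 0 :=
    AnalyticAt.fun_comp (by simpa using hf) (P.analyticAt 0)
  refine (eventually_eq_zero_of_forall_isBigO (hf.fun_sub hfP) fun M => ?_).mono
    fun p hp => sub_eq_zero.1 hp
  obtain ⟨φ, hφ⟩ := h M
  have hPlim : Tendsto P (𝓝 0) (𝓝 0) := by simpa using P.continuous.tendsto 0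
  have hPO : (fun p => ‖P p‖ ^ M) =O[𝓝 0] fun p => ‖p‖ ^ M :=
    ((P.isBigO_id (𝓝 0)).norm_norm).pow M
  refine (hφ.sub ((hφ.comp_tendsto hPlim).trans hPO)).congr_left fun p => ?_
  simp only [Function.comp_apply, hPP, sub_sub_sub_cancel_right]

theorem DivisionDisc.discRemainder_sub_of_invariant {N T : E → ℂ} {e q : E} {r : ℝ}
    (hdisc : DivisionDisc G e r q) (hT : AnalyticOnDisc e r q T) (hN : AnalyticOnDisc e r q N)
    (hinv : ∀ τ : ℂ, N (q + τ • e) = N q) :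
    discRemainder G e r (fun p => T p - N p) q =
      discRemainder G e r T q - N q * discRemainder G e r (fun _ => 1) q := by
  rw [hdisc.discRemainder_sub hT hN, ← discRemainder_mul_of_invariant hinv]
  simp only [mul_one]

variable [FiniteDimensional ℂ E] {U : Set E} {d : ℕ}

theorem exists_germDvd_sub_and_isBigO_sub_comp (hP : ∀ p, p = P p + ∑ j, l j p • v j)
    (hG : AnalyticAt ℂ G 0) (hG0 : G 0 = 0) (hGne : ¬ ∀ᶠ p in 𝓝 0, G p = 0)
    (hh : AnalyticAt ℂ h 0)
    (hdvd : ∀ i j, GermDvd G (fun p => fderiv ℂ h p (v i) * fderiv ℂ G p (v j) -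
      fderiv ℂ h p (v j) * fderiv ℂ G p (v i)) 0)
    (hU : U ∈ 𝓝 0) (hdim : dimH ({p | G p = 0 ∧ ∀ i, fderiv ℂ G p (v i) = 0} ∩ U) < d)
    (hd : d + 4 ≤ 2 * Module.finrank ℂ E) (N : ℕ) :
    ∃ h' : E → ℂ, AnalyticAt ℂ h' 0 ∧ GermDvd G (fun p => h p - h' p) 0 ∧
      (fun p => h' p - h' (P p)) =O[𝓝 0] fun p => ‖p‖ ^ N := by
  obtain ⟨h', κ, hh', hhh', hκ, hder, -⟩ :=
    exists_fderiv_apply_eq_pow_mul hG hG0 hGne hh hdvd hU hdim hd N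
  exact ⟨h', hh', hhh', isBigO_sub_comp_of_fderiv_isBigO hP hh' fun j =>
    isBigO_norm_pow_of_eq_pow_mul hG hG0 (hκ j) (hder j)⟩

/-- The function is the quotient of the remainders of `h` and `1` along discs in a direction killed
by `P`; it agrees to all orders with a function factoring through `P`. -/
theorem exists_germDvd_sub_comp (hP : ∀ p, p = P p + ∑ j, l j p • v j)
    (hPv : ∀ j, P (v j) = 0) (hG : AnalyticAt ℂ G 0) (hG0 : G 0 = 0) (hh : AnalyticAt ℂ h 0)
    (hdvd : ∀ i j, GermDvd G (fun p => fderiv ℂ h p (v i) * fderiv ℂ G p (v j) -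
      fderiv ℂ h p (v j) * fderiv ℂ G p (v i)) 0)
    (hU : U ∈ 𝓝 0) (hdim : dimH ({p | G p = 0 ∧ ∀ i, fderiv ℂ G p (v i) = 0} ∩ U) < d)
    (hd : d + 4 ≤ 2 * Module.finrank ℂ E) {e : E} (hPe : P e = 0)
    (he : ¬ ∀ᶠ τ in 𝓝 (0 : ℂ), G (τ • e) = 0) :
    ∃ f : E → ℂ, AnalyticAt ℂ f 0 ∧ GermDvd G (fun p => h p - f (P p)) 0 := by
  have hPP (p : E) : P (P p) = P p := by
    conv_rhs => rw [hP p]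
    simp [hPv]
  have hGne : ¬ ∀ᶠ p in 𝓝 0, G p = 0 := fun hzero =>
    he ((tendsto_smul_nhds_zero e).eventually hzero)
  obtain ⟨r, k, hdisc, hhr, hrem⟩ := exists_divisionDisc_forall_isBigO_discRemainder (e := e) hG hG0
    (by simpa using he) hh.eventually_analyticAt
  have hcompP {φ : E → ℂ} (hφ : AnalyticAt ℂ φ 0) : AnalyticOnDisc e r 0 (fun p => φ (P p)) :=
    fun τ _ => AnalyticAt.fun_comp (by simpa [hPe] using hφ) (P.analyticAt _)
  let R := discRemainder G e r h
  let R₁ := discRemainder G e r fun _ => (1 : ℂ)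
  have hR₁ : AnalyticAt ℂ R₁ 0 := hdisc.analyticAt_discRemainder fun _ _ => analyticAt_const
  have hR₁0 : R₁ 0 ≠ 0 := by simp [R₁, discRemainder, hG0]
  have hsub {φ : E → ℂ} (hφ : AnalyticAt ℂ φ 0) : ∀ᶠ p in 𝓝 0,
      discRemainder G e r (fun p => h p - φ (P p)) p = (R p / R₁ p - φ (P p)) * R₁ p := by
    filter_upwards [hdisc.eventually, AnalyticOnDisc.eventually hhr, (hcompP hφ).eventually,
      hR₁.continuousAt.eventually_ne hR₁0] with p hdisc_p hhp hφp hR₁p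
    rw [hdisc_p.discRemainder_sub_of_invariant (N := fun p => φ (P p)) hhp hφp
      fun τ => by simp [hPe], sub_mul, div_mul_cancel₀ _ hR₁p]
  have hf : AnalyticAt ℂ (fun p => R p / R₁ p) 0 :=
    (hdisc.analyticAt_discRemainder hhr).fun_div hR₁ hR₁0
  have hflat := eventually_eq_comp_of_forall_isBigO hf hPP fun M => by
    obtain ⟨h', hh', hhh', hO⟩ :=
      exists_germDvd_sub_and_isBigO_sub_comp hP hG hG0 hGne hh hdvd hU hdim hd (k * M)
    have hremO := hrem (fun p => h p - h' (P p)) (fun p => h' p - h' (P p)) M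
      (fun τ hτ => (hhr τ hτ).fun_sub (hcompP hh' τ hτ))
      (hh'.fun_sub ((hcompP hh').analyticAt_center hdisc.pos)) (by simpa using hhh') hO
    have hquot := hremO.mul ((hR₁.inv hR₁0).continuousAt.isBigO_one ℝ)
    simp only [mul_one] at hquot
    refine ⟨h', hquot.congr' ?_ (Eventually.of_forall fun _ => rfl)⟩
    filter_upwards [hsub hh', hR₁.continuousAt.eventually_ne hR₁0] with p hp hR₁p
    rw [hp, Pi.inv_apply, mul_inv_cancel_right₀ hR₁p]
  refine ⟨_, hf, hdisc.germDvd_of_discRemainder_eq_zero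
    (fun τ hτ => (hhr τ hτ).fun_sub (hcompP hf τ hτ)) ?_⟩
  filter_upwards [hsub hf, hflat] with p hp hfp
  rw [hp, ← hfp, sub_self, zero_mul]

theorem germDvd_sub_comp_of_comp_eq_zero (hP : ∀ p, p = P p + ∑ j, l j p • v j)
    (hG : AnalyticAt ℂ G 0) (hG0 : G 0 = 0) (hGne : ¬ ∀ᶠ p in 𝓝 0, G p = 0)
    (hh : AnalyticAt ℂ h 0)
    (hdvd : ∀ i j, GermDvd G (fun p => fderiv ℂ h p (v i) * fderiv ℂ G p (v j) -
      fderiv ℂ h p (v j) * fderiv ℂ G p (v i)) 0)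
    (hU : U ∈ 𝓝 0) (hdim : dimH ({p | G p = 0 ∧ ∀ i, fderiv ℂ G p (v i) = 0} ∩ U) < d)
    (hd : d + 4 ≤ 2 * Module.finrank ℂ E) (hPG : ∀ᶠ p in 𝓝 0, G (P p) = 0) :
    GermDvd G (fun p => h p - h (P p)) 0 := by
  have hcompP {φ : E → ℂ} (hφ : AnalyticAt ℂ φ 0) : AnalyticAt ℂ (fun p => φ (P p)) 0 :=
    AnalyticAt.fun_comp (by simpa using hφ) (P.analyticAt _)
  have hPlim : Tendsto P (𝓝 0) (𝓝 0) := by simpa using P.continuous.tendsto 0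
  obtain ⟨e, he⟩ := exists_line_not_eventually_eq_zero hG hGne
  obtain ⟨r, k, hdisc, hhr, hrem⟩ := exists_divisionDisc_forall_isBigO_discRemainder hG hG0 he
    (hh.fun_sub (hcompP hh)).eventually_analyticAt
  refine hdisc.germDvd_of_discRemainder_eq_zero hhr
    (eventually_eq_zero_of_forall_isBigO (hdisc.analyticAt_discRemainder hhr) fun M => ?_)
  obtain ⟨h', hh', hhh', hO⟩ :=
    exists_germDvd_sub_and_isBigO_sub_comp hP hG hG0 hGne hh hdvd hU hdim hd (k * M)
  refine hrem _ (fun p => h' p - h' (P p)) M hhr (hh'.fun_sub (hcompP hh')) (hhh'.congr ?_) hO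
  obtain ⟨w, -, hw⟩ := hhh'
  filter_upwards [hPlim.eventually hw, hPG] with p hwp hGp
  rw [hGp, zero_mul] at hwp
  linear_combination -hwp

end Split

section Regular

variable {E : Type*} [NormedAddCommGroup E] [NormedSpace ℂ E] [FiniteDimensional ℂ E]
  {G T : E → ℂ} {S U : Set E} {d : ℕ}

/-- Through a generic point there is a line avoiding `S`. -/
theorem GermDvd.of_eq_zero_imp_eq_zero_off (hG : AnalyticAt ℂ G 0)
    (hGne : ¬ ∀ᶠ p in 𝓝 0, G p = 0) (hT : AnalyticAt ℂ T 0) (hU : U ∈ 𝓝 0)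
    (hdim : dimH (S ∩ U) < d) (hd : d + 4 ≤ 2 * Module.finrank ℂ E)
    (hS : ∀ᶠ p in 𝓝 0, G p = 0 → p ∉ S →
      fderiv ℂ G p ≠ 0 ∧ ∀ᶠ p' in 𝓝 p, G p' = 0 → T p' = 0) :
    GermDvd G T 0 := by
  obtain ⟨e, he⟩ := exists_line_not_eventually_eq_zero hG hGne
  refine GermDvd.of_dense_lines hT hG he (dense_forall_add_smul_add_smul_notMem hdim hd e 0)
    (inter_mem hU (inter_mem hS (inter_mem hG.eventually_analyticAt hT.eventually_analyticAt))) ?_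
  rintro p hp - ξ ⟨hξU, hξS, hξG, hξT⟩
  refine GermDvd.line (N := G) (T := T) ?_
  have hnotMem : p + ξ • e ∉ S := fun hmem => hp 0 ξ (by simpa using ⟨hmem, hξU⟩)
  by_cases hzero : G (p + ξ • e) = 0
  · obtain ⟨hdG, hT0⟩ := hξS hzero hnotMem
    exact GermDvd.of_eq_zero_imp_eq_zero hξG hξT hdG hT0
  · exact GermDvd.of_ne_zero hξG hξT hzero

end Regular

/-! ### First integrals on the complexification -/

section FirstIntegral

variable {n : ℕ}

/-- The coordinate vector field `∂/∂z_j` of `ℂⁿ × ℂⁿ`. -/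
def dirZ (j : Fin n) : (Fin n → ℂ) × (Fin n → ℂ) := (Pi.single j 1, 0)

/-- The coordinate vector field `∂/∂w_j` of `ℂⁿ × ℂⁿ`. -/
def dirW (j : Fin n) : (Fin n → ℂ) × (Fin n → ℂ) := (0, Pi.single j 1)

/-- The singular sets of `M_ℂ = {G = 0}` and of its Levi foliation together have real codimension
greater than four in `ℂⁿ × ℂⁿ`, near the origin. -/
def SmallSing (G : (Fin n → ℂ) × (Fin n → ℂ) → ℂ) : Prop :=
  ∃ U ∈ 𝓝 (0 : (Fin n → ℂ) × (Fin n → ℂ)), dimH ((singMC G ∪ singLC G) ∩ U) + 4 < (4 * n : ℕ)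

/-- `h` is a first integral of the foliation defined on the regular part of `{G = 0}` by the form
`α = ∑ j, ∂G/∂z_j dz_j`, whose value at `v` is `dG (v.1, 0)`. -/
def IsFirstIntegral (G h : (Fin n → ℂ) × (Fin n → ℂ) → ℂ) : Prop :=
  ∀ᶠ p in 𝓝 (0 : (Fin n → ℂ) × (Fin n → ℂ)), G p = 0 → fderiv ℂ G p ≠ 0 →
    ∀ u v : (Fin n → ℂ) × (Fin n → ℂ), fderiv ℂ G p u = 0 → fderiv ℂ G p v = 0 →
      fderiv ℂ h p u * fderiv ℂ G p (v.1, 0) - fderiv ℂ h p v * fderiv ℂ G p (u.1, 0) = 0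

/-- The `2 × 2` minors of `(dh, dG)` in the directions `v` vanish along `{G = 0}`, in the strong
sense that `G` divides them. -/
def FDerivMinorsDvd {ι E : Type*} [NormedAddCommGroup E] [NormedSpace ℂ E] (v : ι → E)
    (G h : E → ℂ) : Prop :=
  ∀ i j, GermDvd G (fun p => fderiv ℂ h p (v i) * fderiv ℂ G p (v j) -
    fderiv ℂ h p (v j) * fderiv ℂ G p (v i)) 0

theorem eq_sum_smul_dirZ_add_sum_smul_dirW (p : (Fin n → ℂ) × (Fin n → ℂ)) :
    p = ∑ j, p.1 j • dirZ j + ∑ j, p.2 j • dirW j := by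
  ext j <;> simp [dirZ, dirW, Prod.fst_sum, Prod.snd_sum, Finset.sum_apply, Pi.single_apply]

theorem clm_mk_zero_eq_zero {D : (Fin n → ℂ) × (Fin n → ℂ) →L[ℂ] ℂ} (hD : ∀ j, D (dirZ j) = 0)
    (z : Fin n → ℂ) : D (z, 0) = 0 := by
  rw [eq_sum_smul_dirZ_add_sum_smul_dirW (z, 0)]
  simp [hD]

theorem clm_zero_mk_eq_zero {D : (Fin n → ℂ) × (Fin n → ℂ) →L[ℂ] ℂ} (hD : ∀ j, D (dirW j) = 0)
    (w : Fin n → ℂ) : D (0, w) = 0 := by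
  rw [eq_sum_smul_dirZ_add_sum_smul_dirW (0, w)]
  simp [hD]

variable {G h : (Fin n → ℂ) × (Fin n → ℂ) → ℂ}

theorem mem_singMC_union_singLC_iff {p : (Fin n → ℂ) × (Fin n → ℂ)} (hp : G p = 0) :
    p ∈ singMC G ∪ singLC G ↔
      (∀ i, fderiv ℂ G p (dirW i) = 0) ∨ ∀ j, fderiv ℂ G p (dirZ j) = 0 := by
  constructor
  · rintro (⟨-, hdG⟩ | ⟨-, -, hker⟩)
    · simp [hdG]
    · by_contra! hne
      obtain ⟨⟨i, hi⟩, j, hj⟩ := hne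
      have hzero := hker (fderiv ℂ G p (dirW i) • dirZ j - fderiv ℂ G p (dirZ j) • dirW i)
        (by simp only [map_sub, map_smul, smul_eq_mul]; ring)
      rw [show (((fderiv ℂ G p (dirW i) • dirZ j - fderiv ℂ G p (dirZ j) • dirW i).1, 0) :
        (Fin n → ℂ) × (Fin n → ℂ)) = fderiv ℂ G p (dirW i) • dirZ j by simp [dirW, dirZ],
        map_smul, smul_eq_mul] at hzero
      exact mul_ne_zero hi hj hzero
  · intro hpartial
    by_cases hdG : fderiv ℂ G p = 0
    · exact Or.inl ⟨hp, hdG⟩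
    refine Or.inr ⟨hp, hdG, fun v hv => ?_⟩
    rcases hpartial with hW | hZ
    · rw [← Prod.fst_add_snd v, map_add, clm_zero_mk_eq_zero hW, add_zero] at hv
      exact hv
    · exact clm_mk_zero_eq_zero hZ v.1

theorem eventually_notMem_singMC_union_singLC {p : (Fin n → ℂ) × (Fin n → ℂ)}
    (hG : AnalyticAt ℂ G p) (hp : G p = 0) (hsing : p ∉ singMC G ∪ singLC G) :
    ∀ᶠ p' in 𝓝 p, G p' = 0 → p' ∉ singMC G ∪ singLC G := by
  rw [mem_singMC_union_singLC_iff hp] at hsing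
  push Not at hsing
  obtain ⟨⟨i, hi⟩, j, hj⟩ := hsing
  filter_upwards [(analyticAt_fderiv_apply hG (dirW i)).continuousAt.eventually_ne hi,
    (analyticAt_fderiv_apply hG (dirZ j)).continuousAt.eventually_ne hj] with p' hi' hj' hp'
  rw [mem_singMC_union_singLC_iff hp']
  exact fun h => h.elim (fun hW => hi' (hW i)) fun hZ => hj' (hZ j)

theorem fderiv_ne_zero_of_notMem {p : (Fin n → ℂ) × (Fin n → ℂ)} (hp : G p = 0)
    (hsing : p ∉ singMC G ∪ singLC G) : fderiv ℂ G p ≠ 0 :=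
  fun hdG => hsing (Or.inl ⟨hp, hdG⟩)

/-- Off the singular sets some tangent vector is not killed by `α`; pairing it with `u` shows that
a first integral is constant along the leaf through `p`. -/
theorem fderiv_apply_eq_zero_of_notMem {p u : (Fin n → ℂ) × (Fin n → ℂ)} (hp : G p = 0)
    (hsing : p ∉ singMC G ∪ singLC G)
    (hfi : ∀ v : (Fin n → ℂ) × (Fin n → ℂ), fderiv ℂ G p v = 0 →
      fderiv ℂ h p u * fderiv ℂ G p (v.1, 0) - fderiv ℂ h p v * fderiv ℂ G p (u.1, 0) = 0)
    (hα : fderiv ℂ G p (u.1, 0) = 0) : fderiv ℂ h p u = 0 := by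
  obtain ⟨v, hv, hαv⟩ : ∃ v, fderiv ℂ G p v = 0 ∧ fderiv ℂ G p (v.1, 0) ≠ 0 := by
    by_contra! hker
    exact hsing (Or.inr ⟨hp, fderiv_ne_zero_of_notMem hp hsing, hker⟩)
  simpa [hα, hαv] using hfi v hv

theorem finrank_pi_prod_pi : Module.finrank ℂ ((Fin n → ℂ) × (Fin n → ℂ)) = 2 * n := by
  simp [two_mul]

namespace SmallSing

theorem exists_dimH_lt (hs : SmallSing G) : ∃ U ∈ 𝓝 (0 : (Fin n → ℂ) × (Fin n → ℂ)), ∃ d : ℕ,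
    dimH ((singMC G ∪ singLC G) ∩ U) < d ∧
      d + 4 ≤ 2 * Module.finrank ℂ ((Fin n → ℂ) × (Fin n → ℂ)) := by
  obtain ⟨U, hU, hdim⟩ := hs
  have hn : 4 ≤ 4 * n := by exact_mod_cast (le_add_self.trans_lt hdim).le
  refine ⟨U, hU, 4 * n - 4, ?_, ?_⟩
  · exact lt_tsub_iff_right.2 hdim |>.trans_eq (by push_cast; rfl)
  · rw [finrank_pi_prod_pi]
    omega

theorem exists_dimH_dirW_lt (hs : SmallSing G) : ∃ U ∈ 𝓝 (0 : (Fin n → ℂ) × (Fin n → ℂ)),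
    ∃ d : ℕ, dimH ({p | G p = 0 ∧ ∀ i, fderiv ℂ G p (dirW i) = 0} ∩ U) < d ∧
      d + 4 ≤ 2 * Module.finrank ℂ ((Fin n → ℂ) × (Fin n → ℂ)) := by
  obtain ⟨U, hU, d, hdim, hd⟩ := hs.exists_dimH_lt
  exact ⟨U, hU, d, (dimH_mono (Set.inter_subset_inter_left U fun p hp =>
    (mem_singMC_union_singLC_iff hp.1).2 (Or.inl hp.2))).trans_lt hdim, hd⟩

theorem exists_dimH_dirZ_lt (hs : SmallSing G) : ∃ U ∈ 𝓝 (0 : (Fin n → ℂ) × (Fin n → ℂ)),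
    ∃ d : ℕ, dimH ({p | G p = 0 ∧ ∀ i, fderiv ℂ G p (dirZ i) = 0} ∩ U) < d ∧
      d + 4 ≤ 2 * Module.finrank ℂ ((Fin n → ℂ) × (Fin n → ℂ)) := by
  obtain ⟨U, hU, d, hdim, hd⟩ := hs.exists_dimH_lt
  exact ⟨U, hU, d, (dimH_mono (Set.inter_subset_inter_left U fun p hp =>
    (mem_singMC_union_singLC_iff hp.1).2 (Or.inr hp.2))).trans_lt hdim, hd⟩

theorem not_eventually_eq_zero (hs : SmallSing G) : ¬ ∀ᶠ p in 𝓝 0, G p = 0 := by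
  intro hzero
  obtain ⟨U, hU, hdim⟩ := hs
  have hsing : (singMC G ∪ singLC G) ∩ U ∈ 𝓝 0 := by
    filter_upwards [hU, hzero.eventually_nhds] with p hpU hp
    have hp' : G =ᶠ[𝓝 p] fun _ => 0 := hp
    exact ⟨Or.inl ⟨hp.self_of_nhds, by rw [hp'.fderiv_eq]; simp⟩, hpU⟩
  have hrank : Module.finrank ℝ ((Fin n → ℂ) × (Fin n → ℂ)) = 4 * n := by
    rw [finrank_real_of_complex, finrank_pi_prod_pi]
    ring
  rw [Real.dimH_of_mem_nhds hsing, hrank] at hdim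
  exact (le_self_add.trans_lt hdim).false

theorem fderivMinorsDvd (hs : SmallSing G) (hG : AnalyticAt ℂ G 0) (hh : AnalyticAt ℂ h 0)
    (hfi : IsFirstIntegral G h) {ι : Type*} {v : ι → (Fin n → ℂ) × (Fin n → ℂ)}
    (hv : ∀ p i j, fderiv ℂ G p ((fderiv ℂ G p (v j) • v i - fderiv ℂ G p (v i) • v j).1, 0) = 0) :
    FDerivMinorsDvd v G h := by
  intro i j
  obtain ⟨U, hU, d, hdim, hd⟩ := hs.exists_dimH_lt
  refine GermDvd.of_eq_zero_imp_eq_zero_off hG hs.not_eventually_eq_zero ?_ hU hdim hd ?_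
  · exact ((analyticAt_fderiv_apply hh _).fun_mul (analyticAt_fderiv_apply hG _)).fun_sub
      ((analyticAt_fderiv_apply hh _).fun_mul (analyticAt_fderiv_apply hG _))
  filter_upwards [hG.eventually_analyticAt, hfi.eventually_nhds] with p hGp hfip hp hsing
  refine ⟨fderiv_ne_zero_of_notMem hp hsing, ?_⟩
  filter_upwards [eventually_notMem_singMC_union_singLC hGp hp hsing, hfip] with p' hsing' hfip' hp'
  have htangent : fderiv ℂ G p' (fderiv ℂ G p' (v j) • v i - fderiv ℂ G p' (v i) • v j) = 0 := by
    rw [map_sub, map_smul, map_smul, smul_eq_mul, smul_eq_mul]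
    ring
  have hconst := fderiv_apply_eq_zero_of_notMem hp' (hsing' hp')
    (fun v hv => hfip' hp' (fderiv_ne_zero_of_notMem hp' (hsing' hp')) _ v htangent hv) (hv p' i j)
  rw [map_sub, map_smul, map_smul, smul_eq_mul, smul_eq_mul] at hconst
  linear_combination hconst

theorem fderivMinorsDvd_dirW (hs : SmallSing G) (hG : AnalyticAt ℂ G 0) (hh : AnalyticAt ℂ h 0)
    (hfi : IsFirstIntegral G h) : FDerivMinorsDvd dirW G h := by
  refine hs.fderivMinorsDvd hG hh hfi fun p i j => ?_
  rw [show ((fderiv ℂ G p (dirW j) • dirW i - fderiv ℂ G p (dirW i) • dirW j).1,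
    (0 : Fin n → ℂ)) = 0 by simp [dirW], map_zero]

theorem fderivMinorsDvd_dirZ (hs : SmallSing G) (hG : AnalyticAt ℂ G 0) (hh : AnalyticAt ℂ h 0)
    (hfi : IsFirstIntegral G h) : FDerivMinorsDvd dirZ G h := by
  refine hs.fderivMinorsDvd hG hh hfi fun p i j => ?_
  rw [show ((fderiv ℂ G p (dirZ j) • dirZ i - fderiv ℂ G p (dirZ i) • dirZ j).1,
      (0 : Fin n → ℂ)) = fderiv ℂ G p (dirZ j) • dirZ i - fderiv ℂ G p (dirZ i) • dirZ j by
    simp [dirZ], map_sub, map_smul, map_smul, smul_eq_mul, smul_eq_mul]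
  ring

end SmallSing

/-- The projection `(z, w) ↦ (z, 0)` of `ℂⁿ × ℂⁿ`. -/
noncomputable def projZ : (Fin n → ℂ) × (Fin n → ℂ) →L[ℂ] (Fin n → ℂ) × (Fin n → ℂ) :=
  (ContinuousLinearMap.inl ℂ _ _).comp (ContinuousLinearMap.fst ℂ _ _)

/-- The projection `(z, w) ↦ (0, w)` of `ℂⁿ × ℂⁿ`. -/
noncomputable def projW : (Fin n → ℂ) × (Fin n → ℂ) →L[ℂ] (Fin n → ℂ) × (Fin n → ℂ) :=
  (ContinuousLinearMap.inr ℂ _ _).comp (ContinuousLinearMap.snd ℂ _ _)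

/-- The coordinate `z_j` on `ℂⁿ × ℂⁿ`. -/
noncomputable def coordZ (j : Fin n) : (Fin n → ℂ) × (Fin n → ℂ) →L[ℂ] ℂ :=
  (ContinuousLinearMap.proj j).comp (ContinuousLinearMap.fst ℂ (Fin n → ℂ) (Fin n → ℂ))

/-- The coordinate `w_j` on `ℂⁿ × ℂⁿ`. -/
noncomputable def coordW (j : Fin n) : (Fin n → ℂ) × (Fin n → ℂ) →L[ℂ] ℂ :=
  (ContinuousLinearMap.proj j).comp (ContinuousLinearMap.snd ℂ (Fin n → ℂ) (Fin n → ℂ))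

theorem projZ_apply (p : (Fin n → ℂ) × (Fin n → ℂ)) : projZ p = (p.1, 0) := rfl

theorem projW_apply (p : (Fin n → ℂ) × (Fin n → ℂ)) : projW p = (0, p.2) := rfl

theorem eq_projZ_add_sum (p : (Fin n → ℂ) × (Fin n → ℂ)) :
    p = projZ p + ∑ j, coordW j p • dirW j := by
  conv_lhs => rw [eq_sum_smul_dirZ_add_sum_smul_dirW p]
  rw [projZ_apply, eq_sum_smul_dirZ_add_sum_smul_dirW (p.1, 0)]
  simp [coordW]

theorem eq_projW_add_sum (p : (Fin n → ℂ) × (Fin n → ℂ)) :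
    p = projW p + ∑ j, coordZ j p • dirZ j := by
  conv_lhs => rw [eq_sum_smul_dirZ_add_sum_smul_dirW p]
  rw [projW_apply, eq_sum_smul_dirZ_add_sum_smul_dirW (0, p.2)]
  simp [coordZ, add_comm]

namespace SmallSing

theorem exists_germDvd_sub_comp_fst (hs : SmallSing G) (hG : AnalyticAt ℂ G 0) (hG0 : G 0 = 0)
    (hh : AnalyticAt ℂ h 0) (hdvd : FDerivMinorsDvd dirW G h) {e : Fin n → ℂ}
    (he : ¬ ∀ᶠ τ in 𝓝 (0 : ℂ), G (0, τ • e) = 0) :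
    ∃ f : (Fin n → ℂ) → ℂ, AnalyticAt ℂ f 0 ∧ GermDvd G (fun p => h p - f p.1) 0 := by
  obtain ⟨U, hU, d, hdim, hd⟩ := hs.exists_dimH_dirW_lt
  obtain ⟨f, hf, hfdvd⟩ := exists_germDvd_sub_comp eq_projZ_add_sum
    (fun _ => by simp [projZ_apply, dirW]) hG hG0 hh hdvd hU hdim hd (e := (0, e))
    (by simp [projZ_apply]) (by simpa using he)
  exact ⟨fun z => f (z, 0), analyticAt_slice_fst hf, hfdvd⟩

theorem exists_germDvd_sub_comp_snd (hs : SmallSing G) (hG : AnalyticAt ℂ G 0) (hG0 : G 0 = 0)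
    (hh : AnalyticAt ℂ h 0) (hdvd : FDerivMinorsDvd dirZ G h) {e : Fin n → ℂ}
    (he : ¬ ∀ᶠ τ in 𝓝 (0 : ℂ), G (τ • e, 0) = 0) :
    ∃ f : (Fin n → ℂ) → ℂ, AnalyticAt ℂ f 0 ∧ GermDvd G (fun p => h p - f p.2) 0 := by
  obtain ⟨U, hU, d, hdim, hd⟩ := hs.exists_dimH_dirZ_lt
  obtain ⟨f, hf, hfdvd⟩ := exists_germDvd_sub_comp eq_projW_add_sum
    (fun _ => by simp [projW_apply, dirZ]) hG hG0 hh hdvd hU hdim hd (e := (e, 0))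
    (by simp [projW_apply]) (by simpa using he)
  exact ⟨fun w => f (0, w), analyticAt_slice_snd hf, hfdvd⟩

/-- In this case `h (z, w) = h (z, 0)` and `h (z, w) = h (0, w)` both hold on `{G = 0}`, and the
first equation may be followed by the second since `G (z, 0) = 0`. -/
theorem eventually_eq_of_slices_eq_zero (hs : SmallSing G) (hG : AnalyticAt ℂ G 0) (hG0 : G 0 = 0)
    (hh : AnalyticAt ℂ h 0) (hdvdW : FDerivMinorsDvd dirW G h) (hdvdZ : FDerivMinorsDvd dirZ G h)
    (hz : ∀ᶠ z in 𝓝 (0 : Fin n → ℂ), G (z, 0) = 0)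
    (hw : ∀ᶠ w in 𝓝 (0 : Fin n → ℂ), G (0, w) = 0) :
    ∀ᶠ p in 𝓝 0, G p = 0 → h p = h 0 := by
  have hGne := hs.not_eventually_eq_zero
  have hz' : ∀ᶠ p in 𝓝 (0 : (Fin n → ℂ) × (Fin n → ℂ)), G (p.1, 0) = 0 :=
    (continuous_fst.tendsto' 0 0 rfl).eventually hz
  obtain ⟨UW, hUW, dW, hdimW, hdW⟩ := hs.exists_dimH_dirW_lt
  obtain ⟨UZ, hUZ, dZ, hdimZ, hdZ⟩ := hs.exists_dimH_dirZ_lt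
  obtain ⟨qZ, -, hprojZ⟩ := germDvd_sub_comp_of_comp_eq_zero eq_projZ_add_sum hG hG0 hGne hh hdvdW
    hUW hdimW hdW hz'
  obtain ⟨qW, -, hprojW⟩ := germDvd_sub_comp_of_comp_eq_zero eq_projW_add_sum hG hG0 hGne hh hdvdZ
    hUZ hdimZ hdZ ((continuous_snd.tendsto' 0 0 rfl).eventually hw)
  have hlim : Tendsto (projZ : (Fin n → ℂ) × (Fin n → ℂ) → _) (𝓝 0) (𝓝 0) :=
    projZ.continuous.tendsto' 0 0 (map_zero _)
  filter_upwards [hprojZ, hlim.eventually hprojW, hz'] with p hpZ hpW hpz hp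
  rw [hp, zero_mul, sub_eq_zero] at hpZ
  rw [projZ_apply, hpz, zero_mul, sub_eq_zero, projW_apply] at hpW
  exact hpZ.trans hpW

end SmallSing

end FirstIntegral

/-! ### Conjugation and Hermitian symmetry -/

/-- The conjugate `w ↦ conj (φ (conj w))` of a function; it is holomorphic when `φ` is. -/
def starConj {E : Type*} [Star E] (φ : E → ℂ) (w : E) : ℂ := star (φ (star w))

section StarConj

variable {E : Type*} [NormedAddCommGroup E] [StarAddMonoid E]

theorem tendsto_star_nhds_zero [ContinuousStar E] : Tendsto (star : E → E) (𝓝 0) (𝓝 0) :=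
  continuous_star.tendsto' 0 0 (star_zero E)

theorem not_eventually_starConj_eq_zero [ContinuousStar E] {φ : E → ℂ}
    (h : ¬ ∀ᶠ z in 𝓝 0, φ z = 0) : ¬ ∀ᶠ w in 𝓝 0, starConj φ w = 0 := fun hzero =>
  h <| (tendsto_star_nhds_zero.eventually hzero).mono fun w hw => by simpa [starConj] using hw

variable [NormedSpace ℂ E] [NormedStarGroup E] [StarModule ℂ E]

theorem exists_continuousMultilinearMap_starConj {k : ℕ}
    (P : ContinuousMultilinearMap ℂ (fun _ : Fin k => E) ℂ) :
    ∃ Q : ContinuousMultilinearMap ℂ (fun _ : Fin k => E) ℂ,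
      (∀ m, Q m = star (P fun i => star (m i))) ∧ ‖Q‖ ≤ ‖P‖ := by
  have hupdate [DecidableEq (Fin k)] (m : Fin k → E) (i : Fin k) (x : E) :
      (fun j => star (Function.update m i x j)) =
        Function.update (fun j => star (m j)) i (star x) := by
    funext j
    rcases eq_or_ne j i with rfl | hj
    · simp
    · simp [hj]
  let Q : MultilinearMap ℂ (fun _ : Fin k => E) ℂ :=
    { toFun := fun m => star (P fun i => star (m i))
      map_update_add' := fun m i x y => by
        simp only [hupdate, star_add, P.map_update_add]
      map_update_smul' := fun m i c x => by
        simp only [hupdate, star_smul, P.map_update_smul, smul_eq_mul, star_mul', star_star] }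
  have hQ (m : Fin k → E) : ‖Q m‖ ≤ ‖P‖ * ∏ i, ‖m i‖ := by
    calc ‖Q m‖ = ‖P fun i => star (m i)‖ := norm_star _
      _ ≤ ‖P‖ * ∏ i, ‖m i‖ := by simpa only [norm_star] using P.le_opNorm fun i => star (m i)
  exact ⟨Q.mkContinuous ‖P‖ hQ, fun _ => rfl, Q.mkContinuous_norm_le (norm_nonneg _) hQ⟩

theorem analyticAt_starConj {φ : E → ℂ} (hφ : AnalyticAt ℂ φ 0) :
    AnalyticAt ℂ (starConj φ) 0 := by
  obtain ⟨P, r, hP⟩ := hφ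
  choose Q hQ hQP using fun k => exists_continuousMultilinearMap_starConj (P k)
  refine ⟨Q, r, hP.r_le.trans (FormalMultilinearSeries.radius_le_of_le hQP), hP.r_pos, ?_⟩
  intro y hy
  have hy' : star y ∈ Metric.eball (0 : E) r := by
    simpa [Metric.mem_eball, edist_zero_right, enorm_eq_nnnorm] using hy
  simpa [starConj, hQ] using (hP.hasSum hy').star

end StarConj

section Hermitian

variable {V : Type*} [NormedAddCommGroup V] [StarAddMonoid V]

/-- Hermitian symmetry `G (z, w) = conj (G (conj w, conj z))` of a germ, the complexified form of
being real-valued on the diagonal `w = conj z`. -/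
def IsHermitianGerm (G : V × V → ℂ) : Prop :=
  ∀ᶠ p in 𝓝 0, G p = star (G (star p.2, star p.1))

variable [ContinuousStar V]

theorem tendsto_star_swap_nhds_zero :
    Tendsto (fun p : V × V => (star p.2, star p.1)) (𝓝 0) (𝓝 0) :=
  Continuous.tendsto' (by fun_prop) 0 0 (by simp)

theorem IsHermitianGerm.eventually_slice_eq_zero_iff {G : V × V → ℂ} (hG : IsHermitianGerm G) :
    (∀ᶠ z in 𝓝 (0 : V), G (z, 0) = 0) ↔ ∀ᶠ w in 𝓝 (0 : V), G (0, w) = 0 := by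
  constructor <;> intro hzero
  · filter_upwards [tendsto_star_nhds_zero.eventually hzero,
      tendsto_zero_mk_nhds_zero.eventually hG] with w hw hGw
    simpa [hw] using hGw
  · filter_upwards [tendsto_star_nhds_zero.eventually hzero,
      tendsto_mk_zero_nhds_zero.eventually hG] with z hz hGz
    simpa [hz] using hGz

end Hermitian

section Diagonal

theorem eq_zero_of_forall_add_ofReal_smul {E : Type*} [NormedAddCommGroup E] [NormedSpace ℂ E]
    {φ : E → ℂ} {a b : E} (hφ : ∀ ξ : ℂ, ‖ξ‖ < 2 → AnalyticAt ℂ φ (a + ξ • b))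
    (hreal : ∀ t : ℝ, |t| < 2 → φ (a + (t : ℂ) • b) = 0) : φ (a + Complex.I • b) = 0 := by
  have hline : AnalyticOnNhd ℂ (fun ξ : ℂ => φ (a + ξ • b)) (Metric.ball 0 2) :=
    fun ξ hξ => analyticAt_line (hφ ξ (mem_ball_zero_iff.1 hξ))
  have hofReal : Tendsto (fun t : ℝ => (t : ℂ)) (𝓝[≠] 0) (𝓝[≠] 0) :=
    (Complex.continuous_ofReal.tendsto' 0 0 Complex.ofReal_zero).inf
      (tendsto_principal_principal.2 fun t ht => by simpa using ht)
  have hsmall : ∀ᶠ t : ℝ in 𝓝[≠] 0, |t| < 2 :=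
    nhdsWithin_le_nhds (continuous_abs.continuousAt.eventually (gt_mem_nhds (by simp)))
  have hfreq : ∃ᶠ ξ : ℂ in 𝓝[≠] 0, φ (a + ξ • b) = 0 :=
    hofReal.frequently (hsmall.mono hreal).frequently
  exact hline.eqOn_zero_of_preconnected_of_frequently_eq_zero (convex_ball 0 2).isPreconnected
    (Metric.mem_ball_self two_pos) hfreq (by simp)

variable {V : Type*} [NormedAddCommGroup V] [NormedSpace ℂ V] [StarAddMonoid V] [StarModule ℂ V]

theorem add_ofReal_smul_mk_star (a b : V) (t : ℝ) :
    (a, star a) + (t : ℂ) • (b, star b) = (a + (t : ℂ) • b, star (a + (t : ℂ) • b)) := by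
  simp [star_smul]

variable [NormedStarGroup V]

theorem exists_add_I_smul_mk_star (p : V × V) : ∃ a b : V, ‖a‖ ≤ ‖p‖ ∧ ‖b‖ ≤ ‖p‖ ∧
    (a, star a) + Complex.I • (b, star b) = p := by
  have hp₁ := norm_fst_le p
  have hp₂ := norm_snd_le p
  refine ⟨(1 / 2 : ℂ) • (p.1 + star p.2), (-Complex.I / 2) • (p.1 - star p.2), ?_, ?_, ?_⟩
  · have hadd := norm_add_le p.1 (star p.2)
    rw [norm_star] at hadd
    rw [norm_smul]
    norm_num
    linarith
  · have hsub := norm_sub_le p.1 (star p.2)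
    rw [norm_star] at hsub
    rw [norm_smul]
    simp only [norm_div, norm_neg, Complex.norm_I, Complex.norm_ofNat]
    linarith
  · have hI : Complex.I * (-Complex.I / 2) = 1 / 2 := by
      linear_combination (-1 / 2 : ℂ) * Complex.I_mul_I
    have hI' : Complex.I * star (-Complex.I / 2) = -(1 / 2) := by
      simp only [star_div₀, star_neg, Complex.star_def, Complex.conj_I, map_ofNat, neg_neg]
      linear_combination (1 / 2 : ℂ) * Complex.I_mul_I
    refine Prod.ext ?_ ?_
    · simp only [Prod.fst_add, Prod.smul_fst, smul_smul, hI]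
      module
    · have hhalf : star (1 / 2 : ℂ) = 1 / 2 := by simp
      simp only [Prod.snd_add, Prod.smul_snd, star_smul, star_add, star_sub, star_star, smul_smul,
        hI', hhalf]
      module

/-- The totally real subspace `w = conj z` is a set of uniqueness: every point lies on the
complexification of a real line contained in it. -/
theorem eventually_eq_zero_of_diagonal {φ : V × V → ℂ} (hφ : AnalyticAt ℂ φ 0)
    (h : ∀ᶠ z in 𝓝 (0 : V), φ (z, star z) = 0) : ∀ᶠ p in 𝓝 0, φ p = 0 := by
  obtain ⟨r, hr, hφr⟩ := hφ.exists_ball_analyticOnNhd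
  obtain ⟨s, hs, hdiag⟩ := Metric.eventually_nhds_iff.1 h
  filter_upwards [Metric.ball_mem_nhds (0 : V × V) (by positivity : 0 < min r s / 3)] with p hp
  rw [mem_ball_zero_iff, lt_div_iff₀ three_pos, lt_min_iff] at hp
  obtain ⟨a, b, ha, hb, hab⟩ := exists_add_I_smul_mk_star p
  have hnorm {ξ : ℂ} (hξ : ‖ξ‖ < 2) : ‖a‖ + ‖ξ‖ * ‖b‖ ≤ ‖p‖ * 3 := by
    nlinarith [norm_nonneg b, norm_nonneg ξ]
  have hmk (c : V) : ‖(c, star c)‖ = ‖c‖ := by rw [Prod.norm_mk, norm_star, max_self]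
  rw [← hab]
  refine eq_zero_of_forall_add_ofReal_smul (fun ξ hξ => hφr _ ?_) fun t ht => ?_
  · rw [mem_ball_zero_iff]
    refine ((norm_add_le _ _).trans ?_).trans_lt hp.1
    rw [norm_smul, hmk, hmk]
    exact hnorm hξ
  · rw [add_ofReal_smul_mk_star]
    refine hdiag ?_
    rw [dist_zero_right]
    refine ((norm_add_le _ _).trans ?_).trans_lt hp.2
    rw [norm_smul]
    exact hnorm (by simpa using ht)

theorem analyticAt_star_comp_star_swap {φ : V × V → ℂ} (hφ : AnalyticAt ℂ φ 0) :
    AnalyticAt ℂ (fun p : V × V => star (φ (star p.2, star p.1))) 0 :=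
  have : NormedStarGroup (V × V) := ⟨fun p => by simp [Prod.norm_def]⟩
  analyticAt_starConj (AnalyticAt.fun_comp (g := φ) (f := fun p : V × V => (p.2, p.1)) hφ
    (analyticAt_snd.prod analyticAt_fst))

theorem isHermitianGerm_of_diagonal_real {F : V → ℝ} {G : V × V → ℂ} (hG : AnalyticAt ℂ G 0)
    (hGF : ∀ᶠ z in 𝓝 0, G (z, star z) = F z) : IsHermitianGerm G := by
  refine (eventually_eq_zero_of_diagonal (hG.fun_sub (analyticAt_star_comp_star_swap hG)) ?_).mono
    fun p hp => sub_eq_zero.1 hp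
  filter_upwards [hGF] with z hz
  simp [hz]

theorem GermDvd.star_swap {G T : V × V → ℂ} (hG : IsHermitianGerm G) (h : GermDvd G T 0) :
    GermDvd G (fun p => star (T (star p.2, star p.1))) 0 := by
  obtain ⟨q, hq, hT⟩ := h
  refine ⟨_, analyticAt_star_comp_star_swap hq, ?_⟩
  filter_upwards [hG, tendsto_star_swap_nhds_zero.eventually hT] with p hGp hTp
  rw [hTp, star_mul', ← hGp]

end Diagonal

/-! ### A first integral symmetric under conjugation -/

section SymmetricIntegral

variable {V : Type*} [NormedAddCommGroup V] [NormedSpace ℂ V] [StarAddMonoid V] {G : V × V → ℂ}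

theorem exists_germDvd_sub_starConj_normalized (hG0 : G 0 = 0) {A : V → ℂ}
    (hA : AnalyticAt ℂ A 0) (hAne : ¬ ∀ᶠ z in 𝓝 0, A z = A 0)
    (hdvd : GermDvd G (fun p => A p.1 - starConj A p.2) 0) :
    ∃ B : V → ℂ, AnalyticAt ℂ B 0 ∧ B 0 = 0 ∧ (¬ ∀ᶠ z in 𝓝 0, B z = 0) ∧
      GermDvd G (fun p => B p.1 - starConj B p.2) 0 := by
  have hreal : A 0 = star (A 0) := by
    obtain ⟨q, -, hq⟩ := hdvd
    simpa [hG0, sub_eq_zero, starConj] using hq.self_of_nhds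
  refine ⟨fun z => A z - A 0, hA.fun_sub analyticAt_const, sub_self _,
    by simpa only [sub_eq_zero] using hAne, hdvd.congr (Eventually.of_forall fun p => ?_)⟩
  simp only [starConj, star_sub, ← hreal, sub_sub_sub_cancel_right]

variable [NormedStarGroup V] [StarModule ℂ V]

/-- Of the symmetric combinations `f + conj g` and `i (f - conj g)` at least one is not constant. -/
theorem exists_germDvd_sub_starConj (hG : IsHermitianGerm G) {f g : V → ℂ}
    (hf : AnalyticAt ℂ f 0) (hg : AnalyticAt ℂ g 0) (hfne : ¬ ∀ᶠ z in 𝓝 0, f z = f 0)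
    (hdvd : GermDvd G (fun p => f p.1 - g p.2) 0) :
    ∃ A : V → ℂ, AnalyticAt ℂ A 0 ∧ (¬ ∀ᶠ z in 𝓝 0, A z = A 0) ∧
      GermDvd G (fun p => A p.1 - starConj A p.2) 0 := by
  have hdvd' : GermDvd G (fun p => starConj f p.2 - starConj g p.1) 0 :=
    (hdvd.star_swap hG).congr (Eventually.of_forall fun p => by simp [starConj])
  have hg' := analyticAt_starConj hg
  by_cases hadd : ∀ᶠ z in 𝓝 0, f z + starConj g z = f 0 + starConj g 0
  · refine ⟨fun z => Complex.I * (f z - starConj g z), analyticAt_const.fun_mul (hf.fun_sub hg'),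
      fun hsub => hfne ?_, ?_⟩
    · filter_upwards [hadd, hsub] with z hz hz'
      linear_combination (hz + mul_left_cancel₀ Complex.I_ne_zero hz') / 2
    · refine ((hdvd.add hdvd').mul_left (S := fun _ => Complex.I) analyticAt_const).congr
        (Eventually.of_forall fun p => ?_)
      have hI : star Complex.I = -Complex.I := Complex.conj_I
      simp only [starConj, star_mul', star_sub, star_star, hI]
      ring
  · refine ⟨fun z => f z + starConj g z, hf.fun_add hg', hadd,
      (hdvd.sub hdvd').congr (Eventually.of_forall fun p => ?_)⟩
    simp only [starConj, star_add, star_star]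
    ring

end SymmetricIntegral

section SymmetricFirstIntegral

variable {n : ℕ} {G h : (Fin n → ℂ) × (Fin n → ℂ) → ℂ}

theorem SmallSing.not_eventually_slice_eq_zero (hs : SmallSing G) (hG : AnalyticAt ℂ G 0)
    (hG0 : G 0 = 0) (hGherm : IsHermitianGerm G) (hh : AnalyticAt ℂ h 0)
    (hfi : IsFirstIntegral G h) (hhne : ¬ ∃ c : ℂ, ∀ᶠ p in 𝓝 0, G p = 0 → h p = c) :
    ¬ ∀ᶠ z in 𝓝 (0 : Fin n → ℂ), G (z, 0) = 0 := fun hzero =>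
  hhne ⟨h 0, hs.eventually_eq_of_slices_eq_zero hG hG0 hh (hs.fderivMinorsDvd_dirW hG hh hfi)
    (hs.fderivMinorsDvd_dirZ hG hh hfi) hzero (hGherm.eventually_slice_eq_zero_iff.1 hzero)⟩

theorem SmallSing.exists_symmetric_integral (hs : SmallSing G) (hG : AnalyticAt ℂ G 0)
    (hG0 : G 0 = 0) (hGherm : IsHermitianGerm G) (hh : AnalyticAt ℂ h 0)
    (hfi : IsFirstIntegral G h) (hhne : ¬ ∃ c : ℂ, ∀ᶠ p in 𝓝 0, G p = 0 → h p = c)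
    (hGne : ¬ ∀ᶠ z in 𝓝 (0 : Fin n → ℂ), G (z, 0) = 0) :
    ∃ A : (Fin n → ℂ) → ℂ, AnalyticAt ℂ A 0 ∧ A 0 = 0 ∧ (¬ ∀ᶠ z in 𝓝 0, A z = 0) ∧
      GermDvd G (fun p => A p.1 - starConj A p.2) 0 := by
  obtain ⟨e, he⟩ := exists_line_not_eventually_eq_zero (analyticAt_slice_fst hG) hGne
  obtain ⟨e', he'⟩ := exists_line_not_eventually_eq_zero (analyticAt_slice_snd hG)
    (mt hGherm.eventually_slice_eq_zero_iff.2 hGne)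
  obtain ⟨f, hf, hhf⟩ := hs.exists_germDvd_sub_comp_fst hG hG0 hh
    (hs.fderivMinorsDvd_dirW hG hh hfi) (by simpa using he')
  obtain ⟨g, hg, hhg⟩ := hs.exists_germDvd_sub_comp_snd hG hG0 hh
    (hs.fderivMinorsDvd_dirZ hG hh hfi) (by simpa using he)
  have hfne : ¬ ∀ᶠ z in 𝓝 0, f z = f 0 := by
    intro hfconst
    obtain ⟨q, -, hq⟩ := hhf
    refine hhne ⟨f 0, ?_⟩
    filter_upwards [hq, (continuous_fst.tendsto' 0 0 rfl).eventually hfconst] with p hp hfp hGp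
    rw [hGp, zero_mul, sub_eq_zero] at hp
    exact hp.trans hfp
  obtain ⟨A, hA, hAne, hdvd⟩ := exists_germDvd_sub_starConj hGherm hf hg hfne
    ((hhg.sub hhf).congr (Eventually.of_forall fun p => by ring))
  exact exists_germDvd_sub_starConj_normalized hG0 hA hAne hdvd

end SymmetricFirstIntegral

/-! ### Roots and powers of germs -/

section Roots

variable {E : Type*} [NormedAddCommGroup E] [NormedSpace ℂ E] {q : E}

theorem exists_eventually_eq_zero_of_prod_eq_zero {ι : Type*} (s : Finset ι) {f : ι → E → ℂ}
    (hf : ∀ i, AnalyticAt ℂ (f i) q) (h : ∀ᶠ p in 𝓝 q, ∏ i ∈ s, f i p = 0) :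
    ∃ i ∈ s, ∀ᶠ p in 𝓝 q, f i p = 0 := by
  classical
  induction s using Finset.induction_on with
  | empty => exact absurd h.self_of_nhds (by simp)
  | insert i s hi ih =>
    by_cases hzero : ∀ᶠ p in 𝓝 q, f i p = 0
    · exact ⟨i, Finset.mem_insert_self _ _, hzero⟩
    have hprod : ∀ᶠ p in 𝓝 q, ∏ i ∈ s, f i p = 0 := by
      by_contra hprod
      refine not_eventually_mul_eq_zero (hf i) hzero (Finset.analyticAt_fun_prod s fun j _ => hf j)
        hprod (h.mono fun p hp => ?_)
      rwa [Finset.prod_insert hi] at hp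
    obtain ⟨j, hj, hfj⟩ := ih hprod
    exact ⟨j, Finset.mem_insert_of_mem hj, hfj⟩

theorem exists_pow_eq_one_eventually_eq_mul {b c : E → ℂ} (hb : AnalyticAt ℂ b q)
    (hc : AnalyticAt ℂ c q) {m : ℕ} (hm : 0 < m) (h : ∀ᶠ p in 𝓝 q, b p ^ m = c p ^ m) :
    ∃ ζ : ℂ, ζ ^ m = 1 ∧ ∀ᶠ p in 𝓝 q, b p = ζ * c p := by
  have hprod : ∀ᶠ p in 𝓝 q, ∏ ζ ∈ Polynomial.nthRootsFinset m (1 : ℂ), (b p - ζ * c p) = 0 := by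
    filter_upwards [h] with p hp
    rw [← (Complex.isPrimitiveRoot_exp m hm.ne').pow_sub_pow_eq_prod_sub_mul _ _ hm, hp, sub_self]
  obtain ⟨ζ, hζ, hbc⟩ := exists_eventually_eq_zero_of_prod_eq_zero _
    (fun ζ => hb.fun_sub (analyticAt_const.fun_mul hc)) hprod
  exact ⟨ζ, (Polynomial.mem_nthRootsFinset hm 1).1 hζ, hbc.mono fun p hp => sub_eq_zero.1 hp⟩

theorem exists_analyticAt_eq_pow_of_ne_zero {u : E → ℂ} (hu : AnalyticAt ℂ u q) (hu0 : u q ≠ 0)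
    {K : ℕ} (hK : 0 < K) :
    ∃ w : E → ℂ, AnalyticAt ℂ w q ∧ w q ≠ 0 ∧ ∀ᶠ p in 𝓝 q, u p = w p ^ K := by
  obtain ⟨ν, hν⟩ := IsAlgClosed.exists_pow_nat_eq (u q) hK
  have hK' : (K : ℂ) ≠ 0 := Nat.cast_ne_zero.2 hK.ne'
  have hν0 : ν ≠ 0 := by
    rintro rfl
    exact hu0 (hν.symm.trans (zero_pow hK.ne'))
  have hlog : AnalyticAt ℂ (fun p => Complex.log (u p / u q)) q :=
    (hu.fun_div analyticAt_const hu0).clog (by rw [div_self hu0]; exact Complex.one_mem_slitPlane)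
  refine ⟨fun p => ν * Complex.exp (Complex.log (u p / u q) / K),
    analyticAt_const.fun_mul (hlog.fun_div analyticAt_const hK').cexp',
    mul_ne_zero hν0 (Complex.exp_ne_zero _), ?_⟩
  filter_upwards [hu.continuousAt.eventually_ne hu0] with p hp
  rw [mul_pow, hν, ← Complex.exp_nat_mul, mul_div_cancel₀ _ hK',
    Complex.exp_log (div_ne_zero hp hu0), mul_div_cancel₀ _ hu0]

theorem exists_analyticAt_comp_eq_pow {φ : ℂ → ℂ} (hφ : AnalyticAt ℂ φ 0) (hφ0 : φ 0 = 0)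
    (hne : ¬ ∀ᶠ t in 𝓝 0, φ t = 0) :
    ∃ (K : ℕ) (γ : ℂ → ℂ), 0 < K ∧ AnalyticAt ℂ γ 0 ∧ γ 0 = 0 ∧ ∀ᶠ t in 𝓝 0, φ (γ t) = t ^ K := by
  obtain ⟨K, u, hu, hu0, hφu⟩ := hφ.exists_eventuallyEq_pow_smul_nonzero_iff.2 hne
  simp only [sub_zero, smul_eq_mul] at hφu
  have hK : 0 < K := by
    refine Nat.pos_of_ne_zero ?_
    rintro rfl
    simpa [hφ0, hu0.symm] using hφu.self_of_nhds
  obtain ⟨w, hw, hw0, huw⟩ := exists_analyticAt_eq_pow_of_ne_zero hu hu0 hK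
  have hψ : AnalyticAt ℂ (fun t => t * w t) 0 := analyticAt_id.fun_mul hw
  have hψ' : deriv (fun t => t * w t) 0 ≠ 0 := by
    rw [((hasDerivAt_id' (0 : ℂ)).fun_mul hw.differentiableAt.hasDerivAt).deriv]
    simpa using hw0
  have hγ := hψ.analyticAt_localInverse hψ'
  have hright := hψ.hasStrictDerivAt.eventually_right_inverse (hf' := hψ')
  have hγ0 := (hψ.hasStrictDerivAt.eventually_left_inverse (hf' := hψ')).self_of_nhds
  set γ := HasStrictDerivAt.localInverse _ _ _ hψ.hasStrictDerivAt hψ'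
  simp only [zero_mul] at hγ hright hγ0
  have hγtendsto : Tendsto γ (𝓝 0) (𝓝 0) := by simpa [hγ0] using hγ.continuousAt.tendsto
  refine ⟨K, γ, hK, hγ, hγ0, ?_⟩
  filter_upwards [hright, hγtendsto.eventually hφu, hγtendsto.eventually huw] with t ht hφt hut
  rw [hφt, hut, ← mul_pow, ht]

end Roots

section IntegralClosure

theorem analyticOrderAt_le_of_pow_eq_pow_mul {N T a : ℂ → ℂ} {ξ : ℂ} (hN : AnalyticAt ℂ N ξ)
    (hT : AnalyticAt ℂ T ξ) (ha : AnalyticAt ℂ a ξ) {r : ℕ} (hr : 0 < r)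
    (h : ∀ᶠ z in 𝓝 ξ, T z ^ r = N z ^ r * a z) : analyticOrderAt N ξ ≤ analyticOrderAt T ξ := by
  have horder : (r : ℕ∞) * analyticOrderAt T ξ = r * analyticOrderAt N ξ + analyticOrderAt a ξ := by
    rw [← nsmul_eq_mul, ← nsmul_eq_mul, ← analyticOrderAt_pow hT, ← analyticOrderAt_pow hN,
      ← analyticOrderAt_mul (hN.pow r) ha]
    exact analyticOrderAt_congr h
  exact (ENat.mul_le_mul_left_iff (by exact_mod_cast hr.ne') (ENat.natCast_ne_top r)).1
    (horder ▸ le_self_add)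

theorem GermDvd.of_analyticOrderAt_le {N T : ℂ → ℂ} {ξ : ℂ} (hN : AnalyticAt ℂ N ξ)
    (hT : AnalyticAt ℂ T ξ) (h : analyticOrderAt N ξ ≤ analyticOrderAt T ξ) : GermDvd N T ξ := by
  by_cases hzero : ∀ᶠ z in 𝓝 ξ, N z = 0
  · refine ⟨fun _ => 0, analyticAt_const, ?_⟩
    rw [analyticOrderAt_eq_top.2 hzero, top_le_iff, analyticOrderAt_eq_top] at h
    simpa using h
  obtain ⟨m, g, hg, hg0, hNg⟩ := hN.exists_eventuallyEq_pow_smul_nonzero_iff.2 hzero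
  rw [hN.analyticOrderAt_eq_natCast.2 ⟨g, hg, hg0, hNg⟩] at h
  obtain ⟨t, ht, hTt⟩ := (natCast_le_analyticOrderAt hT).1 h
  refine ⟨fun z => t z / g z, ht.fun_div hg hg0, ?_⟩
  filter_upwards [hNg, hTt, hg.continuousAt.eventually_ne hg0] with z hNz hTz hgz
  rw [hNz, hTz, smul_eq_mul, smul_eq_mul]
  field_simp

variable {E : Type*} [NormedAddCommGroup E] [NormedSpace ℂ E] {q : E}

/-- Integral closedness of the ring of germs, for the equations `X ^ r = a`. -/
theorem GermDvd.of_pow_eq_pow_mul {N T a : E → ℂ} (hN : AnalyticAt ℂ N q) (hT : AnalyticAt ℂ T q)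
    (ha : AnalyticAt ℂ a q) {r : ℕ} (hr : 0 < r) (hne : ¬ ∀ᶠ p in 𝓝 q, N p = 0)
    (h : ∀ᶠ p in 𝓝 q, T p ^ r = N p ^ r * a p) : GermDvd N T q := by
  obtain ⟨e, he⟩ := exists_line_not_eventually_eq_zero hN hne
  refine GermDvd.of_dense_lines hT hN he dense_univ
    (inter_mem hN.eventually_analyticAt (inter_mem hT.eventually_analyticAt
      (inter_mem ha.eventually_analyticAt h.eventually_nhds))) ?_
  rintro p - - ξ ⟨hNξ, hTξ, haξ, hξ⟩
  have hline : Tendsto (fun ζ : ℂ => p + ζ • e) (𝓝 ξ) (𝓝 (p + ξ • e)) :=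
    Continuous.tendsto' (by fun_prop) _ _ rfl
  exact .of_analyticOrderAt_le (analyticAt_line hNξ) (analyticAt_line hTξ)
    (analyticOrderAt_le_of_pow_eq_pow_mul (analyticAt_line hNξ) (analyticAt_line hTξ)
      (analyticAt_line haξ) hr (hline.eventually hξ))

end IntegralClosure

section NotProperPower

variable {E : Type*} [NormedAddCommGroup E] [NormedSpace ℂ E] {a : E → ℂ}

/-- The germ at the origin of `a` is not a proper power `b ^ K`, `K ≠ 1`, of a germ of holomorphic
function. The exponent `K = 0` is included, which excludes the constant `1`. -/
def NotProperPower (a : E → ℂ) : Prop :=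
  ∀ (K : ℕ) (b : E → ℂ), AnalyticAt ℂ b 0 → (∀ᶠ z in 𝓝 0, a z = b z ^ K) → K = 1

theorem exists_forall_exponent_le {A : E → ℂ} (hA : AnalyticAt ℂ A 0)
    (hne : ¬ ∀ᶠ z in 𝓝 0, A z = 0) :
    ∃ N : ℕ, ∀ (m : ℕ) (a : E → ℂ), AnalyticAt ℂ a 0 → a 0 = 0 →
      (∀ᶠ z in 𝓝 0, A z = a z ^ m) → m ≤ N := by
  obtain ⟨e, he⟩ := exists_line_not_eventually_eq_zero hA hne
  simp only [zero_add] at he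
  obtain ⟨N, hN⟩ := ENat.ne_top_iff_exists.1 (mt analyticOrderAt_eq_top.1 he)
  refine ⟨N, fun m a ha ha0 hAa => ?_⟩
  have hae : AnalyticAt ℂ (fun τ : ℂ => a (τ • e)) 0 := by
    simpa using analyticAt_line (p := 0) (b := e) (ξ := 0) (by simpa using ha)
  have horder : (N : ℕ∞) = m * analyticOrderAt (fun τ : ℂ => a (τ • e)) 0 := by
    rw [hN, ← nsmul_eq_mul, ← analyticOrderAt_pow hae]
    exact analyticOrderAt_congr ((tendsto_smul_nhds_zero e).eventually hAa)
  have hpos : 1 ≤ analyticOrderAt (fun τ : ℂ => a (τ • e)) 0 :=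
    Order.one_le_iff_ne_zero.2 (hae.analyticOrderAt_ne_zero.2 (by simpa using ha0))
  exact_mod_cast (le_mul_of_one_le_right' hpos).trans_eq horder.symm

theorem exists_eventually_eq_pow_notProperPower {A : E → ℂ} (hA : AnalyticAt ℂ A 0) (hA0 : A 0 = 0)
    (hne : ¬ ∀ᶠ z in 𝓝 0, A z = 0) :
    ∃ (m : ℕ) (a : E → ℂ), 0 < m ∧ AnalyticAt ℂ a 0 ∧ (∀ᶠ z in 𝓝 0, A z = a z ^ m) ∧ a 0 = 0 ∧
      NotProperPower a := by
  classical
  let IsExponent (m : ℕ) : Prop :=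
    ∃ a : E → ℂ, AnalyticAt ℂ a 0 ∧ a 0 = 0 ∧ ∀ᶠ z in 𝓝 0, A z = a z ^ m
  obtain ⟨N, hN⟩ := exists_forall_exponent_le hA hne
  have hbound (m : ℕ) : IsExponent m → m ≤ N := fun ⟨a, ha, ha0, hAa⟩ => hN m a ha ha0 hAa
  have hone : IsExponent 1 := ⟨A, hA, hA0, by simp⟩
  obtain ⟨a, ha, ha0, hAa⟩ := Nat.findGreatest_spec (P := IsExponent) (hbound 1 hone) hone
  have hm : 0 < Nat.findGreatest IsExponent N := Nat.le_findGreatest (hbound 1 hone) hone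
  refine ⟨_, a, hm, ha, hAa, ha0, fun K b hb hab => ?_⟩
  have hbK : b 0 ^ K = 0 := hab.self_of_nhds.symm.trans ha0
  have hK : K ≠ 0 := by
    rintro rfl
    simp at hbK
  have hmul : IsExponent (K * Nat.findGreatest IsExponent N) := by
    refine ⟨b, hb, eq_zero_of_pow_eq_zero hbK, ?_⟩
    filter_upwards [hAa, hab] with z hAz haz
    rw [hAz, haz, pow_mul]
  have hle := Nat.le_findGreatest (hbound _ hmul) hmul
  exact le_antisymm (le_of_mul_le_mul_right (by simpa using hle) hm) (Nat.one_le_iff_ne_zero.2 hK)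

namespace NotProperPower

theorem const_mul (h : NotProperPower a) {μ : ℂ} (hμ : μ ≠ 0) (ha0 : a 0 = 0) :
    NotProperPower (fun z => μ * a z) := by
  intro K b hb hab
  have hK : K ≠ 0 := by
    rintro rfl
    simpa [ha0] using hab.self_of_nhds
  obtain ⟨ν, hν⟩ := IsAlgClosed.exists_pow_nat_eq μ⁻¹ (Nat.pos_of_ne_zero hK)
  refine h K (fun z => ν * b z) (analyticAt_const.fun_mul hb) ?_
  filter_upwards [hab] with z hz
  rw [mul_pow, hν, ← hz, inv_mul_cancel_left₀ hμ]

/-- If `k x = y K + 1`, integral closedness turns `d ^ K = a ^ k` into `a = (d ^ x / a ^ y) ^ K`. -/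
theorem eq_one_of_pow_eq_pow_of_coprime (hnp : NotProperPower a) (ha : AnalyticAt ℂ a 0)
    (hane : ¬ ∀ᶠ z in 𝓝 0, a z = 0) {d : E → ℂ} (hd : AnalyticAt ℂ d 0) {K k : ℕ} (hK : 0 < K)
    (hcop : K.Coprime k) (h : ∀ᶠ z in 𝓝 0, d z ^ K = a z ^ k) : K = 1 := by
  by_contra hK1
  obtain ⟨x, -, hx⟩ := Nat.exists_mul_mod_eq_one_of_coprime hcop.symm (by omega : 1 < K)
  let y := k * x / K
  have hxy : k * x = y * K + 1 := by rw [← hx, mul_comm y, Nat.div_add_mod]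
  have hpow : ∀ᶠ z in 𝓝 0, (d z ^ x) ^ K = (a z ^ y) ^ K * a z := by
    filter_upwards [h] with z hz
    rw [← pow_mul, mul_comm x K, pow_mul, hz, ← pow_mul, ← pow_mul, hxy, pow_succ]
  have hane' := not_eventually_pow_eq_zero hane y
  obtain ⟨b, hb, hdb⟩ := GermDvd.of_pow_eq_pow_mul (ha.fun_pow y) (hd.fun_pow x) ha hK hane' hpow
  refine hK1 (hnp K b hb (eventually_eq_of_mul_eq_mul ((ha.fun_pow y).fun_pow K)
    (not_eventually_pow_eq_zero hane' K) ha (hb.fun_pow K) ?_))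
  filter_upwards [hpow, hdb] with z hz hdz
  rw [← hz, hdz, mul_pow]

theorem dvd_of_pow_eq_mul_pow {c u : E → ℂ} (hnp : NotProperPower a) (ha : AnalyticAt ℂ a 0)
    (hane : ¬ ∀ᶠ z in 𝓝 0, a z = 0) (hc : AnalyticAt ℂ c 0) (hu : AnalyticAt ℂ u 0) (hu0 : u 0 ≠ 0)
    {K k : ℕ} (hK : 0 < K) (h : ∀ᶠ z in 𝓝 0, c z ^ K = u z * a z ^ k) : K ∣ k := by
  obtain ⟨w, hw, hw0, huw⟩ := exists_analyticAt_eq_pow_of_ne_zero hu hu0 hK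
  obtain ⟨g, K', k', hg, hcop, rfl, rfl⟩ :=
    Nat.exists_coprime' (m := K) (n := k) (Nat.gcd_pos_of_pos_left _ hK)
  have hK' : 0 < K' := Nat.pos_of_mul_pos_right hK
  have hcw : AnalyticAt ℂ (fun z => c z / w z) 0 := hc.fun_div hw hw0
  have hpow : ∀ᶠ z in 𝓝 0, ((c z / w z) ^ K') ^ g = (a z ^ k') ^ g := by
    filter_upwards [h, huw, hw.continuousAt.eventually_ne hw0] with z hz huz hwz
    rw [← pow_mul, ← pow_mul, div_pow, hz, huz, mul_div_cancel_left₀ _ (pow_ne_zero _ hwz)]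
  obtain ⟨ζ, hζ, hroot⟩ :=
    exists_pow_eq_one_eventually_eq_mul (hcw.fun_pow _) (ha.fun_pow _) hg hpow
  have hζ0 : ζ ≠ 0 := by
    rintro rfl
    simp [hg.ne'] at hζ
  obtain ⟨ν, hν⟩ := IsAlgClosed.exists_pow_nat_eq ζ⁻¹ hK'
  have hK'one : K' = 1 := by
    refine hnp.eq_one_of_pow_eq_pow_of_coprime ha hane (d := fun z => ν * (c z / w z))
      (analyticAt_const.fun_mul hcw) hK' hcop ?_
    filter_upwards [hroot] with z hz
    rw [mul_pow, hν, hz, inv_mul_cancel_left₀ hζ0]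
  rw [hK'one, one_mul]
  exact Dvd.intro_left k' rfl

end NotProperPower

end NotProperPower

/-! ### A primitive first integral -/

section PrimitiveIntegral

theorem GermDvd.pow_sub_pow {E : Type*} [NormedAddCommGroup E] [NormedSpace ℂ E] {G f g : E → ℂ}
    {q : E} (h : GermDvd G (fun p => f p - g p) q) (hf : AnalyticAt ℂ f q) (hg : AnalyticAt ℂ g q)
    (m : ℕ) : GermDvd G (fun p => f p ^ m - g p ^ m) q := by
  have hsum : AnalyticAt ℂ (fun p => ∑ i ∈ Finset.range m, f p ^ i * g p ^ (m - 1 - i)) q :=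
    Finset.analyticAt_fun_sum _ fun i _ => (hf.fun_pow _).fun_mul (hg.fun_pow _)
  exact (h.mul_left hsum).congr (Eventually.of_forall fun p => (geom_sum₂_mul (f p) (g p) m).symm)

theorem GermDvd.fderivMinorsDvd {ι E : Type*} [NormedAddCommGroup E] [NormedSpace ℂ E]
    {G T : E → ℂ} (hT : GermDvd G T 0) (hG : AnalyticAt ℂ G 0) (v : ι → E) :
    FDerivMinorsDvd v G T := by
  obtain ⟨Q, hQ, hTQ⟩ := hT
  intro i j
  refine ⟨fun p => fderiv ℂ Q p (v i) * fderiv ℂ G p (v j) -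
    fderiv ℂ Q p (v j) * fderiv ℂ G p (v i),
    ((analyticAt_fderiv_apply hQ _).fun_mul (analyticAt_fderiv_apply hG _)).fun_sub
      ((analyticAt_fderiv_apply hQ _).fun_mul (analyticAt_fderiv_apply hG _)), ?_⟩
  filter_upwards [hTQ.eventually_nhds, hG.eventually_analyticAt, hQ.eventually_analyticAt]
    with p hTp hGp hQp
  have hfderiv : fderiv ℂ T p = G p • fderiv ℂ Q p + Q p • fderiv ℂ G p := by
    rw [EventuallyEq.fderiv_eq (f := fun p => G p * Q p) hTp]
    exact fderiv_fun_mul hGp.differentiableAt hQp.differentiableAt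
  simp only [hfderiv, add_apply, smul_apply, smul_eq_mul]
  ring

variable {V W : Type*} [NormedAddCommGroup V] [NormedSpace ℂ V] [NormedAddCommGroup W]
  [NormedSpace ℂ W] {G : V × W → ℂ}

theorem fderiv_pow_comp_fst_sub_comp_snd_apply {a : V → ℂ} {b : W → ℂ} {p : V × W}
    (ha : DifferentiableAt ℂ a p.1) (hb : DifferentiableAt ℂ b p.2) (m : ℕ) {u : V × W}
    (hu : u.2 = 0) :
    fderiv ℂ (fun p : V × W => a p.1 ^ m - b p.2) p u =
      m * a p.1 ^ (m - 1) * fderiv ℂ (fun p : V × W => a p.1) p u := by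
  have ha' : HasFDerivAt (fun p : V × W => a p.1)
      ((fderiv ℂ a p.1).comp (ContinuousLinearMap.fst ℂ V W)) p :=
    ha.hasFDerivAt.comp p hasFDerivAt_fst
  have hb' : HasFDerivAt (fun p : V × W => b p.2)
      ((fderiv ℂ b p.2).comp (ContinuousLinearMap.snd ℂ V W)) p :=
    hb.hasFDerivAt.comp p hasFDerivAt_snd
  rw [((ha'.pow m).fun_sub hb').fderiv, ha'.fderiv]
  simp [hu]

theorem GermDvd.fderivMinorsDvd_comp_fst {ι : Type*} {a : V → ℂ} {b : W → ℂ} {m : ℕ}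
    (h : GermDvd G (fun p => a p.1 ^ m - b p.2) 0) (hG : AnalyticAt ℂ G 0) (ha : AnalyticAt ℂ a 0)
    (hane : ¬ ∀ᶠ z in 𝓝 0, a z = 0) (hb : AnalyticAt ℂ b 0) (hm : 0 < m) {e : W}
    (he : ¬ ∀ᶠ τ in 𝓝 (0 : ℂ), G (0, τ • e) = 0) {v : ι → V × W} (hv : ∀ i, (v i).2 = 0) :
    FDerivMinorsDvd v G (fun p => a p.1) := by
  intro i j
  have ha' : AnalyticAt ℂ (fun p : V × W => a p.1) 0 := analyticAt_comp_fst ha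
  have hN : AnalyticAt ℂ (fun p : V × W => (m : ℂ) * a p.1 ^ (m - 1)) 0 :=
    analyticAt_const.fun_mul (ha'.fun_pow _)
  have hNne : ¬ ∀ᶠ p : V × W in 𝓝 0, (m : ℂ) * a p.1 ^ (m - 1) = 0 := by
    intro hzero
    refine not_eventually_pow_eq_zero hane (m - 1)
      ((tendsto_mk_zero_nhds_zero.eventually hzero).mono fun z hz => ?_)
    exact (mul_eq_zero.1 hz).resolve_left (Nat.cast_ne_zero.2 hm.ne')
  refine GermDvd.of_mul_left_of_invariant (e := (0, e)) hN hNne (fun p τ => by simp)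
    (((analyticAt_fderiv_apply ha' _).fun_mul (analyticAt_fderiv_apply hG _)).fun_sub
      ((analyticAt_fderiv_apply ha' _).fun_mul (analyticAt_fderiv_apply hG _))) hG
    (by simpa using he) ((h.fderivMinorsDvd hG v i j).congr ?_)
  filter_upwards [(continuous_fst.tendsto' (0 : V × W) 0 rfl).eventually ha.eventually_analyticAt,
    (continuous_snd.tendsto' (0 : V × W) 0 rfl).eventually hb.eventually_analyticAt] with p hap hbp
  have hfderiv (k : ι) := fderiv_pow_comp_fst_sub_comp_snd_apply hap.differentiableAt
    hbp.differentiableAt m (hv k)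
  rw [hfderiv, hfderiv]
  ring

theorem GermDvd.eventually_pow_eq_pow {a : V → ℂ} {b c : W → ℂ} {m : ℕ}
    (h : GermDvd G (fun p => a p.1 - b p.2) 0)
    (hpow : GermDvd G (fun p => a p.1 ^ m - c p.2 ^ m) 0) (hG : AnalyticAt ℂ G 0) (hG0 : G 0 = 0)
    (ha : AnalyticAt ℂ a 0) (hb : AnalyticAt ℂ b 0) {e : V}
    (he : ¬ ∀ᶠ τ in 𝓝 (0 : ℂ), G (τ • e, 0) = 0) : ∀ᶠ w in 𝓝 0, b w ^ m = c w ^ m := by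
  have hsub : GermDvd G (fun p => b p.2 ^ m - c p.2 ^ m) 0 :=
    (hpow.sub (h.pow_sub_pow (analyticAt_comp_fst ha) (analyticAt_comp_snd hb) m)).congr
      (Eventually.of_forall fun p => by ring)
  have hzero := GermDvd.eventually_eq_zero_of_invariant (e := (e, 0)) hG hG0 (by simpa using he)
    (fun p τ => by simp) hsub
  exact (tendsto_zero_mk_nhds_zero.eventually hzero).mono fun w hw => sub_eq_zero.1 hw

end PrimitiveIntegral

/-- If `ζ = η ^ 2`, then `μ = conj η` turns `a(z) = ζ conj (a (conj w))` into a symmetric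
equation. -/
theorem exists_germDvd_const_mul_sub_starConj {V : Type*} [NormedAddCommGroup V] [NormedSpace ℂ V]
    [Star V] {G : V × V → ℂ} {a : V → ℂ} {ζ : ℂ} (hζ : ‖ζ‖ = 1)
    (h : GermDvd G (fun p => a p.1 - ζ * starConj a p.2) 0) :
    ∃ μ : ℂ, μ ≠ 0 ∧ GermDvd G (fun p => μ * a p.1 - starConj (fun z => μ * a z) p.2) 0 := by
  obtain ⟨η, rfl⟩ := IsAlgClosed.exists_pow_nat_eq ζ two_pos
  have hηnorm : ‖η‖ = 1 := by
    rw [norm_pow] at hζ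
    exact (pow_eq_one_iff_of_nonneg (norm_nonneg _) two_ne_zero).1 hζ
  have hη : star η * η = 1 := by
    rw [Complex.star_def, Complex.conj_mul', hηnorm]
    norm_num
  refine ⟨star η, left_ne_zero_of_mul_eq_one hη,
    (h.mul_left (S := fun _ => star η) analyticAt_const).congr (Eventually.of_forall fun p => ?_)⟩
  simp only [starConj, star_mul', star_star]
  linear_combination (η * star (a (star p.2))) * hη

theorem SmallSing.exists_primitive_integral {n : ℕ} {G : (Fin n → ℂ) × (Fin n → ℂ) → ℂ}
    (hs : SmallSing G) (hG : AnalyticAt ℂ G 0) (hG0 : G 0 = 0) (hGherm : IsHermitianGerm G)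
    (hGne : ¬ ∀ᶠ z in 𝓝 (0 : Fin n → ℂ), G (z, 0) = 0) {A : (Fin n → ℂ) → ℂ}
    (hA : AnalyticAt ℂ A 0) (hA0 : A 0 = 0) (hAne : ¬ ∀ᶠ z in 𝓝 0, A z = 0)
    (hAdvd : GermDvd G (fun p => A p.1 - starConj A p.2) 0) :
    ∃ a : (Fin n → ℂ) → ℂ, AnalyticAt ℂ a 0 ∧ a 0 = 0 ∧ (¬ ∀ᶠ z in 𝓝 0, a z = 0) ∧
      NotProperPower a ∧ GermDvd G (fun p => a p.1 - starConj a p.2) 0 := by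
  obtain ⟨e, he⟩ := exists_line_not_eventually_eq_zero (analyticAt_slice_fst hG) hGne
  obtain ⟨e', he'⟩ := exists_line_not_eventually_eq_zero (analyticAt_slice_snd hG)
    (mt hGherm.eventually_slice_eq_zero_iff.2 hGne)
  simp only [zero_add] at he he'
  obtain ⟨m, a, hm, ha, hAa, ha0, hnp⟩ := exists_eventually_eq_pow_notProperPower hA hA0 hAne
  have hane : ¬ ∀ᶠ z in 𝓝 0, a z = 0 := fun hzero => hAne <| by
    filter_upwards [hzero, hAa] with z hz hAz
    rw [hAz, hz, zero_pow hm.ne']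
  have hpow : GermDvd G (fun p => a p.1 ^ m - starConj a p.2 ^ m) 0 := by
    refine hAdvd.congr ?_
    filter_upwards [(continuous_fst.tendsto' 0 0 rfl).eventually hAa,
      (tendsto_star_nhds_zero.comp (continuous_snd.tendsto' 0 0 rfl)).eventually hAa] with p hp hp'
    rw [Function.comp_apply] at hp'
    rw [hp, starConj, starConj, hp', star_pow]
  have hminors := hpow.fderivMinorsDvd_comp_fst (v := dirZ) hG ha hane
    ((analyticAt_starConj ha).fun_pow m) hm he' fun _ => rfl
  obtain ⟨b, hb, hbdvd⟩ := hs.exists_germDvd_sub_comp_snd hG hG0 (analyticAt_comp_fst ha) hminors he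
  obtain ⟨ζ, hζ, hbζ⟩ := exists_pow_eq_one_eventually_eq_mul hb (analyticAt_starConj ha) hm
    (hbdvd.eventually_pow_eq_pow hpow hG hG0 ha hb he)
  obtain ⟨μ, hμ, hdvd⟩ := exists_germDvd_const_mul_sub_starConj
    (Complex.norm_eq_one_of_pow_eq_one hζ hm.ne') (hbdvd.congr <|
      ((continuous_snd.tendsto' 0 0 rfl).eventually hbζ).mono fun p hp => by rw [hp])
  refine ⟨fun z => μ * a z, analyticAt_const.fun_mul ha, by simp [ha0], ?_,
    hnp.const_mul hμ ha0, hdvd⟩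
  simpa [hμ] using hane

/-! ### Irreducibility of `a(z) - t ^ K` -/

theorem eventually_exists_zero_add_smul {E : Type*} [NormedAddCommGroup E] [NormedSpace ℂ E]
    {G : E → ℂ} {q e : E} (hG : AnalyticAt ℂ G q) (hG0 : G q = 0)
    (he : ¬ ∀ᶠ τ in 𝓝 (0 : ℂ), G (q + τ • e) = 0) {P : E → Prop} (hP : ∀ᶠ x in 𝓝 q, P x) :
    ∀ᶠ p in 𝓝 q, ∃ τ : ℂ, P (p + τ • e) ∧ G (p + τ • e) = 0 := by
  obtain ⟨r, hdisc, -, hr⟩ := exists_divisionDisc hG he hP.eventually_nhds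
  have hrem : ∀ᶠ p in 𝓝 q, discRemainder G e r (fun _ => 1) p ≠ 0 := by
    refine (hdisc.analyticAt_discRemainder
      fun _ _ => analyticAt_const).continuousAt.eventually_ne ?_
    simp [discRemainder, hG0]
  -- If `G` had no zeros on the disc through `p`, it would divide `1` there.
  filter_upwards [hrem, eventually_forall_norm_le_add_smul hr, hdisc.eventually]
    with p hpne hpP hpdisc
  by_contra! hnozero
  refine hpne (hpdisc.discRemainder_eq_zero fun τ hτ => ?_)
  exact (GermDvd.of_ne_zero (hpdisc.analytic τ hτ) analyticAt_const (hnozero τ (hpP τ hτ))).line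

theorem analyticOrderAt_fun_prod {ι : Type*} (s : Finset ι) {f : ι → ℂ → ℂ} {z : ℂ}
    (hf : ∀ i ∈ s, AnalyticAt ℂ (f i) z) :
    analyticOrderAt (fun t => ∏ i ∈ s, f i t) z = ∑ i ∈ s, analyticOrderAt (f i) z := by
  classical
  induction s using Finset.induction_on with
  | empty => simpa using analyticAt_const.analyticOrderAt_eq_zero.2 (one_ne_zero (α := ℂ))
  | insert i s his ih =>
    rw [Finset.forall_mem_insert] at hf
    simp only [Finset.prod_insert his, Finset.sum_insert his, ← ih hf.2]
    exact analyticOrderAt_mul hf.1 (Finset.analyticAt_fun_prod _ hf.2)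

section SubPow

variable {V : Type*} {K : ℕ} {a : V → ℂ} {g q H J : V × ℂ → ℂ}

/-- The germ `a(z) - t ^ K` on `V × ℂ`, the pullback of `a(z) - c(w)` along a curve `t ↦ w(t)` on
which `c` restricts to `t ^ K`. -/
def subPow (a : V → ℂ) (K : ℕ) (p : V × ℂ) : ℂ := a p.1 - p.2 ^ K

/-- The norm of `g(z, t)` for the cyclic extension generated by `t = (t ^ K) ^ (1 / K)`: the product
of the conjugates `g(z, ζ t)` over the `K`-th roots of unity `ζ`. -/
noncomputable def cyclicNorm (K : ℕ) (g : V × ℂ → ℂ) (p : V × ℂ) : ℂ :=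
  ∏ ζ ∈ Polynomial.nthRootsFinset K (1 : ℂ), g (p.1, ζ * p.2)

theorem subPow_rotate {ζ : ℂ} (hζ : ζ ^ K = 1) (p : V × ℂ) :
    subPow a K (p.1, ζ * p.2) = subPow a K p := by
  simp [subPow, mul_pow, hζ]

theorem card_nthRootsFinset_one (hK : 0 < K) : (Polynomial.nthRootsFinset K (1 : ℂ)).card = K :=
  (Complex.isPrimitiveRoot_exp K hK.ne').card_nthRootsFinset

theorem cyclicNorm_mk_zero (hK : 0 < K) (g : V × ℂ → ℂ) (z : V) :
    cyclicNorm K g (z, 0) = g (z, 0) ^ K := by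
  simp [cyclicNorm, card_nthRootsFinset_one hK]

theorem cyclicNorm_rotate (hK : 0 < K) (g : V × ℂ → ℂ) {ω : ℂ} (hω : ω ^ K = 1) (p : V × ℂ) :
    cyclicNorm K g (p.1, ω * p.2) = cyclicNorm K g p := by
  have hω0 : ω ≠ 0 := by
    rintro rfl
    simp [hK.ne'] at hω
  refine Finset.prod_nbij' (fun ζ => ζ * ω) (fun ζ => ζ / ω) ?_ ?_ ?_ ?_ ?_ <;>
    simp +contextual [Polynomial.mem_nthRootsFinset hK, mul_pow, div_pow, hω, hω0, mul_assoc]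

variable [NormedAddCommGroup V]

/-- The germ of `H` at the origin is invariant under `t ↦ ζ t` for the `K`-th roots of unity `ζ`. -/
def IsRotationInvariant (K : ℕ) (H : V × ℂ → ℂ) : Prop :=
  ∀ ζ : ℂ, ζ ^ K = 1 → ∀ᶠ p : V × ℂ in 𝓝 0, H (p.1, ζ * p.2) = H p

theorem tendsto_rotate_nhds_zero (ζ : ℂ) :
    Tendsto (fun p : V × ℂ => (p.1, ζ * p.2)) (𝓝 0) (𝓝 0) :=
  Continuous.tendsto' (by fun_prop) 0 0 (by simp)

theorem eventually_forall_root_rotate (hK : 0 < K) {P : ℂ → V × ℂ → Prop}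
    (hP : ∀ ζ : ℂ, ζ ^ K = 1 → ∀ᶠ p in 𝓝 0, P ζ p) :
    ∀ᶠ p in 𝓝 0, ∀ ζ : ℂ, ζ ^ K = 1 → P ζ p := by
  simp only [← Polynomial.mem_nthRootsFinset hK (1 : ℂ)] at hP ⊢
  exact (eventually_all_finset _).2 hP

theorem eventually_cyclicNorm_mul_cyclicNorm (hK : 0 < K)
    (h : ∀ᶠ p in 𝓝 0, g p * q p = subPow a K p) :
    ∀ᶠ p in 𝓝 0, cyclicNorm K g p * cyclicNorm K q p = subPow a K p ^ K := by
  filter_upwards [eventually_forall_root_rotate hK fun ζ _ =>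
    (tendsto_rotate_nhds_zero ζ).eventually h] with p hp
  rw [cyclicNorm, cyclicNorm, ← Finset.prod_mul_distrib,
    Finset.prod_eq_pow_card (b := subPow a K p) _, card_nthRootsFinset_one hK]
  intro ζ hζ
  rw [Polynomial.mem_nthRootsFinset hK] at hζ
  rw [hp ζ hζ, subPow_rotate hζ]

/-- The order of vanishing at the origin of the restriction of `g` to the `t`-axis. -/
noncomputable def axisOrder (g : V × ℂ → ℂ) : ℕ∞ := analyticOrderAt (fun t : ℂ => g (0, t)) 0

theorem axisOrder_congr (h : ∀ᶠ p in 𝓝 0, g p = H p) : axisOrder g = axisOrder H :=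
  analyticOrderAt_congr (tendsto_zero_mk_nhds_zero.eventually h)

theorem axisOrder_subPow (ha0 : a 0 = 0) (K : ℕ) : axisOrder (subPow a K) = K := by
  simp only [axisOrder, subPow, ha0, zero_sub]
  rw [((analyticAt_id.fun_pow K).fun_neg).analyticOrderAt_eq_natCast]
  exact ⟨fun _ => -1, analyticAt_const, by simp, by simp⟩

variable [NormedSpace ℂ V]

theorem analyticAt_subPow (ha : AnalyticAt ℂ a 0) (K : ℕ) : AnalyticAt ℂ (subPow a K) 0 :=
  (analyticAt_comp_fst ha).fun_sub (analyticAt_snd.fun_pow K)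

theorem analyticAt_comp_rotate (hH : AnalyticAt ℂ H 0) (ζ : ℂ) :
    AnalyticAt ℂ (fun p : V × ℂ => H (p.1, ζ * p.2)) 0 :=
  AnalyticAt.fun_comp_of_eq (f := fun p : V × ℂ => (p.1, ζ * p.2)) hH
    (analyticAt_fst.prod (analyticAt_const.fun_mul analyticAt_snd)) (by simp)

theorem analyticAt_cyclicNorm (hg : AnalyticAt ℂ g 0) (K : ℕ) : AnalyticAt ℂ (cyclicNorm K g) 0 :=
  Finset.analyticAt_fun_prod _ fun ζ _ => analyticAt_comp_rotate hg ζ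

theorem subPow_add_smul (p : V × ℂ) (ξ : ℂ) :
    subPow a K (p + ξ • ((0, 1) : V × ℂ)) = a p.1 - (p.2 + ξ) ^ K := by
  simp [subPow]

theorem not_eventually_subPow_line_eq_zero (ha0 : a 0 = 0) (K : ℕ) :
    ¬ ∀ᶠ ξ in 𝓝 (0 : ℂ), subPow a K ((0 : V × ℂ) + ξ • ((0, 1) : V × ℂ)) = 0 := by
  simp only [subPow_add_smul, Prod.fst_zero, Prod.snd_zero, ha0, zero_sub, neg_eq_zero]
  simp only [zero_add]
  intro hzero
  obtain ⟨t, ht, ht0⟩ := ((hzero.filter_mono nhdsWithin_le_nhds).and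
    (self_mem_nhdsWithin (s := {(0 : ℂ)}ᶜ))).exists
  exact ht0 (eq_zero_of_pow_eq_zero ht)

theorem not_eventually_subPow_eq_zero (ha0 : a 0 = 0) (K : ℕ) :
    ¬ ∀ᶠ p in 𝓝 0, subPow a K p = 0 := fun hzero =>
  not_eventually_subPow_line_eq_zero ha0 K <|
    (Continuous.tendsto' (by fun_prop) 0 0 (by simp) :
      Tendsto (fun ξ : ℂ => (0 : V × ℂ) + ξ • ((0, 1) : V × ℂ)) (𝓝 0) (𝓝 0)).eventually hzero

theorem deriv_subPow_line_ne_zero (hK : 0 < K) {p : V × ℂ} (ha : a p.1 ≠ 0) {ξ : ℂ}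
    (hξ : subPow a K (p + ξ • ((0, 1) : V × ℂ)) = 0) :
    deriv (fun ζ : ℂ => subPow a K (p + ζ • ((0, 1) : V × ℂ))) ξ ≠ 0 := by
  simp only [subPow_add_smul, sub_eq_zero] at hξ ⊢
  have hderiv : HasDerivAt (fun ζ : ℂ => a p.1 - (p.2 + ζ) ^ K)
      (-(K * (p.2 + ξ) ^ (K - 1) * 1)) ξ :=
    (((hasDerivAt_id' ξ).const_add p.2).fun_pow K).const_sub (a p.1)
  have hne : p.2 + ξ ≠ 0 := fun h => ha (by rw [hξ, h, zero_pow hK.ne'])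
  rw [hderiv.deriv, mul_one]
  exact neg_ne_zero.2 (mul_ne_zero (Nat.cast_ne_zero.2 hK.ne') (pow_ne_zero _ hne))

theorem exists_rotate_eq_of_subPow_eq_zero (hK : 0 < K) {p : V × ℂ} (ha : a p.1 ≠ 0) {τ ξ : ℂ}
    (hτ : subPow a K (p + τ • ((0, 1) : V × ℂ)) = 0)
    (hξ : subPow a K (p + ξ • ((0, 1) : V × ℂ)) = 0) :
    ∃ ζ : ℂ, ζ ^ K = 1 ∧ p + ξ • ((0, 1) : V × ℂ) =
      ((p + τ • ((0, 1) : V × ℂ)).1, ζ * (p + τ • ((0, 1) : V × ℂ)).2) := by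
  rw [subPow_add_smul, sub_eq_zero] at hτ hξ
  have hne : p.2 + τ ≠ 0 := fun h => ha (by rw [hτ, h, zero_pow hK.ne'])
  refine ⟨(p.2 + ξ) / (p.2 + τ), by rw [div_pow, ← hτ, ← hξ, div_self ha], ?_⟩
  ext <;> simp [div_mul_cancel₀ _ hne]

/-- On a line `z = const` with `a(z) ≠ 0` the zeros of `a(z) - t ^ K` are simple and form one orbit
of the rotations, so `H` vanishes at all of them once it vanishes at one. -/
theorem IsRotationInvariant.germDvd_subPow (ha : AnalyticAt ℂ a 0) (ha0 : a 0 = 0)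
    (hane : ¬ ∀ᶠ z in 𝓝 0, a z = 0) (hK : 0 < K) {s : ℕ} (hH : AnalyticAt ℂ H 0)
    (hHJ : ∀ᶠ p in 𝓝 0, H p * J p = subPow a K p ^ s) (hinv : IsRotationInvariant K H)
    (hH0 : H 0 = 0) : GermDvd (subPow a K) H 0 := by
  have hD := analyticAt_subPow ha K
  obtain ⟨A, hA, hAne⟩ := exists_dense_ne_zero (analyticAt_comp_fst (W := ℂ) ha)
    fun hzero => hane (tendsto_mk_zero_nhds_zero.eventually hzero)
  have hHsub : ∀ᶠ p in 𝓝 0, H p = 0 → subPow a K p = 0 := by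
    filter_upwards [hHJ] with p hp hHp
    rw [hHp, zero_mul] at hp
    exact eq_zero_of_pow_eq_zero hp.symm
  have hHne : ¬ ∀ᶠ τ in 𝓝 (0 : ℂ), H ((0 : V × ℂ) + τ • ((0, 1) : V × ℂ)) = 0 := fun hzero => by
    have hline : Tendsto (fun τ : ℂ => (0 : V × ℂ) + τ • ((0, 1) : V × ℂ)) (𝓝 0) (𝓝 0) :=
      Continuous.tendsto' (by fun_prop) 0 0 (by simp)
    refine not_eventually_subPow_line_eq_zero (V := V) ha0 K ?_
    filter_upwards [hzero, hline.eventually hHsub] with ξ hξ hsub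
    exact hsub hξ
  have hzeros := eventually_exists_zero_add_smul hH hH0 hHne
    ((eventually_forall_root_rotate hK hinv).and hHsub)
  refine GermDvd.of_dense_lines hH hD (not_eventually_subPow_line_eq_zero ha0 K) hA
    (hzeros.and (hAne.and (hH.eventually_analyticAt.and hD.eventually_analyticAt))) ?_
  rintro p hpA ⟨⟨τ, ⟨hrot, hsub⟩, hHτ⟩, hpne, -⟩ ξ ⟨-, -, hHξ, hDξ⟩
  by_cases hξ : subPow a K (p + ξ • ((0, 1) : V × ℂ)) = 0
  · obtain ⟨ζ, hζ, hζξ⟩ := exists_rotate_eq_of_subPow_eq_zero hK (hpne hpA) (hsub hHτ) hξ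
    refine GermDvd.of_simple_zero (analyticAt_line hDξ) (analyticAt_line hHξ)
      (deriv_subPow_line_ne_zero hK (hpne hpA) hξ) hξ ?_
    rw [hζξ, hrot ζ hζ, hHτ]
  · exact (GermDvd.of_ne_zero hDξ hHξ hξ).line

theorem IsRotationInvariant.exists_eq_mul_subPow_pow (ha : AnalyticAt ℂ a 0) (ha0 : a 0 = 0)
    (hane : ¬ ∀ᶠ z in 𝓝 0, a z = 0) (hK : 0 < K) {s : ℕ} (hH : AnalyticAt ℂ H 0)
    (hJ : AnalyticAt ℂ J 0) (hHJ : ∀ᶠ p in 𝓝 0, H p * J p = subPow a K p ^ s)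
    (hinv : IsRotationInvariant K H) :
    ∃ (l : ℕ) (U : V × ℂ → ℂ), AnalyticAt ℂ U 0 ∧ U 0 ≠ 0 ∧
      ∀ᶠ p in 𝓝 0, H p = U p * subPow a K p ^ l := by
  induction s generalizing H with
  | zero =>
    refine ⟨0, H, hH, fun hH0 => ?_, by simp⟩
    simpa [hH0] using hHJ.self_of_nhds
  | succ s ih =>
    by_cases hH0 : H 0 = 0
    swap
    · exact ⟨0, H, hH, hH0, by simp⟩
    have hD := analyticAt_subPow ha K
    have hDne := not_eventually_subPow_eq_zero ha0 K
    obtain ⟨H', hH', hHH'⟩ := hinv.germDvd_subPow ha ha0 hane hK hH hHJ hH0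
    have hHJ' : ∀ᶠ p in 𝓝 0, H' p * J p = subPow a K p ^ s := by
      refine eventually_eq_of_mul_eq_mul hD hDne (hH'.fun_mul hJ) (hD.fun_pow s) ?_
      filter_upwards [hHH', hHJ] with p hp hp'
      rw [← mul_assoc, ← hp, hp', pow_succ']
    have hinv' : IsRotationInvariant K H' := fun ζ hζ => by
      refine eventually_eq_of_mul_eq_mul hD hDne (analyticAt_comp_rotate hH' ζ) hH' ?_
      filter_upwards [hHH', (tendsto_rotate_nhds_zero ζ).eventually hHH', hinv ζ hζ]
        with p hp hpζ hinvp
      rw [← hp, ← hinvp, hpζ, subPow_rotate hζ]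
    obtain ⟨l, U, hU, hU0, hHU⟩ := ih hH' hHJ' hinv'
    refine ⟨l + 1, U, hU, hU0, ?_⟩
    filter_upwards [hHU, hHH'] with p hp hp'
    rw [hp', hp]
    ring

theorem axisOrder_mul (hg : AnalyticAt ℂ g 0) (hq : AnalyticAt ℂ q 0) :
    axisOrder (fun p => g p * q p) = axisOrder g + axisOrder q :=
  analyticOrderAt_mul (analyticAt_slice_snd hg) (analyticAt_slice_snd hq)

theorem axisOrder_pow (hg : AnalyticAt ℂ g 0) (l : ℕ) :
    axisOrder (fun p => g p ^ l) = l * axisOrder g :=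
  (analyticOrderAt_pow (analyticAt_slice_snd hg) l).trans (nsmul_eq_mul _ _)

theorem axisOrder_eq_zero_iff (hg : AnalyticAt ℂ g 0) : axisOrder g = 0 ↔ g 0 ≠ 0 :=
  (analyticAt_slice_snd hg).analyticOrderAt_eq_zero

theorem axisOrder_cyclicNorm (hg : AnalyticAt ℂ g 0) (hK : 0 < K) :
    axisOrder (cyclicNorm K g) = K * axisOrder g := by
  have hrot : ∀ ζ ∈ Polynomial.nthRootsFinset K (1 : ℂ),
      analyticOrderAt (fun t : ℂ => g (0, ζ * t)) 0 = axisOrder g := by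
    intro ζ hζ
    have hcomp := analyticOrderAt_comp_of_deriv_ne_zero (f := fun t : ℂ => g (0, t))
      (g := fun t : ℂ => ζ * t) (z₀ := 0) (analyticAt_const.fun_mul analyticAt_id)
      (by simpa using Polynomial.ne_zero_of_mem_nthRootsFinset one_ne_zero hζ)
    rwa [mul_zero] at hcomp
  calc axisOrder (cyclicNorm K g)
      = ∑ ζ ∈ Polynomial.nthRootsFinset K (1 : ℂ),
          analyticOrderAt (fun t : ℂ => g (0, ζ * t)) 0 :=
        analyticOrderAt_fun_prod _ fun ζ _ => analyticAt_slice_snd (analyticAt_comp_rotate hg ζ)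
    _ = K * axisOrder g := by
        rw [Finset.sum_congr rfl hrot, Finset.sum_const, card_nthRootsFinset_one hK, nsmul_eq_mul]

/-- The norm of `g` is a unit times `(a(z) - t ^ K) ^ l`. On `t = 0` this reads `g ^ K = U a ^ l`,
which forces `K ∣ l`; on the `t`-axis it shows that `g` has order `l`, so all `K` zeros of `t ^ K`
belong to `g`. -/
theorem NotProperPower.ne_zero_of_mul_eq_subPow (hnp : NotProperPower a) (ha : AnalyticAt ℂ a 0)
    (ha0 : a 0 = 0) (hane : ¬ ∀ᶠ z in 𝓝 0, a z = 0) (hK : 0 < K) (hg : AnalyticAt ℂ g 0)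
    (hq : AnalyticAt ℂ q 0) (hgq : ∀ᶠ p in 𝓝 0, g p * q p = subPow a K p) (hg0 : g 0 = 0) :
    q 0 ≠ 0 := by
  have hD := analyticAt_subPow ha K
  obtain ⟨l, U, hU, hU0, hgU⟩ := IsRotationInvariant.exists_eq_mul_subPow_pow ha ha0 hane hK
    (analyticAt_cyclicNorm hg K) (analyticAt_cyclicNorm hq K)
    (eventually_cyclicNorm_mul_cyclicNorm hK hgq)
    fun ω hω => Eventually.of_forall (cyclicNorm_rotate hK g hω)
  have horder : axisOrder g = l := by
    have hmul : (K : ℕ∞) * axisOrder g = K * l := by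
      rw [← axisOrder_cyclicNorm hg hK, axisOrder_congr hgU, axisOrder_mul hU (hD.fun_pow l),
        (axisOrder_eq_zero_iff hU).2 hU0, axisOrder_pow hD, axisOrder_subPow ha0, zero_add,
        mul_comm]
    exact (ENat.mul_right_strictMono (by exact_mod_cast hK.ne')
      (ENat.natCast_ne_top K)).injective hmul
  have hsum : (l : ℕ∞) + axisOrder q = K := by
    rw [← horder, ← axisOrder_mul hg hq, axisOrder_congr hgq, axisOrder_subPow ha0]
  have hdvd : K ∣ l := by
    refine hnp.dvd_of_pow_eq_mul_pow ha hane (analyticAt_slice_fst hg) (analyticAt_slice_fst hU)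
      hU0 hK ((tendsto_mk_zero_nhds_zero.eventually hgU).mono fun z hz => ?_)
    simpa [subPow, cyclicNorm_mk_zero hK, hK.ne'] using hz
  have hl : l ≠ 0 := by
    rintro rfl
    exact (axisOrder_eq_zero_iff hg).1 (by simpa using horder) hg0
  have hKl : K ≤ l := Nat.le_of_dvd (Nat.pos_of_ne_zero hl) hdvd
  rw [← axisOrder_eq_zero_iff hq]
  lift axisOrder q to ℕ using (by rintro h; simp [h] at hsum) with m
  norm_cast at hsum ⊢
  omega

end SubPow

theorem NotProperPower.quotient_ne_zero {V W : Type*} [NormedAddCommGroup V] [NormedSpace ℂ V]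
    [NormedAddCommGroup W] [NormedSpace ℂ W] {G Q : V × W → ℂ} {a : V → ℂ} {c : W → ℂ}
    (hnp : NotProperPower a) (ha : AnalyticAt ℂ a 0) (ha0 : a 0 = 0)
    (hane : ¬ ∀ᶠ z in 𝓝 0, a z = 0) (hc : AnalyticAt ℂ c 0) (hc0 : c 0 = 0)
    (hcne : ¬ ∀ᶠ w in 𝓝 0, c w = 0) (hG : AnalyticAt ℂ G 0) (hG0 : G 0 = 0)
    (hQ : AnalyticAt ℂ Q 0) (h : ∀ᶠ p in 𝓝 0, a p.1 - c p.2 = G p * Q p) : Q 0 ≠ 0 := by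
  obtain ⟨e, he⟩ := exists_line_not_eventually_eq_zero hc hcne
  obtain ⟨K, γ, hK, hγ, hγ0, hcγ⟩ := exists_analyticAt_comp_eq_pow
    (analyticAt_line (by simpa using hc)) (by simpa using hc0) he
  let m : V × ℂ → V × W := fun p => (p.1, γ p.2 • e)
  have hm : AnalyticAt ℂ m 0 :=
    analyticAt_fst.prod ((analyticAt_comp_snd hγ).smul analyticAt_const)
  have hm0 : m 0 = 0 := by simp [m, hγ0]
  have hfactor : ∀ᶠ p in 𝓝 0, G (m p) * Q (m p) = subPow a K p := by
    filter_upwards [(hm0 ▸ hm.continuousAt.tendsto : Tendsto m (𝓝 0) (𝓝 0)).eventually h,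
      (continuous_snd.tendsto' (0 : V × ℂ) 0 rfl).eventually hcγ] with p hp hcp
    rw [zero_add] at hcp
    rw [← hp, subPow, ← hcp]
  simpa [hm0] using hnp.ne_zero_of_mul_eq_subPow ha ha0 hane hK (hG.fun_comp_of_eq hm hm0)
    (hQ.fun_comp_of_eq hm hm0) hfactor (by rw [hm0, hG0])

/-! ### Levi-flat hypersurfaces -/

section LeviFlat

variable {n : ℕ} {F : (Fin n → ℂ) → ℝ} {FC G : (Fin n → ℂ) × (Fin n → ℂ) → ℂ}

theorem smallSing_of_dimH_le (hn : 2 ≤ n)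
    (hdim : ∃ U ∈ 𝓝 (0 : (Fin n → ℂ) × (Fin n → ℂ)),
      dimH (singMC G ∩ U) ≤ ((4 * n - 8 : ℕ) : ℝ≥0∞))
    (hcodim : ∃ U ∈ 𝓝 (0 : (Fin n → ℂ) × (Fin n → ℂ)),
      dimH (singLC G ∩ U) ≤ ((4 * n - 6 : ℕ) : ℝ≥0∞)) : SmallSing G := by
  obtain ⟨U, hU, hMU⟩ := hdim
  obtain ⟨W, hW, hLW⟩ := hcodim
  have hsub : (singMC G ∪ singLC G) ∩ (U ∩ W) ⊆ singMC G ∩ U ∪ singLC G ∩ W := by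
    rw [Set.union_inter_distrib_right]
    gcongr <;> simp
  have hdimH : dimH ((singMC G ∪ singLC G) ∩ (U ∩ W)) ≤ ((4 * n - 6 : ℕ) : ℝ≥0∞) :=
    calc dimH ((singMC G ∪ singLC G) ∩ (U ∩ W))
        ≤ max (dimH (singMC G ∩ U)) (dimH (singLC G ∩ W)) :=
          (dimH_mono hsub).trans_eq (dimH_union _ _)
      _ ≤ ((4 * n - 6 : ℕ) : ℝ≥0∞) := max_le (hMU.trans (by gcongr; norm_num)) hLW
  refine ⟨U ∩ W, inter_mem hU hW, (add_le_add_left hdimH 4).trans_lt ?_⟩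
  norm_cast
  omega

theorem eq_zero_of_not_exists_eventually_eq_const {E : Type*} [TopologicalSpace E] {q : E}
    {G h : E → ℂ} (hG : ContinuousAt G q) (hhne : ¬ ∃ c : ℂ, ∀ᶠ p in 𝓝 q, G p = 0 → h p = c) :
    G q = 0 := by
  by_contra hGq
  exact hhne ⟨0, (hG.eventually_ne hGq).mono fun p hp hGp => absurd hGp hp⟩

/-- On the diagonal `w = conj z` the relation `a(z) - conj (a (conj w)) = G(z, w) Q(z, w)` reads
`2 i Im a = F Q`. -/
theorem IsComplexification.eventually_eq_zero_iff (hFC : IsComplexification F FC)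
    {a : (Fin n → ℂ) → ℂ} {Q : (Fin n → ℂ) × (Fin n → ℂ) → ℂ} (hQ : ContinuousAt Q 0)
    (hQ0 : Q 0 ≠ 0) (haQ : ∀ᶠ p in 𝓝 0, a p.1 - starConj a p.2 = FC p * Q p) :
    ∀ᶠ z in 𝓝 (0 : Fin n → ℂ), F z = 0 ↔ (Complex.I * a z).re = 0 := by
  have hdiag : Tendsto (fun z : Fin n → ℂ => (z, star z)) (𝓝 0) (𝓝 0) :=
    Continuous.tendsto' (by fun_prop) 0 0 (by simp)
  filter_upwards [hFC.2, hdiag.eventually haQ, hdiag.eventually (hQ.eventually_ne hQ0)]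
    with z hFz haz hQz
  rw [starConj, star_star, Complex.star_def, Complex.sub_conj, hFz] at haz
  calc F z = 0 ↔ (F z : ℂ) * Q (z, star z) = 0 := by simp [hQz]
    _ ↔ (Complex.I * a z).re = 0 := by simp [← haz]

theorem stmt_13_general (hFC : IsComplexification F FC) (hs : SmallSing FC)
    (hfi : ∃ h : (Fin n → ℂ) × (Fin n → ℂ) → ℂ, AnalyticAt ℂ h 0 ∧
      (¬ ∃ c : ℂ, ∀ᶠ p in 𝓝 0, FC p = 0 → h p = c) ∧ IsFirstIntegral FC h) :
    ∃ f : (Fin n → ℂ) → ℂ, AnalyticAt ℂ f 0 ∧ (¬ ∀ᶠ z in 𝓝 0, f z = f 0) ∧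
      ∀ᶠ z in 𝓝 0, F z = 0 ↔ (f z).re = 0 := by
  obtain ⟨h, hh, hhne, hfi⟩ := hfi
  have hG := hFC.1
  have hG0 := eq_zero_of_not_exists_eventually_eq_const hG.continuousAt hhne
  have hGherm := isHermitianGerm_of_diagonal_real hG hFC.2
  have hGne := hs.not_eventually_slice_eq_zero hG hG0 hGherm hh hfi hhne
  obtain ⟨A, hA, hA0, hAne, hAdvd⟩ := hs.exists_symmetric_integral hG hG0 hGherm hh hfi hhne hGne
  obtain ⟨a, ha, ha0, hane, hnp, Q, hQ, haQ⟩ :=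
    hs.exists_primitive_integral hG hG0 hGherm hGne hA hA0 hAne hAdvd
  have hQ0 : Q 0 ≠ 0 := hnp.quotient_ne_zero ha ha0 hane (analyticAt_starConj ha)
    (by simp [starConj, ha0]) (not_eventually_starConj_eq_zero hane) hG hG0 hQ haQ
  exact ⟨fun z => Complex.I * a z, analyticAt_const.fun_mul ha, by simpa [ha0] using hane,
    hFC.eventually_eq_zero_iff hQ.continuousAt hQ0 haQ⟩

end LeviFlat

/-- **Theorem (Cerveau–Lins Neto, part (b)).** If `M` is an irreducible Levi-flat germ
whose singular set has algebraic dimension at most `2n − 4` (complex dimension, i.e.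
Hausdorff dimension at most `2(2n−4)`), `Sing(L_ℂ)` has complex codimension at least `2`
in the `(2n−1)`-dimensional manifold `M*_ℂ` (Hausdorff dimension at most `2(2n−3)`),
and `L_ℂ` has a non-constant holomorphic first integral, then `M = {Re(f) = 0}` for a
non-constant holomorphic germ `f`. -/
theorem stmt_13 (n : ℕ) (hn : 2 ≤ n) (F : (Fin n → ℂ) → ℝ)
    (hF : AnalyticAt ℝ F 0) (hF0 : F 0 = 0)
    (hirr : IrreducibleRGerm F)
    (hLF : LeviFlatGerm F)
    (FC : ((Fin n → ℂ) × (Fin n → ℂ)) → ℂ) (hFC : IsComplexification F FC)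
    -- the algebraic dimension of `Sing(M)` is at most `2n − 4`
    (hdim : ∃ U ∈ 𝓝 (0 : (Fin n → ℂ) × (Fin n → ℂ)),
      dimH (singMC FC ∩ U) ≤ ((4 * n - 8 : ℕ) : ℝ≥0∞))
    -- `Sing(L_ℂ)` has complex codimension at least `2` in `M*_ℂ`
    (hcodim : ∃ U ∈ 𝓝 (0 : (Fin n → ℂ) × (Fin n → ℂ)),
      dimH (singLC FC ∩ U) ≤ ((4 * n - 6 : ℕ) : ℝ≥0∞))
    -- `L_ℂ` has a non-constant holomorphic first integral
    (hfi : ∃ h : ((Fin n → ℂ) × (Fin n → ℂ)) → ℂ, AnalyticAt ℂ h 0 ∧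
      (¬ ∃ c : ℂ, ∀ᶠ p in 𝓝 (0 : (Fin n → ℂ) × (Fin n → ℂ)), FC p = 0 → h p = c) ∧
      (∀ᶠ p in 𝓝 (0 : (Fin n → ℂ) × (Fin n → ℂ)), FC p = 0 → fderiv ℂ FC p ≠ 0 →
        ∀ u v : (Fin n → ℂ) × (Fin n → ℂ),
          fderiv ℂ FC p u = 0 → fderiv ℂ FC p v = 0 →
          fderiv ℂ h p u * fderiv ℂ FC p (v.1, 0) -
            fderiv ℂ h p v * fderiv ℂ FC p (u.1, 0) = 0)) :
    ∃ f : (Fin n → ℂ) → ℂ, AnalyticAt ℂ f 0 ∧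
      -- `f` is non-constant
      (¬ ∀ᶠ z in 𝓝 (0 : Fin n → ℂ), f z = f 0) ∧
      -- `M = {Re(f) = 0}` as germs of sets at `0`
      (∀ᶠ z in 𝓝 (0 : Fin n → ℂ), (F z = 0 ↔ (f z).re = 0)) :=
  stmt_13_general hFC (smallSing_of_dimH_le hn hdim hcodim) hfi
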